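/- Boundary solution as quantum R matrix (type B): let (ε₁,…,ε_n) = (1^κ,0^{n−κ}) with 0 ≤ κ ≤ n, and let φ(z) = Σ_{c≥0} z^c (q²;q²)_c/((q;q)_c)². If T is an endomorphism of 𝒲⊗𝒲 over the field of formal Laurent series in z over ℂ(q^{1/2}) satisfying Δ'(g) ∘ T = T ∘ Δ(g) for every g ∈ {e_i, f_i, k_i^{±1} : 0 ≤ i ≤ n} (type-B actions at x = z, y = 1) and T(|0,…,0⟩⊗|0,…,0⟩) = |0,…,0⟩⊗|0,…,0⟩, then φ(z)·T = S̃₀^{1,1}(z). In particular such T exists and is unique. -/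

import Mathlib

/-!
The boundary solution `S̃₀^{1,1}(z)` itself intertwines the two coproduct actions, and the vacuum
generates `𝒲 ⊗ 𝒲`; together these facts determine `T`.

*Intertwining.* Both 3D operators conserve `a + b` and `b + c`, so at most one configuration of the
auxiliary occupation numbers contributes to a given coefficient of a matrix element, which is
therefore a plain product over the sites (`bdCoef_eq`, `Ec`). The 3D `R` and the 3D `L` satisfy the
same eight contiguity relations in their indices (`sZ_UA1` to `sZ_PA1`): four trade a shift of an
input index for shifts of output indices, four the other way round. For `L` they are a finite check;
for `R` they hold summand by summand, up to rearrangements along `λ + μ = b` (`sum_shift`). Combined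
at two neighbouring sites, or at one end of the chain with its boundary weight, where `p² q = -1`
is used, they give the exchange relations `exch_e`, …, `exch_fn`. These are the intertwining
relations for a single generator written in matrix elements (`S_e`, `S_f`). The generators `k_r` only
need the conservation of `a + b` (`S_k`).

*Uniqueness.* Let `M` be a subspace that contains the vacuum and is stable under all `Δ(e_r)` and
`Δ(f_r)`. By induction on the total occupation number `N`, `M` contains every ket (`cyclic`): in the
`ℂ⟦z⟧`-lattice spanned by the kets of total occupation `N + 1`, every ket lies in `M` modulo `z`,
because `Δ(e_0)` creates a particle in the second factor modulo `z`, `Δ(e_r)` moves particles to the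
right there, `Δ(f_n)` creates one in the first factor modulo kets already treated, and `Δ(f_r)` moves
it to the left. The lattice is finitely generated, so Nakayama's lemma removes the error terms. Hence
intertwiners that agree on the vacuum are equal (`intertwiner_ext`).

*Normalization.* `S̃₀^{1,1}(z)` multiplies the vacuum by `φ(z)` (`S_vac`), which has constant term
`1`. So `φ(z) T` and `S̃₀^{1,1}(z)` coincide, and `φ(z)⁻¹ S̃₀^{1,1}(z)` is a solution.
-/

open scoped BigOperators

set_option synthInstance.maxHeartbeats 1000000
set_option maxHeartbeats 1000000

noncomputable section

namespace TetraGQ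

/-! ## Scalar ingredients -/

/-- `(a;qb)_m = ∏_{k=0}^{m-1} (1 - a qb^k)`. -/
def poch (qb a : ℂ) (m : ℕ) : ℂ := ∏ k ∈ Finset.range m, (1 - a * qb ^ k)

/-- The `q`-binomial `binom(m,k)_qb`, zero unless `k ≤ m`. -/
def qbinom (qb : ℂ) (m k : ℕ) : ℂ :=
  if k ≤ m then poch qb qb m / (poch qb qb k * poch qb qb (m - k)) else 0

/-- `[m] = (q^m - q^{-m})/(q - q^{-1})`. -/
def qnum (q : ℂ) (m : ℕ) : ℂ := (q ^ m - q⁻¹ ^ m) / (q - q⁻¹)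

/-- `[m]! = ∏_{k=1}^m [k]`. -/
def qfac (q : ℂ) (m : ℕ) : ℂ := ∏ k ∈ Finset.range m, qnum q (k + 1)

/-- The symmetric `q`-binomial `[m choose k]`, zero unless `k ≤ m`. -/
def qbin (q : ℂ) (m k : ℕ) : ℂ :=
  if k ≤ m then qfac q m / (qfac q k * qfac q (m - k)) else 0

/-- The 3D `R` matrix entry `R^{a,b,c}_{i,j,k}`. -/
def R3 (q : ℂ) (a b c i j k : ℕ) : ℂ :=
  (if a + b = i + j ∧ b + c = j + k then (1 : ℂ) else 0) *
    ∑ lam ∈ Finset.range (b + 1),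
      (-1 : ℂ) ^ lam *
        q ^ ((i : ℤ) * ((c : ℤ) - (j : ℤ)) + ((k : ℤ) + 1) * (lam : ℤ) +
            ((b : ℤ) - (lam : ℤ)) * ((b : ℤ) - (lam : ℤ) - (k : ℤ))) *
        (poch (q ^ 2) (q ^ 2) (c + (b - lam)) / poch (q ^ 2) (q ^ 2) c) *
        qbinom (q ^ 2) i (b - lam) * qbinom (q ^ 2) j lam

/-- The 3D `L` matrix entry `L^{a,b,c}_{i,j,k}`. -/
def L3 (q : ℂ) (a b c i j k : ℕ) : ℂ :=
  if a = 0 ∧ b = 0 ∧ i = 0 ∧ j = 0 ∧ c = k then 1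
  else if a = 1 ∧ b = 1 ∧ i = 1 ∧ j = 1 ∧ c = k then 1
  else if a = 0 ∧ b = 1 ∧ i = 0 ∧ j = 1 ∧ c = k then -q ^ (k + 1)
  else if a = 1 ∧ b = 0 ∧ i = 1 ∧ j = 0 ∧ c = k then q ^ k
  else if a = 0 ∧ b = 1 ∧ i = 1 ∧ j = 0 ∧ c + 1 = k then 1 - q ^ (2 * k)
  else if a = 1 ∧ b = 0 ∧ i = 0 ∧ j = 1 ∧ c = k + 1 then 1
  else 0

/-- `S^(0) = R`, `S^(1) = L`. -/
def Sg (q : ℂ) (e : Bool) (a b c i j k : ℕ) : ℂ :=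
  if e then L3 q a b c i j k else R3 q a b c i j k

/-- Coefficient of `z^{c0}` in the trace solution matrix element
`S₀(z)^{a,b}_{i,j}`. -/
def trCoef (q : ℂ) {n : ℕ} [NeZero n] (ε : Fin n → Bool) (a b i j : Fin n → ℕ)
    (c0 : ℕ) : ℂ :=
  ∑ᶠ c : Fin n → ℕ,
    if c 0 = c0 then
      ∏ t : Fin n, Sg q (ε t) (a t) (b t) (c t) (i t) (j t) (c (t + 1))
    else 0

/-- Coefficient of `z^{c0}` in the boundary solution matrix element
`S₀^{1,1}(z)^{a,b}_{i,j}`. -/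
def bdCoef (q : ℂ) {n : ℕ} (ε : Fin n → Bool) (a b i j : Fin n → ℕ) (c0 : ℕ) : ℂ :=
  ∑ᶠ c : Fin (n + 1) → ℕ,
    if c 0 = c0 then
      poch (q ^ 2) (q ^ 2) c0 / (poch q q c0 * poch q q (c (Fin.last n))) *
        ∏ t : Fin n, Sg q (ε t) (a t) (b t) (c t.castSucc) (i t) (j t) (c t.succ)
    else 0

/-- Coefficient of `z^{c0}` in the boundary solution matrix element
`S₀^{s,t}(z)^{a,b}_{i,j}`. -/
def bdCoefST (q : ℂ) (s t : ℕ) {n : ℕ} (ε : Fin n → Bool) (a b i j : Fin n → ℕ)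
    (c0 : ℕ) : ℂ :=
  ∑ᶠ c : Fin (n + 1) → ℕ,
    if c 0 = c0 then
      poch (q ^ 2) (q ^ 2) (s * c0) /
          (poch (q ^ s ^ 2) (q ^ s ^ 2) c0 * poch (q ^ t ^ 2) (q ^ t ^ 2) (c (Fin.last n))) *
        ∏ u : Fin n,
          Sg q (ε u) (a u) (b u)
            (if u.castSucc = 0 then s * c0 else c u.castSucc) (i u) (j u)
            (if u.succ = Fin.last n then t * c (Fin.last n) else c u.succ)
    else 0

/-! ## The spaces `𝒲` and `𝒲⊗𝒲` -/

/-- `m` is an admissible occupation vector: at positions with `ε = 1` the entry is `≤ 1`. -/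
def Ok {n : ℕ} (ε : Fin n → Bool) (m : Fin n → ℕ) : Prop := ∀ t, ε t = true → m t ≤ 1

instance {n : ℕ} (ε : Fin n → Bool) : DecidablePred (Ok ε) := fun m =>
  decidable_of_iff (∀ t, ε t = true → m t ≤ 1) Iff.rfl

/-- Basis labels of `𝒲`. -/
def Idx {n : ℕ} (ε : Fin n → Bool) : Type := {m : Fin n → ℕ // Ok ε m}

/-- The space `𝒲` with basis `|m⟩`, over the field `L`. -/
abbrev W (L : Type) [Field L] {n : ℕ} (ε : Fin n → Bool) : Type := Idx ε →₀ L

/-- The space `𝒲 ⊗ 𝒲` with basis `|a⟩⊗|b⟩`, over the field `L`. -/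
abbrev WW (L : Type) [Field L] {n : ℕ} (ε : Fin n → Bool) : Type := (Idx ε × Idx ε) →₀ L

/-- The ket `|m⟩ ∈ 𝒲`; it is `0` if any coordinate is out of range. -/
def ket (L : Type) [Field L] {n : ℕ} (ε : Fin n → Bool) (m : Fin n → ℤ) : W L ε :=
  if h : (∀ t, 0 ≤ m t) ∧ Ok ε (fun t => (m t).toNat) then
    Finsupp.single ⟨fun t => (m t).toNat, h.2⟩ 1
  else 0

/-- The ket `|a⟩⊗|b⟩ ∈ 𝒲⊗𝒲`; it is `0` if any coordinate is out of range. -/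
def kk (L : Type) [Field L] {n : ℕ} (ε : Fin n → Bool) (a b : Fin n → ℤ) : WW L ε :=
  if h : ((∀ t, 0 ≤ a t) ∧ Ok ε (fun t => (a t).toNat)) ∧
      ((∀ t, 0 ≤ b t) ∧ Ok ε (fun t => (b t).toNat)) then
    Finsupp.single (⟨fun t => (a t).toNat, h.1.2⟩, ⟨fun t => (b t).toNat, h.2.2⟩) 1
  else 0

/-- The linear endomorphism of a free module determined by images of basis vectors. -/
def mkEnd (L : Type) [Field L] {α : Type} (v : α → (α →₀ L)) :
    (α →₀ L) →ₗ[L] (α →₀ L) :=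
  Finsupp.lsum L fun m => LinearMap.toSpanSingleton L (α →₀ L) (v m)

/-- Product of vectors of `𝒲`, landing in `𝒲⊗𝒲`. -/
def tens (L : Type) [Field L] {n : ℕ} {ε : Fin n → Bool} (u v : W L ε) : WW L ε :=
  u.sum fun a ca => v.sum fun b cb => Finsupp.single (a, b) (ca * cb)

/-- The operator `A ⊗ B` on `𝒲⊗𝒲`. -/
def opT (L : Type) [Field L] {n : ℕ} {ε : Fin n → Bool}
    (A B : W L ε →ₗ[L] W L ε) : WW L ε →ₗ[L] WW L ε :=
  mkEnd L fun mm => tens L (A (Finsupp.single mm.1 1)) (B (Finsupp.single mm.2 1))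

/-- The subspace `𝒲_l ⊗ 𝒲_m` of `𝒲⊗𝒲`. -/
def WWlm (L : Type) [Field L] {n : ℕ} (ε : Fin n → Bool) (l m : ℕ) :
    Submodule L (WW L ε) :=
  Submodule.span L {v | ∃ p : Idx ε × Idx ε,
    (∑ t, p.1.1 t) = l ∧ (∑ t, p.2.1 t) = m ∧ v = Finsupp.single p 1}

/-- The subspace `𝒲_l` of `𝒲`. -/
def Wl (L : Type) [Field L] {n : ℕ} (ε : Fin n → Bool) (l : ℕ) : Submodule L (W L ε) :=
  Submodule.span L {v | ∃ p : Idx ε, (∑ t, p.1 t) = l ∧ v = Finsupp.single p 1}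

/-! ## The scalar field of formal Laurent series in `z` over `ℂ` -/

abbrev K : Type := LaurentSeries ℂ

/-- The power series `Σ_{c≥0} f(c) z^c` as an element of `K`. -/
def mkS (f : ℕ → ℂ) : K := HahnSeries.ofPowerSeries ℤ ℂ (PowerSeries.mk f)

/-- Constants `ℂ → K`. -/
def cK : ℂ →+* K := HahnSeries.C

/-- The variable `z ∈ K`. -/
def zK : K := mkS fun c => if c = 1 then 1 else 0

/-! ## The solutions of the Yang-Baxter equation -/

/-- The unnormalized trace solution `S₀(z)` acting on `𝒲⊗𝒲`. -/
def S0tr (q : ℂ) {n : ℕ} [NeZero n] (ε : Fin n → Bool) : WW K ε →ₗ[K] WW K ε :=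
  mkEnd K fun ij =>
    ∑ a ∈ Fintype.piFinset (fun t => Finset.range (ij.1.1 t + ij.2.1 t + 1)),
      mkS (trCoef q ε a (fun t => ij.1.1 t + ij.2.1 t - a t) ij.1.1 ij.2.1) •
        kk K ε (fun t => (a t : ℤ)) (fun t => (ij.1.1 t : ℤ) + (ij.2.1 t : ℤ) - (a t : ℤ))

/-- The unnormalized boundary solution `S₀^{1,1}(z)` acting on `𝒲⊗𝒲`. -/
def S0bd (q : ℂ) {n : ℕ} (ε : Fin n → Bool) : WW K ε →ₗ[K] WW K ε :=
  mkEnd K fun ij =>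
    ∑ a ∈ Fintype.piFinset (fun t => Finset.range (ij.1.1 t + ij.2.1 t + 1)),
      mkS (bdCoef q ε a (fun t => ij.1.1 t + ij.2.1 t - a t) ij.1.1 ij.2.1) •
        kk K ε (fun t => (a t : ℤ)) (fun t => (ij.1.1 t : ℤ) + (ij.2.1 t : ℤ) - (a t : ℤ))

/-- The unnormalized boundary solution `S₀^{s,t}(z)` acting on `𝒲⊗𝒲`. -/
def S0bdST (q : ℂ) (s t : ℕ) {n : ℕ} (ε : Fin n → Bool) : WW K ε →ₗ[K] WW K ε :=
  mkEnd K fun ij =>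
    ∑ a ∈ Fintype.piFinset (fun u => Finset.range (ij.1.1 u + ij.2.1 u + 1)),
      mkS (bdCoefST q s t ε a (fun u => ij.1.1 u + ij.2.1 u - a u) ij.1.1 ij.2.1) •
        kk K ε (fun u => (a u : ℤ)) (fun u => (ij.1.1 u : ℤ) + (ij.2.1 u : ℤ) - (a u : ℤ))

/-- The diagonal gauge operator; `Kdiag pc ε s |m⟩ = pc^{s·(m₁+⋯+m_n)} |m⟩`
(`s = -1` gives `K`, `s = 1` gives `K⁻¹`). -/
def Kdiag (pc : ℂ) {n : ℕ} (ε : Fin n → Bool) (s : ℤ) : W K ε →ₗ[K] W K ε :=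
  mkEnd K fun m => cK (pc ^ (s * ∑ t, (m.1 t : ℤ))) • Finsupp.single m 1

/-- The gauge transformed boundary solution `S̃₀^{1,1}(z) = (K⊗1) S₀^{1,1}(z) (1⊗K⁻¹)`. -/
def S0bdT (q pc : ℂ) {n : ℕ} (ε : Fin n → Bool) : WW K ε →ₗ[K] WW K ε :=
  opT K (Kdiag pc ε (-1)) LinearMap.id ∘ₗ S0bd q ε ∘ₗ opT K LinearMap.id (Kdiag pc ε 1)

/-! ## The generalized quantum group actions -/

/-- Value of an occupation vector at a natural-number position. -/
def av {n : ℕ} (m : Fin n → ℕ) (p : ℕ) : ℕ := if h : p < n then m ⟨p, h⟩ else 0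

/-- Unit coordinate vector at a natural-number position. -/
def dlt {n : ℕ} (p : ℕ) : Fin n → ℤ := fun t => if (t : ℕ) = p then 1 else 0

/-- `q_i = q` if `ε_i = 0` and `-q⁻¹` if `ε_i = 1` (0-based positions). -/
def qc (q : ℂ) {n : ℕ} (ε : Fin n → Bool) (p : ℕ) : ℂ :=
  if h : p < n then (if ε ⟨p, h⟩ then -q⁻¹ else q) else q

/-- Type A generator `e_r` of the action `π_x`. -/
def eA (q : ℂ) {L : Type} [Field L] (ι : ℂ →+* L) {n : ℕ} (ε : Fin n → Bool) (x : L)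
    (r : Fin n) : W L ε →ₗ[L] W L ε :=
  mkEnd L fun m =>
    (x ^ (if (r : ℕ) = 0 then 1 else 0) * ι (qnum q (av m.1 (((r : ℕ) + n - 1) % n)))) •
      ket L ε fun t => (m.1 t : ℤ) - dlt (((r : ℕ) + n - 1) % n) t + dlt (r : ℕ) t

/-- Type A generator `f_r` of the action `π_x`. -/
def fA (q : ℂ) {L : Type} [Field L] (ι : ℂ →+* L) {n : ℕ} (ε : Fin n → Bool) (x : L)
    (r : Fin n) : W L ε →ₗ[L] W L ε :=
  mkEnd L fun m =>
    (x ^ (if (r : ℕ) = 0 then (-1 : ℤ) else 0) * ι (qnum q (av m.1 (r : ℕ)))) •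
      ket L ε fun t => (m.1 t : ℤ) + dlt (((r : ℕ) + n - 1) % n) t - dlt (r : ℕ) t

/-- Type A generator `k_r^{s}` (`s = ±1`) of the action `π_x`. -/
def kA (q : ℂ) {L : Type} [Field L] (ι : ℂ →+* L) {n : ℕ} (ε : Fin n → Bool) (s : ℤ)
    (r : Fin n) : W L ε →ₗ[L] W L ε :=
  mkEnd L fun m =>
    ι ((qc q ε (((r : ℕ) + n - 1) % n) ^ (-(av m.1 (((r : ℕ) + n - 1) % n) : ℤ)) *
        qc q ε (r : ℕ) ^ (av m.1 (r : ℕ) : ℤ)) ^ s) • Finsupp.single m 1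

/-- Type B generator `e_r` of the action `π_x`. -/
def eB (q : ℂ) {L : Type} [Field L] (ι : ℂ →+* L) {n : ℕ} (ε : Fin n → Bool) (x : L)
    (r : Fin (n + 1)) : W L ε →ₗ[L] W L ε :=
  mkEnd L fun m =>
    if (r : ℕ) = 0 then x • ket L ε (fun t => (m.1 t : ℤ) + dlt 0 t)
    else if (r : ℕ) = n then
      ι (qnum q (av m.1 (n - 1))) • ket L ε (fun t => (m.1 t : ℤ) - dlt (n - 1) t)
    else
      ι (qnum q (av m.1 ((r : ℕ) - 1))) •
        ket L ε (fun t => (m.1 t : ℤ) - dlt ((r : ℕ) - 1) t + dlt (r : ℕ) t)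

/-- Type B generator `f_r` of the action `π_x`. -/
def fB (q : ℂ) {L : Type} [Field L] (ι : ℂ →+* L) {n : ℕ} (ε : Fin n → Bool) (x : L)
    (r : Fin (n + 1)) : W L ε →ₗ[L] W L ε :=
  mkEnd L fun m =>
    if (r : ℕ) = 0 then
      (x⁻¹ * ι (qnum q (av m.1 0))) • ket L ε (fun t => (m.1 t : ℤ) - dlt 0 t)
    else if (r : ℕ) = n then ket L ε (fun t => (m.1 t : ℤ) + dlt (n - 1) t)
    else
      ι (qnum q (av m.1 (r : ℕ))) •
        ket L ε (fun t => (m.1 t : ℤ) + dlt ((r : ℕ) - 1) t - dlt (r : ℕ) t)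

/-- Type B generator `k_r^{s}` (`s = ±1`) of the action `π_x`; `pc = i q^{-1/2}`. -/
def kB (q pc : ℂ) {L : Type} [Field L] (ι : ℂ →+* L) {n : ℕ} (ε : Fin n → Bool) (s : ℤ)
    (r : Fin (n + 1)) : W L ε →ₗ[L] W L ε :=
  mkEnd L fun m =>
    ι ((if (r : ℕ) = 0 then pc⁻¹ * qc q ε 0 ^ (av m.1 0 : ℤ)
        else if (r : ℕ) = n then pc * qc q ε (n - 1) ^ (-(av m.1 (n - 1) : ℤ))
        else qc q ε ((r : ℕ) - 1) ^ (-(av m.1 ((r : ℕ) - 1) : ℤ)) *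
          qc q ε (r : ℕ) ^ (av m.1 (r : ℕ) : ℤ)) ^ s) • Finsupp.single m 1

/-! ## Coproduct actions on `𝒲⊗𝒲` (type A) -/

/-- `Δ(e_r) = 1⊗e_r + e_r⊗k_r`, with `π_x` on the first factor, `π_y` on the second. -/
def dE (q : ℂ) {L : Type} [Field L] (ι : ℂ →+* L) {n : ℕ} (ε : Fin n → Bool) (x y : L)
    (r : Fin n) : WW L ε →ₗ[L] WW L ε :=
  opT L LinearMap.id (eA q ι ε y r) + opT L (eA q ι ε x r) (kA q ι ε 1 r)

/-- `Δ'(e_r) = e_r⊗1 + k_r⊗e_r`. -/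
def dE' (q : ℂ) {L : Type} [Field L] (ι : ℂ →+* L) {n : ℕ} (ε : Fin n → Bool) (x y : L)
    (r : Fin n) : WW L ε →ₗ[L] WW L ε :=
  opT L (eA q ι ε x r) LinearMap.id + opT L (kA q ι ε 1 r) (eA q ι ε y r)

/-- `Δ(f_r) = f_r⊗1 + k_r⁻¹⊗f_r`. -/
def dF (q : ℂ) {L : Type} [Field L] (ι : ℂ →+* L) {n : ℕ} (ε : Fin n → Bool) (x y : L)
    (r : Fin n) : WW L ε →ₗ[L] WW L ε :=
  opT L (fA q ι ε x r) LinearMap.id + opT L (kA q ι ε (-1) r) (fA q ι ε y r)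

/-- `Δ'(f_r) = 1⊗f_r + f_r⊗k_r⁻¹`. -/
def dF' (q : ℂ) {L : Type} [Field L] (ι : ℂ →+* L) {n : ℕ} (ε : Fin n → Bool) (x y : L)
    (r : Fin n) : WW L ε →ₗ[L] WW L ε :=
  opT L LinearMap.id (fA q ι ε y r) + opT L (fA q ι ε x r) (kA q ι ε (-1) r)

/-- `Δ(k_r^s) = Δ'(k_r^s) = k_r^s ⊗ k_r^s`. -/
def dK (q : ℂ) {L : Type} [Field L] (ι : ℂ →+* L) {n : ℕ} (ε : Fin n → Bool) (s : ℤ)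
    (r : Fin n) : WW L ε →ₗ[L] WW L ε :=
  opT L (kA q ι ε s r) (kA q ι ε s r)

/-! ## Coproduct actions on `𝒲⊗𝒲` (type B) -/

def dEB (q pc : ℂ) {L : Type} [Field L] (ι : ℂ →+* L) {n : ℕ} (ε : Fin n → Bool) (x y : L)
    (r : Fin (n + 1)) : WW L ε →ₗ[L] WW L ε :=
  opT L LinearMap.id (eB q ι ε y r) + opT L (eB q ι ε x r) (kB q pc ι ε 1 r)

def dEB' (q pc : ℂ) {L : Type} [Field L] (ι : ℂ →+* L) {n : ℕ} (ε : Fin n → Bool) (x y : L)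
    (r : Fin (n + 1)) : WW L ε →ₗ[L] WW L ε :=
  opT L (eB q ι ε x r) LinearMap.id + opT L (kB q pc ι ε 1 r) (eB q ι ε y r)

def dFB (q pc : ℂ) {L : Type} [Field L] (ι : ℂ →+* L) {n : ℕ} (ε : Fin n → Bool) (x y : L)
    (r : Fin (n + 1)) : WW L ε →ₗ[L] WW L ε :=
  opT L (fB q ι ε x r) LinearMap.id + opT L (kB q pc ι ε (-1) r) (fB q ι ε y r)

def dFB' (q pc : ℂ) {L : Type} [Field L] (ι : ℂ →+* L) {n : ℕ} (ε : Fin n → Bool) (x y : L)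
    (r : Fin (n + 1)) : WW L ε →ₗ[L] WW L ε :=
  opT L LinearMap.id (fB q ι ε y r) + opT L (fB q ι ε x r) (kB q pc ι ε (-1) r)

def dKB (q pc : ℂ) {L : Type} [Field L] (ι : ℂ →+* L) {n : ℕ} (ε : Fin n → Bool) (s : ℤ)
    (r : Fin (n + 1)) : WW L ε →ₗ[L] WW L ε :=
  opT L (kB q pc ι ε s r) (kB q pc ι ε s r)

/-! ## Structure constants -/

/-- Type A structure constant `D_{i,j}` (as a product over 0-based positions). -/
def DA (q : ℂ) {n : ℕ} (ε : Fin n → Bool) (i j : Fin n) : ℂ :=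
  ∏ p ∈ (({((i : ℕ) + n - 1) % n, (i : ℕ)} : Finset ℕ) ∩
      ({((j : ℕ) + n - 1) % n, (j : ℕ)} : Finset ℕ)),
    qc q ε p ^ (if i = j then (1 : ℤ) else -1)

/-- The set `⟨i⟩ = {i, i+1} ∩ [1,n]` of type B, translated to 0-based positions. -/
def nodeB (n i : ℕ) : Finset ℕ :=
  if i = 0 then {0} else if i = n then {n - 1} else {i - 1, i}

/-- Type B structure constant `D_{i,j}`. -/
def DB (q : ℂ) {n : ℕ} (ε : Fin n → Bool) (i j : Fin (n + 1)) : ℂ :=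
  ∏ p ∈ nodeB n (i : ℕ) ∩ nodeB n (j : ℕ), qc q ε p ^ (if i = j then (1 : ℤ) else -1)

/-! ## Distinguished vectors -/

/-- The vector `J_{n,j} = Σ_{i, Σi=j} q^{inv(i)} |i⟩⊗|1-i⟩`. -/
def Jfull (q : ℂ) {L : Type} [Field L] (ι : ℂ →+* L) {n : ℕ} (ε : Fin n → Bool)
    (j : ℕ) : WW L ε :=
  ∑ i ∈ Fintype.piFinset (fun _ : Fin n => Finset.range 2),
    (if (∑ t, i t) = j then
        ι (q ^ (∑ s : Fin n, ∑ t : Fin n, if s < t then i s * (1 - i t) else 0))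
      else 0) •
      kk L ε (fun t => (i t : ℤ)) (fun t => 1 - (i t : ℤ))

/-- Extension of a `Fin s`-tuple to `ℕ` by zero. -/
def ivf {s : ℕ} (i : Fin s → ℕ) : ℕ → ℕ := fun p => if h : p < s then i ⟨p, h⟩ else 0

/-- `inv(i₁,…,i_s) = Σ_{p<r} i_p (1 - i_r)`. -/
def invv (s : ℕ) (iv : ℕ → ℕ) : ℕ :=
  ∑ p ∈ Finset.range s, ∑ r ∈ Finset.range s, if p < r then iv p * (1 - iv r) else 0

/-- Occupation vector `(0^{nn-s-t}, i₁,…,i_s, 1^t)`. -/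
def winA (nn s t : ℕ) (iv : ℕ → ℕ) : Fin nn → ℤ := fun u =>
  if (u : ℕ) < nn - s - t then 0
  else if (u : ℕ) < nn - t then (iv ((u : ℕ) - (nn - s - t)) : ℤ)
  else 1

/-- The singular vector `ξ_t^{l,m}` for `κ = n`. -/
def xiA (q : ℂ) {L : Type} [Field L] (ι : ℂ →+* L) {n : ℕ} (ε : Fin n → Bool)
    (l m t : ℕ) : WW L ε :=
  ∑ i ∈ Fintype.piFinset (fun _ : Fin (l + m - 2 * t) => Finset.range 2),
    (if (∑ u, i u) = l - t then ι (q ^ invv (l + m - 2 * t) (ivf i)) else 0) •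
      kk L ε (winA n (l + m - 2 * t) t (ivf i))
        (winA n (l + m - 2 * t) t (fun p => 1 - ivf i p))

/-- Occupation vector `(0^{nn-s-1}, i₁,…,i_s, last)`. -/
def winA1 (nn s : ℕ) (iv : ℕ → ℕ) (last : ℤ) : Fin nn → ℤ := fun u =>
  if (u : ℕ) < nn - s - 1 then 0
  else if (u : ℕ) < nn - 1 then (iv ((u : ℕ) - (nn - s - 1)) : ℤ)
  else last

/-- The singular vector `ξ_s^{l,m}` for `κ = n-1`. -/
def xiA1 (q : ℂ) {L : Type} [Field L] (ι : ℂ →+* L) {n : ℕ} (ε : Fin n → Bool)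
    (l m s : ℕ) : WW L ε :=
  ∑ j ∈ Finset.range (s + 1),
    ∑ i ∈ Fintype.piFinset (fun _ : Fin s => Finset.range 2),
      (if (∑ u, i u) = s - j then
          ι ((-1 : ℂ) ^ j * q ^ (j * (m - s + 1)) * q ^ invv s (ivf i))
        else 0) •
        kk L ε (winA1 n s (ivf i) ((l : ℤ) + (j : ℤ) - (s : ℤ)))
          (winA1 n s (fun p => 1 - ivf i p) ((m : ℤ) - (j : ℤ)))

/-- The singular vector `ξ_s^{l,m}` for `0 ≤ κ ≤ n-2`. -/
def xiA2 (q : ℂ) {L : Type} [Field L] (ι : ℂ →+* L) {n : ℕ} (ε : Fin n → Bool)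
    (l m s : ℕ) : WW L ε :=
  ∑ j ∈ Finset.range (s + 1),
    ι ((-1 : ℂ) ^ j * q ^ ((j : ℤ) * (2 * (s : ℤ) - (m : ℤ) - (j : ℤ) - 1) + (m : ℤ) * (s : ℤ)) *
        qbin q s j) •
      kk L ε
        (fun u => if (u : ℕ) < n - 2 then 0
          else if (u : ℕ) = n - 2 then (j : ℤ) else (l : ℤ) - (j : ℤ))
        (fun u => if (u : ℕ) < n - 2 then 0
          else if (u : ℕ) = n - 2 then (s : ℤ) - (j : ℤ) else (m : ℤ) - (s : ℤ) + (j : ℤ))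

/-- The type B singular vector `ξ_l`. -/
def xiB (q pc : ℂ) {L : Type} [Field L] (ι : ℂ →+* L) {n : ℕ} (ε : Fin n → Bool)
    (l : ℕ) : WW L ε :=
  ∑ m ∈ Finset.range (l + 1),
    ι ((-pc) ^ (-(m : ℤ)) * q ^ ((m : ℤ) * (l : ℤ) - ((m * (m + 1) / 2 : ℕ) : ℤ)) *
        qbin q l m) •
      kk L ε (fun u => if (u : ℕ) = n - 1 then (m : ℤ) else 0)
        (fun u => if (u : ℕ) = n - 1 then (l : ℤ) - (m : ℤ) else 0)

/-! ## Miscellany -/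

/-- Apply a list of operators, the rightmost element of the list acting first. -/
def appList {L : Type} [Field L] {n : ℕ} {ε : Fin n → Bool}
    (ops : List (WW L ε →ₗ[L] WW L ε)) (v : WW L ε) : WW L ε :=
  ops.foldr (fun A w => A w) v

/-- A natural number as an element of `Fin n`. -/
def mfin {n : ℕ} [NeZero n] (p : ℕ) : Fin n :=
  ⟨p % n, Nat.mod_lt p (Nat.pos_of_ne_zero (NeZero.ne n))⟩

/-- Reference weight-`l` occupation vector: `(0^{n-l},1^l)` if `κ = n`, `l·e_n` otherwise. -/
def refAN (n κ l : ℕ) : Fin n → ℕ := fun t =>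
  if κ = n then (if n - l ≤ (t : ℕ) then 1 else 0) else (if (t : ℕ) = n - 1 then l else 0)

/-- The flip `P(u⊗v) = v⊗u` on `𝒲⊗𝒲`. -/
def Pop (L : Type) [Field L] {n : ℕ} (ε : Fin n → Bool) : WW L ε →ₗ[L] WW L ε :=
  mkEnd L fun p => Finsupp.single (p.2, p.1) 1

/-- The conditions on `T`: an endomorphism of `𝒲⊗𝒲` commuting with the
type-B action (at `x = z`, `y = 1`) and fixing the vacuum vector. -/
def CondB (q pc : ℂ) {n : ℕ} (ε : Fin n → Bool) (T : WW K ε →ₗ[K] WW K ε) : Prop :=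
  (∀ r : Fin (n + 1),
    dEB' q pc cK ε zK 1 r ∘ₗ T = T ∘ₗ dEB q pc cK ε zK 1 r ∧
    dFB' q pc cK ε zK 1 r ∘ₗ T = T ∘ₗ dFB q pc cK ε zK 1 r ∧
    ∀ s : ℤ, s = 1 ∨ s = -1 → dKB q pc cK ε s r ∘ₗ T = T ∘ₗ dKB q pc cK ε s r) ∧
  T (kk K ε (fun _ => 0) (fun _ => 0)) = kk K ε (fun _ => 0) (fun _ => 0)

set_option linter.unusedSimpArgs false
set_option linter.unusedTactic false
set_option linter.unnecessarySeqFocus false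

/-! ### `q`-binomials and finite products -/

section QBinomial

variable {q : ℂ}

theorem poch_succ (a b : ℂ) (m : ℕ) : poch a b (m + 1) = poch a b m * (1 - b * a ^ m) := by
  simp [poch, Finset.prod_range_succ]

theorem one_sub_pow_ne (hq : ∀ k : ℕ, k ≠ 0 → q ^ k ≠ 1) (k : ℕ) : 1 - q ^ (k + 1) ≠ 0 :=
  sub_ne_zero.2 fun h => hq _ (Nat.succ_ne_zero k) h.symm

theorem poch_ne (hq : ∀ k : ℕ, k ≠ 0 → q ^ k ≠ 1) (m : ℕ) : poch q q m ≠ 0 := by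
  refine Finset.prod_ne_zero_iff.2 fun k _ => ?_
  rw [← pow_succ']
  exact one_sub_pow_ne hq k

theorem sq_not_root (hq : ∀ k : ℕ, k ≠ 0 → q ^ k ≠ 1) : ∀ k : ℕ, k ≠ 0 → (q ^ 2) ^ k ≠ 1 := by
  intro k hk
  rw [← pow_mul]
  exact hq _ (by omega)

theorem qbinom_zero (hq : ∀ k : ℕ, k ≠ 0 → q ^ k ≠ 1) (m : ℕ) : qbinom (q ^ 2) m 0 = 1 := by
  have := poch_ne (sq_not_root hq) m
  simp only [qbinom, zero_le, if_true, Nat.sub_zero]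
  rw [show poch (q ^ 2) (q ^ 2) 0 = 1 from by simp [poch], one_mul, div_self this]

theorem qbinom_gt {Q : ℂ} {m k : ℕ} (h : m < k) : qbinom Q m k = 0 := by
  simp [qbinom, not_le.2 h]

/-- Absorption in the lower argument. -/
theorem qbinom_low (hq : ∀ k : ℕ, k ≠ 0 → q ^ k ≠ 1) (m k : ℕ) :
    (q ^ k) ^ 2 * (1 - (q ^ k) ^ 2 * q ^ 2) * qbinom (q ^ 2) m (k + 1)
      = ((q ^ k) ^ 2 - (q ^ m) ^ 2) * qbinom (q ^ 2) m k := by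
  rcases lt_trichotomy m k with h | h | h
  · rw [qbinom_gt h, qbinom_gt (by omega)]; ring
  · subst h; rw [qbinom_gt (Nat.lt_succ_self m)]; ring
  · obtain ⟨d, rfl⟩ : ∃ d, m = k + d + 1 := ⟨m - k - 1, by omega⟩
    have h0 := poch_ne (sq_not_root hq)
    have h1 := h0 k
    have h2 := h0 d
    have h3 := h0 (k + 1)
    have h4 := h0 (d + 1)
    rw [poch_succ] at h3 h4
    have e1 : k + 1 ≤ k + d + 1 := by omega
    have e2 : k ≤ k + d + 1 := by omega
    simp only [qbinom, e1, e2, if_true]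
    rw [show k + d + 1 - (k + 1) = d by omega, show k + d + 1 - k = d + 1 by omega,
      poch_succ _ _ k, poch_succ _ _ d]
    have h5 := right_ne_zero_of_mul h3
    have h6 := right_ne_zero_of_mul h4
    field_simp
    ring

/-- Absorption in the upper argument. -/
theorem qbinom_up (hq : ∀ k : ℕ, k ≠ 0 → q ^ k ≠ 1) (m k : ℕ) :
    (q ^ k) ^ 2 * (1 - (q ^ m) ^ 2 * q ^ 2) * qbinom (q ^ 2) m k
      = ((q ^ k) ^ 2 - (q ^ m) ^ 2 * q ^ 2) * qbinom (q ^ 2) (m + 1) k := by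
  rcases lt_trichotomy k (m + 1) with h | h | h
  · obtain ⟨d, rfl⟩ : ∃ d, m = k + d := ⟨m - k, by omega⟩
    have h0 := poch_ne (sq_not_root hq)
    have h1 := h0 k
    have h2 := h0 d
    have h4 := h0 (d + 1)
    rw [poch_succ] at h4
    have e1 : k ≤ k + d := by omega
    have e2 : k ≤ k + d + 1 := by omega
    simp only [qbinom, e1, e2, if_true]
    rw [show k + d - k = d by omega, show k + d + 1 - k = d + 1 by omega,
      poch_succ _ _ (k + d), poch_succ _ _ d]
    have h6 := right_ne_zero_of_mul h4
    field_simp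
    ring
  · subst h; rw [qbinom_gt (Nat.lt_succ_self m)]; ring
  · rw [qbinom_gt h, qbinom_gt (by omega)]; ring

theorem qbinom_pascal (hq0 : q ≠ 0) (hq : ∀ k : ℕ, k ≠ 0 → q ^ k ≠ 1) (m k : ℕ) :
    (q ^ k) ^ 2 * qbinom (q ^ 2) (m + 1) (k + 1)
      = (q ^ k) ^ 2 * qbinom (q ^ 2) m (k + 1) + (q ^ m) ^ 2 * qbinom (q ^ 2) m k := by
  have h1 := qbinom_low hq m k
  have h2 := qbinom_up hq m (k + 1)
  have h3 := qbinom_low hq (m + 1) k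
  have h4 := qbinom_up hq m k
  have hk : (q ^ k) ^ 2 ≠ 0 := by positivity
  have hne : 1 - (q ^ k) ^ 2 * q ^ 2 ≠ 0 := by
    have := one_sub_pow_ne hq (2 * k + 1)
    rwa [show q ^ (2 * k + 1 + 1) = (q ^ k) ^ 2 * q ^ 2 by ring] at this
  have e : q ^ (k + 1) = q ^ k * q := pow_succ q k
  have e' : q ^ (m + 1) = q ^ m * q := pow_succ q m
  rw [e] at h2
  rw [e'] at h3
  apply mul_left_cancel₀ (mul_ne_zero hk hne)
  linear_combination (q ^ k) ^ 2 * h3 - (q ^ k) ^ 2 * h1 - (q ^ k) ^ 2 * h4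

theorem qbinom_pascal' (hq0 : q ≠ 0) (hq : ∀ k : ℕ, k ≠ 0 → q ^ k ≠ 1) (m k : ℕ) :
    qbinom (q ^ 2) (m + 1) (k + 1)
      = (q ^ k) ^ 2 * q ^ 2 * qbinom (q ^ 2) m (k + 1) + qbinom (q ^ 2) m k := by
  have h1 := qbinom_low hq m k
  have h3 := qbinom_pascal hq0 hq m k
  have hk : (q ^ k) ^ 2 ≠ 0 := by positivity
  apply mul_left_cancel₀ hk
  linear_combination h3 + h1

/-- `∏_{s=1}^m (1 - q^{2(c+s)})`, which is `(q²;q²)_{c+m}/(q²;q²)_c` when `c ≥ 0` but makes sense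
for every integer `c`. -/
def pr (q : ℂ) (c : ℤ) (m : ℕ) : ℂ := ∏ s ∈ Finset.range m, (1 - (q ^ (c + s + 1)) ^ 2)

theorem pr_zero (c : ℤ) : pr q c 0 = 1 := by simp [pr]

theorem pr_succ (hq0 : q ≠ 0) (c : ℤ) (m : ℕ) :
    pr q c (m + 1) = pr q c m * (1 - (q ^ c * q ^ m * q) ^ 2) := by
  rw [pr, Finset.prod_range_succ, ← pr, zpow_add₀ hq0, zpow_add₀ hq0, zpow_one, zpow_natCast]

theorem pr_succ' (c : ℤ) (m : ℕ) :
    pr q (c - 1) (m + 1) = (1 - (q ^ c) ^ 2) * pr q c m := by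
  rw [pr, Finset.prod_range_succ', mul_comm]
  congr 1
  · simp
  · refine Finset.prod_congr rfl fun s _ => ?_
    congr 3
    push_cast
    ring

theorem pr_eq_zero {c : ℤ} {m : ℕ} (h : c < 0) (h' : 0 ≤ c + m) : pr q c m = 0 := by
  refine Finset.prod_eq_zero (i := (-c - 1).toNat) (Finset.mem_range.2 (by omega)) ?_
  rw [show c + ((-c - 1).toNat : ℤ) + 1 = 0 by omega]
  simp

theorem pr_eq_poch (hq : ∀ k : ℕ, k ≠ 0 → q ^ k ≠ 1) (c m : ℕ) :
    poch (q ^ 2) (q ^ 2) (c + m) / poch (q ^ 2) (q ^ 2) c = pr q c m := by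
  have h := poch_ne (sq_not_root hq) c
  rw [div_eq_iff h]
  induction m with
  | zero => simp [pr]
  | succ m ih =>
    rw [← add_assoc, poch_succ, ih, pr, pr, Finset.prod_range_succ]
    rw [show (c : ℤ) + (m : ℤ) + 1 = ((c + m + 1 : ℕ) : ℤ) by push_cast; ring, zpow_natCast]
    ring

/-- Summation by shifting: a summand on `λ + μ = b + 1` made of two pieces, one pulled back along
`μ ↦ μ + 1` and the other along `λ ↦ λ + 1`, is summed on `λ + μ = b`. -/
theorem sum_shift (b : ℕ) (F P Q : ℕ → ℕ → ℂ)
    (h1 : ∀ l m, l + 1 + m = b → F (l + 1) (m + 1) = P (l + 1) m + Q l (m + 1))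
    (h2 : F 0 (b + 1) = P 0 b) (h3 : F (b + 1) 0 = Q b 0) :
    ∑ p ∈ Finset.HasAntidiagonal.antidiagonal (b + 1), F p.1 p.2
      = ∑ p ∈ Finset.HasAntidiagonal.antidiagonal b, (P p.1 p.2 + Q p.1 p.2) := by
  rw [Finset.sum_add_distrib]
  cases b with
  | zero => simp [Finset.Nat.antidiagonal_succ, h2, h3]
  | succ b =>
    rw [Finset.Nat.sum_antidiagonal_succ (n := b + 1), Finset.Nat.sum_antidiagonal_succ' (n := b),
      Finset.Nat.sum_antidiagonal_succ (n := b) (f := fun p => P p.1 p.2),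
      Finset.Nat.sum_antidiagonal_succ' (n := b) (f := fun p => Q p.1 p.2), h2, h3]
    have : ∑ p ∈ Finset.HasAntidiagonal.antidiagonal b, F (p.1 + 1) (p.2 + 1)
        = ∑ p ∈ Finset.HasAntidiagonal.antidiagonal b, (P (p.1 + 1) p.2 + Q p.1 (p.2 + 1)) := by
      refine Finset.sum_congr rfl fun p hp => h1 _ _ ?_
      have := Finset.HasAntidiagonal.mem_antidiagonal.1 hp
      omega
    rw [this, Finset.sum_add_distrib]
    ring

end QBinomial

/-! ### Contiguity relations of the 3D `R` -/

section RCore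

variable {q : ℂ}

/-- The monomial prefactor of the summand of the 3D `R`. -/
def ph (q : ℂ) (i j : ℕ) (c k : ℤ) (l m : ℕ) : ℂ :=
  (-1 : ℂ) ^ l * q ^ ((i : ℤ) * (c - (j : ℤ)) + (k + 1) * (l : ℤ) + (m : ℤ) * ((m : ℤ) - k))

theorem ph_i (hq0 : q ≠ 0) (i j : ℕ) (c k : ℤ) (l m : ℕ) :
    ph q (i + 1) j c k l m = ph q i j c k l m * q ^ c / q ^ j := by
  rw [ph, ph, mul_assoc, mul_div_assoc, ← zpow_natCast q j, ← zpow_add₀ hq0, ← zpow_sub₀ hq0]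
  congr 2; push_cast; ring

theorem ph_j (hq0 : q ≠ 0) (i j : ℕ) (c k : ℤ) (l m : ℕ) :
    ph q i (j + 1) c k l m = ph q i j c k l m / q ^ i := by
  rw [ph, ph, mul_div_assoc, ← zpow_natCast q i, ← zpow_sub₀ hq0]
  congr 2; push_cast; ring

theorem ph_c (hq0 : q ≠ 0) (i j : ℕ) (c k : ℤ) (l m : ℕ) :
    ph q i j (c + 1) k l m = ph q i j c k l m * q ^ i := by
  rw [ph, ph, mul_assoc, ← zpow_natCast q i, ← zpow_add₀ hq0]
  congr 2; ring

theorem ph_c' (hq0 : q ≠ 0) (i j : ℕ) (c k : ℤ) (l m : ℕ) :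
    ph q i j (c - 1) k l m = ph q i j c k l m / q ^ i := by
  rw [ph, ph, mul_div_assoc, ← zpow_natCast q i, ← zpow_sub₀ hq0]
  congr 2; ring

theorem ph_k (hq0 : q ≠ 0) (i j : ℕ) (c k : ℤ) (l m : ℕ) :
    ph q i j c (k + 1) l m = ph q i j c k l m * q ^ l / q ^ m := by
  rw [ph, ph, mul_assoc, mul_div_assoc, ← zpow_natCast q l, ← zpow_natCast q m, ← zpow_add₀ hq0,
    ← zpow_sub₀ hq0]
  congr 2; ring

theorem ph_k' (hq0 : q ≠ 0) (i j : ℕ) (c k : ℤ) (l m : ℕ) :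
    ph q i j c (k - 1) l m = ph q i j c k l m * q ^ m / q ^ l := by
  rw [ph, ph, mul_assoc, mul_div_assoc, ← zpow_natCast q l, ← zpow_natCast q m, ← zpow_add₀ hq0,
    ← zpow_sub₀ hq0]
  congr 2; ring

theorem ph_l (hq0 : q ≠ 0) (i j : ℕ) (c k : ℤ) (l m : ℕ) :
    ph q i j c k (l + 1) m = -(ph q i j c k l m * q ^ k * q) := by
  rw [ph, ph, pow_succ, mul_assoc, mul_assoc ((-1 : ℂ) ^ l), mul_assoc ((-1 : ℂ) ^ l),
    ← zpow_add₀ hq0, ← zpow_add_one₀ hq0, neg_one_mul, mul_neg]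
  congr 3; push_cast; ring

theorem ph_m (hq0 : q ≠ 0) (i j : ℕ) (c k : ℤ) (l m : ℕ) :
    ph q i j c k l (m + 1) = ph q i j c k l m * (q ^ m) ^ 2 * q / q ^ k := by
  rw [ph, ph, ← pow_mul, ← zpow_natCast q (m * 2), mul_assoc, mul_assoc, mul_div_assoc,
    mul_div_assoc, ← zpow_add_one₀ hq0, ← zpow_sub₀ hq0, ← zpow_add₀ hq0]
  congr 2; push_cast; ring

theorem one_sub_sq_ne (hq : ∀ k : ℕ, k ≠ 0 → q ^ k ≠ 1) (k : ℕ) :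
    1 - (q ^ k) ^ 2 * q ^ 2 ≠ 0 := by
  have := one_sub_pow_ne hq (2 * k + 1)
  rwa [show q ^ (2 * k + 1 + 1) = (q ^ k) ^ 2 * q ^ 2 by ring] at this

theorem one_sub_sq_ne' (hq : ∀ k : ℕ, k ≠ 0 → q ^ k ≠ 1) (k : ℕ) :
    1 - q ^ 2 * (q ^ k) ^ 2 ≠ 0 := by
  rw [mul_comm]
  exact one_sub_sq_ne hq k

/-- Lower absorption solved for the larger binomial. -/
theorem qb_low (hq0 : q ≠ 0) (hq : ∀ k : ℕ, k ≠ 0 → q ^ k ≠ 1) (m k : ℕ) :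
    qbinom (q ^ 2) m (k + 1)
      = (1 - (q ^ m / q ^ k) ^ 2) / (1 - (q ^ k) ^ 2 * q ^ 2) * qbinom (q ^ 2) m k := by
  have h := qbinom_low hq m k
  have hne := one_sub_sq_ne hq k
  have hner := one_sub_sq_ne' hq k
  have hk : q ^ k ≠ 0 := pow_ne_zero _ hq0
  generalize q ^ k = X at *
  field_simp
  linear_combination h

/-- Diagonal absorption: raising both arguments. -/
theorem qb_diag (hq0 : q ≠ 0) (hq : ∀ k : ℕ, k ≠ 0 → q ^ k ≠ 1) (m k : ℕ) :
    qbinom (q ^ 2) (m + 1) (k + 1)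
      = (1 - (q ^ m) ^ 2 * q ^ 2) / (1 - (q ^ k) ^ 2 * q ^ 2) * qbinom (q ^ 2) m k := by
  have hne := one_sub_sq_ne hq k
  have hner := one_sub_sq_ne' hq k
  have hk : q ^ k ≠ 0 := pow_ne_zero _ hq0
  rw [qbinom_pascal' hq0 hq, qb_low hq0 hq]
  generalize q ^ k = X at *
  field_simp
  ring

/-- The summand of the 3D `R`; the output index `a` is determined by the other ones. -/
def rterm (q : ℂ) (i j : ℕ) (c k : ℤ) (l m : ℕ) : ℂ :=
  ph q i j c k l m * pr q c m * qbinom (q ^ 2) i m * qbinom (q ^ 2) j l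

/-- The sum in the 3D `R`, as a function of `i, j, b` and of integers `c, k`. -/
def rcore (q : ℂ) (i j b : ℕ) (c k : ℤ) : ℂ :=
  ∑ p ∈ Finset.HasAntidiagonal.antidiagonal b, rterm q i j c k p.1 p.2

theorem rterm_pred_i (hq0 : q ≠ 0) (hq : ∀ k : ℕ, k ≠ 0 → q ^ k ≠ 1) (i j : ℕ) (c k : ℤ)
    (l m : ℕ) : (1 - (q ^ i) ^ 2) * rterm q (i - 1) j c k l m
      = q ^ j / q ^ c * (1 - (q ^ i / q ^ m) ^ 2) * rterm q i j c k l m := by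
  cases i with
  | zero =>
    cases m with
    | zero => simp
    | succ m => simp [rterm, qbinom_gt (Nat.succ_pos m)]
  | succ i =>
    have h := qbinom_up hq i m
    have hc : q ^ c ≠ 0 := zpow_ne_zero _ hq0
    rw [Nat.add_sub_cancel, rterm, rterm, ph_i hq0, pow_succ q i]
    field_simp
    linear_combination ph q i j c k l m * pr q c m * qbinom (q ^ 2) j l * h

theorem rterm_pred_j (hq0 : q ≠ 0) (hq : ∀ k : ℕ, k ≠ 0 → q ^ k ≠ 1) (i j : ℕ) (c k : ℤ)
    (l m : ℕ) : (1 - (q ^ j) ^ 2) * rterm q i (j - 1) c k l m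
      = q ^ i * (1 - (q ^ j / q ^ l) ^ 2) * rterm q i j c k l m := by
  cases j with
  | zero =>
    cases l with
    | zero => simp
    | succ l => simp [rterm, qbinom_gt (Nat.succ_pos l)]
  | succ j =>
    have h := qbinom_up hq j l
    rw [Nat.add_sub_cancel, rterm, rterm, ph_j hq0, pow_succ q j]
    field_simp
    linear_combination ph q i j c k l m * pr q c m * qbinom (q ^ 2) i m * h

/-- Lowering an input index at fixed `b`; holds summand by summand. -/
theorem core_PA1 (hq0 : q ≠ 0) (hq : ∀ k : ℕ, k ≠ 0 → q ^ k ≠ 1) (i j b : ℕ) (c k : ℤ)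
    (h : (b : ℤ) + c = j + k) :
    q ^ b * (1 - (q ^ i * q ^ j / q ^ b) ^ 2) * rcore q i j b c k
      = q ^ k * ((1 - (q ^ i) ^ 2) * rcore q (i - 1) j b c k)
        + q ^ i * ((1 - (q ^ j) ^ 2) * rcore q i (j - 1) b c (k + 1)) := by
  simp only [rcore, Finset.mul_sum]
  rw [← Finset.sum_add_distrib]
  refine Finset.sum_congr rfl fun p hp => ?_
  have hb := Finset.HasAntidiagonal.mem_antidiagonal.1 hp
  rw [rterm_pred_i hq0 hq, rterm_pred_j hq0 hq, rterm, rterm, ph_k hq0]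
  obtain ⟨l, m⟩ := p
  obtain rfl : k = l + m + c - j := by simp only at hb; omega
  obtain rfl := hb
  have hc : q ^ c ≠ 0 := zpow_ne_zero _ hq0
  simp only [zpow_sub₀ hq0, zpow_add₀ hq0, zpow_natCast, pow_add]
  field_simp
  ring

/-- Raising an input index together with `b`. -/
theorem core_PB2 (hq0 : q ≠ 0) (hq : ∀ k : ℕ, k ≠ 0 → q ^ k ≠ 1) (i j b : ℕ) (c k : ℤ)
    (h : (b : ℤ) + c = j + k) :
    rcore q i j b c k = rcore q (i + 1) j (b + 1) c (k + 1)
        - q * q ^ k * q ^ i * rcore q i (j + 1) (b + 1) c k := by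
  simp only [rcore, Finset.mul_sum]
  rw [← Finset.sum_sub_distrib]
  obtain rfl : k = b + c - j := by omega
  have hc : q ^ c ≠ 0 := zpow_ne_zero _ hq0
  rw [sum_shift b (fun l m => rterm q (i + 1) j c (b + c - j + 1) l m
      - q * q ^ (b + c - j : ℤ) * q ^ i * rterm q i (j + 1) c (b + c - j) l m)
    (fun l m => (1 - (q ^ c * q ^ m * q) ^ 2) * rterm q i j c (b + c - j) l m)
    (fun l m => (q ^ c * q ^ m * q) ^ 2 * rterm q i j c (b + c - j) l m)]
  · refine Finset.sum_congr rfl fun p _ => ?_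
    ring
  · intro l m hlm
    have hl := one_sub_sq_ne hq l
    have hlr := one_sub_sq_ne' hq l
    have hm := one_sub_sq_ne hq m
    have hmr := one_sub_sq_ne' hq m
    have hl' : q ^ l ≠ 0 := pow_ne_zero _ hq0
    have hm' : q ^ m ≠ 0 := pow_ne_zero _ hq0
    simp only [rterm, ph_k hq0, ph_k' hq0, ph_i hq0, ph_j hq0, ph_c hq0, ph_c' hq0, ph_m hq0,
      ph_l hq0, pr_succ hq0, pr_succ', qb_diag hq0 hq, qb_low hq0 hq]
    simp only [← hlm, zpow_sub₀ hq0, zpow_add₀ hq0, zpow_natCast, pow_add, pow_one, Nat.cast_add,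
      Nat.cast_one, zpow_one]
    generalize q ^ l = Y at *
    generalize q ^ m = X at *
    field_simp
    ring
  · have hm := one_sub_sq_ne hq b
    have hmr := one_sub_sq_ne' hq b
    have hm' : q ^ b ≠ 0 := pow_ne_zero _ hq0
    simp only [rterm, ph_k hq0, ph_k' hq0, ph_i hq0, ph_j hq0, ph_c hq0, ph_c' hq0, ph_m hq0,
      ph_l hq0, pr_succ hq0, pr_succ', qb_diag hq0 hq, qb_low hq0 hq, qbinom_zero hq]
    simp only [zpow_sub₀ hq0, zpow_add₀ hq0, zpow_natCast, pow_add, pow_one, Nat.cast_add,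
      Nat.cast_one, zpow_one, pow_zero]
    generalize q ^ b = Y at *
    field_simp
    ring
  · have hm := one_sub_sq_ne hq b
    have hmr := one_sub_sq_ne' hq b
    have hm' : q ^ b ≠ 0 := pow_ne_zero _ hq0
    simp only [rterm, ph_k hq0, ph_k' hq0, ph_i hq0, ph_j hq0, ph_c hq0, ph_c' hq0, ph_m hq0,
      ph_l hq0, pr_succ hq0, pr_succ', qb_diag hq0 hq, qb_low hq0 hq, qbinom_zero hq]
    simp only [zpow_sub₀ hq0, zpow_add₀ hq0, zpow_natCast, pow_add, pow_one, Nat.cast_add,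
      Nat.cast_one, zpow_one, pow_zero]
    generalize q ^ b = Y at *
    field_simp
    ring

end RCore

/-! ### Contiguity relations that shift the summation index -/

section RCoreShift

variable {q : ℂ}

theorem pr_shift (hq0 : q ≠ 0) (c : ℤ) (m : ℕ) :
    (1 - (q ^ c * q) ^ 2) * pr q (c + 1) m = pr q c m * (1 - (q ^ c * q ^ m * q) ^ 2) := by
  have h := pr_succ' (q := q) (c + 1) m
  rw [add_sub_cancel_right, zpow_add_one₀ hq0] at h
  rw [← h, pr_succ hq0]

/-- Raising an input index at fixed `b`; for `b > 0` the summands cancel after a shift. -/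
theorem core_PB1 (hq0 : q ≠ 0) (hq : ∀ k : ℕ, k ≠ 0 → q ^ k ≠ 1) (i j b : ℕ) (c k : ℤ)
    (h : (b : ℤ) + c = j + k) :
    q ^ b * rcore q i j b c k = q ^ k * rcore q (i + 1) j b c k
        + q ^ i * (1 - (q ^ k) ^ 2) * rcore q i (j + 1) b c (k - 1) := by
  have hc : q ^ c ≠ 0 := zpow_ne_zero _ hq0
  cases b with
  | zero =>
    obtain rfl : c = j + k := by push_cast at h; omega
    have hk : q ^ k ≠ 0 := zpow_ne_zero _ hq0
    simp only [rcore, Finset.Nat.antidiagonal_zero, Finset.sum_singleton, rterm, ph_i hq0,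
      ph_j hq0, ph_k' hq0, qbinom_zero hq, pr_zero, zpow_add₀ hq0, zpow_natCast, pow_zero]
    field_simp
    ring
  | succ b =>
  obtain rfl : k = b + 1 + c - j := by push_cast at h; omega
  rw [← sub_eq_zero]
  simp only [rcore, Finset.mul_sum]
  rw [← Finset.sum_add_distrib, ← Finset.sum_sub_distrib]
  rw [sum_shift b (fun l m => q ^ (b + 1) * rterm q i j c (b + 1 + c - j) l m
      - (q ^ (b + 1 + c - j : ℤ) * rterm q (i + 1) j c (b + 1 + c - j) l m
        + q ^ i * (1 - (q ^ (b + 1 + c - j : ℤ)) ^ 2)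
          * rterm q i (j + 1) c (b + 1 + c - j - 1) l m))
    (fun l m => -(q ^ c / q ^ j * (q ^ m) ^ 2 * q) * (1 - (q ^ c * q ^ m * q) ^ 2)
      * rterm q i j c (b + 1 + c - j) l m)
    (fun l m => (q ^ c / q ^ j * (q ^ m) ^ 2 * q) * (1 - (q ^ c * q ^ m * q) ^ 2)
      * rterm q i j c (b + 1 + c - j) l m)]
  · refine Finset.sum_eq_zero fun p _ => ?_
    ring
  · intro l m hlm
    have hl := one_sub_sq_ne hq l
    have hlr := one_sub_sq_ne' hq l
    have hm := one_sub_sq_ne hq m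
    have hmr := one_sub_sq_ne' hq m
    have hl' : q ^ l ≠ 0 := pow_ne_zero _ hq0
    have hm' : q ^ m ≠ 0 := pow_ne_zero _ hq0
    simp only [rterm, ph_k hq0, ph_k' hq0, ph_i hq0, ph_j hq0, ph_c hq0, ph_c' hq0, ph_m hq0,
      ph_l hq0, pr_succ hq0, qb_diag hq0 hq, qb_low hq0 hq]
    simp only [← hlm, zpow_sub₀ hq0, zpow_add₀ hq0, zpow_natCast, pow_add, pow_one, Nat.cast_add,
      Nat.cast_one, zpow_one]
    generalize q ^ l = Y at *
    generalize q ^ m = X at *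
    field_simp
    ring
  · have hm := one_sub_sq_ne hq b
    have hmr := one_sub_sq_ne' hq b
    have hm' : q ^ b ≠ 0 := pow_ne_zero _ hq0
    simp only [rterm, ph_k hq0, ph_k' hq0, ph_i hq0, ph_j hq0, ph_c hq0, ph_c' hq0, ph_m hq0,
      ph_l hq0, pr_succ hq0, qb_diag hq0 hq, qb_low hq0 hq, qbinom_zero hq]
    simp only [zpow_sub₀ hq0, zpow_add₀ hq0, zpow_natCast, pow_add, pow_one, Nat.cast_add,
      Nat.cast_one, zpow_one, pow_zero]
    generalize q ^ b = Y at *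
    field_simp
    ring
  · have hm := one_sub_sq_ne hq b
    have hmr := one_sub_sq_ne' hq b
    have hm' : q ^ b ≠ 0 := pow_ne_zero _ hq0
    simp only [rterm, ph_k hq0, ph_k' hq0, ph_i hq0, ph_j hq0, ph_c hq0, ph_c' hq0, ph_m hq0,
      ph_l hq0, pr_succ hq0, qb_diag hq0 hq, qb_low hq0 hq, qbinom_zero hq]
    simp only [zpow_sub₀ hq0, zpow_add₀ hq0, zpow_natCast, pow_add, pow_one, Nat.cast_add,
      Nat.cast_one, zpow_one, pow_zero]
    generalize q ^ b = Y at *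
    field_simp
    ring

/-- The sum for `b + 1`, weighted by `1 - q^{2(b+1)}`, rewritten over `λ + μ = b`. -/
theorem core_succ (hq0 : q ≠ 0) (hq : ∀ k : ℕ, k ≠ 0 → q ^ k ≠ 1) (i j b : ℕ) (c k : ℤ) :
    (1 - (q ^ b * q) ^ 2) * rcore q i j (b + 1) c k
      = ∑ p ∈ Finset.HasAntidiagonal.antidiagonal b,
        ((q ^ p.2) ^ 2 * q / q ^ k * (1 - (q ^ c * q ^ p.2 * q) ^ 2) * (1 - (q ^ i / q ^ p.2) ^ 2)
          - q ^ k * q * (1 - (q ^ j / q ^ p.1) ^ 2) * (q ^ p.2) ^ 2) * rterm q i j c k p.1 p.2 := by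
  have hc : q ^ c ≠ 0 := zpow_ne_zero _ hq0
  have hk : q ^ k ≠ 0 := zpow_ne_zero _ hq0
  simp only [rcore, Finset.mul_sum]
  have e : ∀ p ∈ Finset.HasAntidiagonal.antidiagonal (b + 1),
      (1 - (q ^ b * q) ^ 2) * rterm q i j c k p.1 p.2
        = (1 - (q ^ p.1) ^ 2 * (q ^ p.2) ^ 2) * rterm q i j c k p.1 p.2 := fun p hp => by
    have := Finset.HasAntidiagonal.mem_antidiagonal.1 hp
    rw [← pow_succ, ← this, pow_add, mul_pow]
  rw [Finset.sum_congr rfl e,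
    sum_shift b (fun l m => (1 - (q ^ l) ^ 2 * (q ^ m) ^ 2) * rterm q i j c k l m)
    (fun l m => (q ^ m) ^ 2 * q / q ^ k * (1 - (q ^ c * q ^ m * q) ^ 2) * (1 - (q ^ i / q ^ m) ^ 2)
      * rterm q i j c k l m)
    (fun l m => -(q ^ k * q * (1 - (q ^ j / q ^ l) ^ 2) * (q ^ m) ^ 2) * rterm q i j c k l m)]
  · refine Finset.sum_congr rfl fun p _ => ?_
    ring
  · intro l m hlm
    have hl := one_sub_sq_ne hq l
    have hlr := one_sub_sq_ne' hq l
    have hm := one_sub_sq_ne hq m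
    have hmr := one_sub_sq_ne' hq m
    have hl' : q ^ l ≠ 0 := pow_ne_zero _ hq0
    have hm' : q ^ m ≠ 0 := pow_ne_zero _ hq0
    simp only [rterm, ph_k hq0, ph_k' hq0, ph_i hq0, ph_j hq0, ph_c hq0, ph_c' hq0, ph_m hq0,
      ph_l hq0, pr_succ hq0, qb_diag hq0 hq, qb_low hq0 hq]
    simp only [← hlm, zpow_sub₀ hq0, zpow_add₀ hq0, zpow_natCast, pow_add, pow_one, Nat.cast_add,
      Nat.cast_one, zpow_one]
    generalize q ^ l = Y at *
    generalize q ^ m = X at *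
    field_simp
    ring
  · have hm := one_sub_sq_ne hq b
    have hmr := one_sub_sq_ne' hq b
    have hm' : q ^ b ≠ 0 := pow_ne_zero _ hq0
    simp only [rterm, ph_k hq0, ph_k' hq0, ph_i hq0, ph_j hq0, ph_c hq0, ph_c' hq0, ph_m hq0,
      ph_l hq0, pr_succ hq0, qb_diag hq0 hq, qb_low hq0 hq, qbinom_zero hq]
    simp only [zpow_sub₀ hq0, zpow_add₀ hq0, zpow_natCast, pow_add, pow_one, Nat.cast_add,
      Nat.cast_one, zpow_one, pow_zero]
    generalize q ^ b = Y at *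
    field_simp
  · have hm := one_sub_sq_ne hq b
    have hmr := one_sub_sq_ne' hq b
    have hm' : q ^ b ≠ 0 := pow_ne_zero _ hq0
    simp only [rterm, ph_k hq0, ph_k' hq0, ph_i hq0, ph_j hq0, ph_c hq0, ph_c' hq0, ph_m hq0,
      ph_l hq0, pr_succ hq0, qb_diag hq0 hq, qb_low hq0 hq, qbinom_zero hq]
    simp only [zpow_sub₀ hq0, zpow_add₀ hq0, zpow_natCast, pow_add, pow_one, Nat.cast_add,
      Nat.cast_one, zpow_one, pow_zero]
    generalize q ^ b = Y at *
    field_simp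

/-- Lowering an input index together with `b`; holds summand by summand after `core_succ`. -/
theorem core_PA2 (hq0 : q ≠ 0) (hq : ∀ k : ℕ, k ≠ 0 → q ^ k ≠ 1) (i j b : ℕ) (c k : ℤ)
    (h : (b : ℤ) + 1 + c = j + k) :
    (1 - (q ^ b * q) ^ 2) * rcore q i j (b + 1) c k
      = (1 - (q ^ k) ^ 2) * ((1 - (q ^ i) ^ 2) * rcore q (i - 1) j b c (k - 1))
        - q * q ^ i * q ^ k * ((1 - (q ^ j) ^ 2) * rcore q i (j - 1) b c k) := by
  rw [core_succ hq0 hq]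
  simp only [rcore, Finset.mul_sum]
  rw [← Finset.sum_sub_distrib]
  refine Finset.sum_congr rfl fun p hp => ?_
  have hb := Finset.HasAntidiagonal.mem_antidiagonal.1 hp
  obtain ⟨l, m⟩ := p
  obtain rfl := hb
  have hc : q ^ c ≠ 0 := zpow_ne_zero _ hq0
  have hc1 : c - 1 + 1 = c := by ring
  obtain rfl : k = l + m + 1 + c - j := by push_cast at h; omega
  rw [rterm_pred_i hq0 hq, rterm_pred_j hq0 hq, rterm, rterm, ph_k' hq0]
  simp only [zpow_sub₀ hq0, zpow_add₀ hq0, zpow_natCast, pow_add, zpow_one]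
  field_simp
  ring

/-- Lowering `j`, traded for a shift of `c` and a shift of `b` on the output side. -/
theorem core_UA2 (hq0 : q ≠ 0) (hq : ∀ k : ℕ, k ≠ 0 → q ^ k ≠ 1) (i j b : ℕ) (c k : ℤ)
    (h : (b : ℤ) + 1 + c = j + k) :
    (1 - (q ^ j) ^ 2) * rcore q i (j - 1) b c k
      = (1 - (q ^ i * q ^ j / q ^ b) ^ 2) * ((1 - (q ^ c * q) ^ 2) * rcore q i j b (c + 1) k)
        - q ^ i * q ^ j / q ^ b * q ^ c
          * ((1 - (q ^ b * q) ^ 2) * rcore q i j (b + 1) c k) := by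
  rw [core_succ hq0 hq]
  simp only [rcore, Finset.mul_sum]
  rw [← Finset.sum_sub_distrib]
  refine Finset.sum_congr rfl fun p hp => ?_
  have hb := Finset.HasAntidiagonal.mem_antidiagonal.1 hp
  obtain ⟨l, m⟩ := p
  obtain rfl := hb
  have hc : q ^ c ≠ 0 := zpow_ne_zero _ hq0
  have hc1 : c - 1 + 1 = c := by ring
  obtain rfl : k = l + m + 1 + c - j := by push_cast at h; omega
  have e : (1 - (q ^ c * q) ^ 2) * rterm q i j (c + 1) (l + m + 1 + c - j) l m
      = q ^ i * (1 - (q ^ c * q ^ m * q) ^ 2) * rterm q i j c (l + m + 1 + c - j) l m := by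
    rw [rterm, rterm, ph_c hq0]
    linear_combination ph q i j c (l + m + 1 + c - j) l m * q ^ i * qbinom (q ^ 2) i m
      * qbinom (q ^ 2) j l * pr_shift hq0 c m
  rw [rterm_pred_j hq0 hq, e]
  simp only [zpow_sub₀ hq0, zpow_add₀ hq0, zpow_natCast, pow_add, zpow_one]
  field_simp
  ring

/-- Raising `j`, traded for shifts of `b` and `c` on the output side. -/
theorem core_UB2 (hq0 : q ≠ 0) (hq : ∀ k : ℕ, k ≠ 0 → q ^ k ≠ 1) (i j b : ℕ) (c k : ℤ)
    (h : (b : ℤ) + c = j + k) :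
    rcore q i (j + 1) (b + 1) c k = rcore q i j (b + 1) (c - 1) k
        - q * (q ^ i * q ^ j / q ^ b) * q ^ c * rcore q i j b c k := by
  have hc : q ^ c ≠ 0 := zpow_ne_zero _ hq0
  obtain rfl : k = b + c - j := by omega
  rw [sub_eq_add_neg (rcore q i j (b + 1) (c - 1) _), ← sub_eq_iff_eq_add']
  simp only [rcore, Finset.mul_sum]
  rw [← Finset.sum_sub_distrib]
  rw [sum_shift b (fun l m => rterm q i (j + 1) c (b + c - j) l m
      - rterm q i j (c - 1) (b + c - j) l m)
    (fun l m => (q ^ m) ^ 2 * q / q ^ (b + c - j : ℤ) / q ^ i * (q ^ c) ^ 2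
      * (1 - (q ^ i / q ^ m) ^ 2) * rterm q i j c (b + c - j) l m)
    (fun l m => -(q ^ (b + c - j : ℤ) * q * (q ^ j / q ^ l) ^ 2 / q ^ i)
      * rterm q i j c (b + c - j) l m)]
  · rw [← Finset.sum_neg_distrib]
    refine Finset.sum_congr rfl fun p hp => ?_
    have hb := Finset.HasAntidiagonal.mem_antidiagonal.1 hp
    obtain ⟨l, m⟩ := p
    obtain rfl := hb
    have hc : q ^ c ≠ 0 := zpow_ne_zero _ hq0
    have hc1 : c - 1 + 1 = c := by ring
    simp only [zpow_sub₀ hq0, zpow_add₀ hq0, zpow_natCast, pow_add, zpow_one, Nat.cast_add]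
    field_simp
    ring
  · intro l m hlm
    have hl := one_sub_sq_ne hq l
    have hlr := one_sub_sq_ne' hq l
    have hm := one_sub_sq_ne hq m
    have hmr := one_sub_sq_ne' hq m
    have hl' : q ^ l ≠ 0 := pow_ne_zero _ hq0
    have hm' : q ^ m ≠ 0 := pow_ne_zero _ hq0
    simp only [rterm, pr_succ', pr_zero]
    simp only [ph_k hq0, ph_k' hq0, ph_i hq0, ph_j hq0, ph_c hq0, ph_c' hq0, ph_m hq0,
      ph_l hq0, pr_succ hq0, qb_diag hq0 hq, qb_low hq0 hq]
    simp only [← hlm, zpow_sub₀ hq0, zpow_add₀ hq0, zpow_natCast, pow_add, pow_one, Nat.cast_add,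
      Nat.cast_one, zpow_one]
    generalize q ^ l = Y at *
    generalize q ^ m = X at *
    field_simp
    ring
  · have hm := one_sub_sq_ne hq b
    have hmr := one_sub_sq_ne' hq b
    have hm' : q ^ b ≠ 0 := pow_ne_zero _ hq0
    simp only [rterm, pr_succ', pr_zero]
    simp only [ph_k hq0, ph_k' hq0, ph_i hq0, ph_j hq0, ph_c hq0, ph_c' hq0, ph_m hq0,
      ph_l hq0, pr_succ hq0, qb_diag hq0 hq, qb_low hq0 hq, qbinom_zero hq]
    simp only [zpow_sub₀ hq0, zpow_add₀ hq0, zpow_natCast, pow_add, pow_one, Nat.cast_add,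
      Nat.cast_one, zpow_one, pow_zero]
    generalize q ^ b = Y at *
    field_simp
    ring
  · have hm := one_sub_sq_ne hq b
    have hmr := one_sub_sq_ne' hq b
    have hm' : q ^ b ≠ 0 := pow_ne_zero _ hq0
    simp only [rterm, pr_succ', pr_zero]
    simp only [ph_k hq0, ph_k' hq0, ph_i hq0, ph_j hq0, ph_c hq0, ph_c' hq0, ph_m hq0,
      ph_l hq0, pr_succ hq0, qb_diag hq0 hq, qb_low hq0 hq, qbinom_zero hq]
    simp only [zpow_sub₀ hq0, zpow_add₀ hq0, zpow_natCast, pow_add, pow_one, Nat.cast_add,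
      Nat.cast_one, zpow_one, pow_zero]
    generalize q ^ b = Y at *
    field_simp
    ring

/-- Raising `i`, traded for shifts of `(b, c)` on the output side. -/
theorem core_UB1 (hq0 : q ≠ 0) (hq : ∀ k : ℕ, k ≠ 0 → q ^ k ≠ 1) (i j b : ℕ) (c k : ℤ)
    (h : (b : ℤ) + 1 + c = j + k) :
    q ^ j * rcore q (i + 1) j (b + 1) c k = q ^ c * rcore q i j (b + 1) c k
        + q ^ i * q ^ j / q ^ b * ((1 - (q ^ c * q) ^ 2) * rcore q i j b (c + 1) k) := by
  have hc : q ^ c ≠ 0 := zpow_ne_zero _ hq0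
  obtain rfl : k = b + 1 + c - j := by omega
  rw [← sub_eq_iff_eq_add']
  simp only [rcore, Finset.mul_sum]
  rw [← Finset.sum_sub_distrib]
  rw [sum_shift b (fun l m => q ^ j * rterm q (i + 1) j c (b + 1 + c - j) l m
      - q ^ c * rterm q i j c (b + 1 + c - j) l m)
    (fun l m => q ^ c * ((q ^ m) ^ 2 * q / q ^ (b + 1 + c - j : ℤ))
      * (1 - (q ^ c * q ^ m * q) ^ 2) * (q ^ i / q ^ m) ^ 2 * rterm q i j c (b + 1 + c - j) l m)
    (fun l m => 0)]
  · refine Finset.sum_congr rfl fun p hp => ?_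
    have hb := Finset.HasAntidiagonal.mem_antidiagonal.1 hp
    obtain ⟨l, m⟩ := p
    obtain rfl := hb
    have hc : q ^ c ≠ 0 := zpow_ne_zero _ hq0
    have hc1 : c - 1 + 1 = c := by ring
    have e : (1 - (q ^ c * q) ^ 2) * rterm q i j (c + 1) ((l + m : ℕ) + 1 + c - j) l m
        = q ^ i * (1 - (q ^ c * q ^ m * q) ^ 2) * rterm q i j c ((l + m : ℕ) + 1 + c - j) l m := by
      rw [rterm, rterm, ph_c hq0]
      linear_combination ph q i j c ((l + m : ℕ) + 1 + c - j) l m * q ^ i * qbinom (q ^ 2) i m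
        * qbinom (q ^ 2) j l * pr_shift hq0 c m
    simp only [e]
    simp only [zpow_sub₀ hq0, zpow_add₀ hq0, zpow_natCast, pow_add, zpow_one, Nat.cast_add]
    field_simp
    ring
  · intro l m hlm
    have hl := one_sub_sq_ne hq l
    have hlr := one_sub_sq_ne' hq l
    have hm := one_sub_sq_ne hq m
    have hmr := one_sub_sq_ne' hq m
    have hl' : q ^ l ≠ 0 := pow_ne_zero _ hq0
    have hm' : q ^ m ≠ 0 := pow_ne_zero _ hq0
    simp only [rterm, ph_k hq0, ph_k' hq0, ph_i hq0, ph_j hq0, ph_c hq0, ph_c' hq0, ph_m hq0,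
      ph_l hq0, pr_succ hq0, qb_diag hq0 hq, qb_low hq0 hq]
    simp only [← hlm, zpow_sub₀ hq0, zpow_add₀ hq0, zpow_natCast, pow_add, pow_one, Nat.cast_add,
      Nat.cast_one, zpow_one]
    generalize q ^ l = Y at *
    generalize q ^ m = X at *
    field_simp
    ring
  · have hm := one_sub_sq_ne hq b
    have hmr := one_sub_sq_ne' hq b
    have hm' : q ^ b ≠ 0 := pow_ne_zero _ hq0
    simp only [rterm, ph_k hq0, ph_k' hq0, ph_i hq0, ph_j hq0, ph_c hq0, ph_c' hq0, ph_m hq0,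
      ph_l hq0, pr_succ hq0, qb_diag hq0 hq, qb_low hq0 hq, qbinom_zero hq]
    simp only [zpow_sub₀ hq0, zpow_add₀ hq0, zpow_natCast, pow_add, pow_one, Nat.cast_add,
      Nat.cast_one, zpow_one, pow_zero]
    generalize q ^ b = Y at *
    field_simp
    ring
  · have hm := one_sub_sq_ne hq b
    have hmr := one_sub_sq_ne' hq b
    have hm' : q ^ b ≠ 0 := pow_ne_zero _ hq0
    simp only [rterm, ph_k hq0, ph_k' hq0, ph_i hq0, ph_j hq0, ph_c hq0, ph_c' hq0, ph_m hq0,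
      ph_l hq0, pr_succ hq0, qb_diag hq0 hq, qb_low hq0 hq, qbinom_zero hq]
    simp only [zpow_sub₀ hq0, zpow_add₀ hq0, zpow_natCast, pow_add, pow_one, Nat.cast_add,
      Nat.cast_one, zpow_one, pow_zero]
    generalize q ^ b = Y at *
    field_simp
    ring

/-- Lowering `i`, traded for shifts of `(b, c)` on the output side. -/
theorem core_UA1 (hq0 : q ≠ 0) (hq : ∀ k : ℕ, k ≠ 0 → q ^ k ≠ 1) (i j b : ℕ) (c k : ℤ)
    (h : (b : ℤ) + c = j + k) :
    q ^ b * q ^ j * ((1 - (q ^ i) ^ 2) * rcore q (i - 1) j b c k)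
      = q ^ b * q ^ c * (1 - (q ^ i * q ^ j / q ^ b) ^ 2) * rcore q i j b c k
        + q ^ i * q ^ j / q * ((1 - (q ^ b * q) ^ 2) * rcore q i j (b + 1) (c - 1) k) := by
  have hc : q ^ c ≠ 0 := zpow_ne_zero _ hq0
  have hk : q ^ k ≠ 0 := zpow_ne_zero _ hq0
  have e : ∀ p ∈ Finset.HasAntidiagonal.antidiagonal (b + 1),
      (1 - (q ^ b * q) ^ 2) * rterm q i j (c - 1) k p.1 p.2
        = (1 - (q ^ p.1) ^ 2 * (q ^ p.2) ^ 2) * rterm q i j (c - 1) k p.1 p.2 := fun p hp => by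
    have := Finset.HasAntidiagonal.mem_antidiagonal.1 hp
    rw [← pow_succ, ← this, pow_add, mul_pow]
  have key : (1 - (q ^ b * q) ^ 2) * rcore q i j (b + 1) (c - 1) k
      = ∑ p ∈ Finset.HasAntidiagonal.antidiagonal b,
        (((q ^ p.1) ^ 2 - (q ^ c) ^ 2) * ((q ^ p.2) ^ 2 * q / q ^ k) * (1 - (q ^ i / q ^ p.2) ^ 2)
            / q ^ i
          + -(q ^ k * q * (1 - (q ^ j / q ^ p.1) ^ 2) / q ^ i)) * rterm q i j c k p.1 p.2 := by
    rw [rcore, Finset.mul_sum, Finset.sum_congr rfl e,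
      sum_shift b (fun l m => (1 - (q ^ l) ^ 2 * (q ^ m) ^ 2) * rterm q i j (c - 1) k l m)
      (fun l m => ((q ^ l) ^ 2 - (q ^ c) ^ 2) * ((q ^ m) ^ 2 * q / q ^ k)
        * (1 - (q ^ i / q ^ m) ^ 2) / q ^ i * rterm q i j c k l m)
      (fun l m => -(q ^ k * q * (1 - (q ^ j / q ^ l) ^ 2) / q ^ i) * rterm q i j c k l m)]
    · refine Finset.sum_congr rfl fun p _ => ?_
      ring
    · intro l m hlm
      have hl := one_sub_sq_ne hq l
      have hlr := one_sub_sq_ne' hq l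
      have hm := one_sub_sq_ne hq m
      have hmr := one_sub_sq_ne' hq m
      have hl' : q ^ l ≠ 0 := pow_ne_zero _ hq0
      have hm' : q ^ m ≠ 0 := pow_ne_zero _ hq0
      simp only [rterm, pr_succ', pr_zero]
      simp only [ph_k hq0, ph_k' hq0, ph_i hq0, ph_j hq0, ph_c hq0, ph_c' hq0, ph_m hq0,
        ph_l hq0, pr_succ hq0, qb_diag hq0 hq, qb_low hq0 hq]
      simp only [← hlm, zpow_sub₀ hq0, zpow_add₀ hq0, zpow_natCast, pow_add, pow_one, Nat.cast_add,
        Nat.cast_one, zpow_one]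
      generalize q ^ l = Y at *
      generalize q ^ m = X at *
      field_simp
      ring
    · have hm := one_sub_sq_ne hq b
      have hmr := one_sub_sq_ne' hq b
      have hm' : q ^ b ≠ 0 := pow_ne_zero _ hq0
      simp only [rterm, pr_succ', pr_zero]
      simp only [ph_k hq0, ph_k' hq0, ph_i hq0, ph_j hq0, ph_c hq0, ph_c' hq0, ph_m hq0,
        ph_l hq0, pr_succ hq0, qb_diag hq0 hq, qb_low hq0 hq, qbinom_zero hq]
      simp only [zpow_sub₀ hq0, zpow_add₀ hq0, zpow_natCast, pow_add, pow_one, Nat.cast_add,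
        Nat.cast_one, zpow_one, pow_zero]
      generalize q ^ b = Y at *
      field_simp
    · have hm := one_sub_sq_ne hq b
      have hmr := one_sub_sq_ne' hq b
      have hm' : q ^ b ≠ 0 := pow_ne_zero _ hq0
      simp only [rterm, pr_succ', pr_zero]
      simp only [ph_k hq0, ph_k' hq0, ph_i hq0, ph_j hq0, ph_c hq0, ph_c' hq0, ph_m hq0,
        ph_l hq0, pr_succ hq0, qb_diag hq0 hq, qb_low hq0 hq, qbinom_zero hq]
      simp only [zpow_sub₀ hq0, zpow_add₀ hq0, zpow_natCast, pow_add, pow_one, Nat.cast_add,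
        Nat.cast_one, zpow_one, pow_zero]
      generalize q ^ b = Y at *
      field_simp
  rw [key]
  simp only [rcore, Finset.mul_sum]
  rw [← Finset.sum_add_distrib]
  refine Finset.sum_congr rfl fun p hp => ?_
  have hb := Finset.HasAntidiagonal.mem_antidiagonal.1 hp
  obtain ⟨l, m⟩ := p
  obtain rfl := hb
  have hc : q ^ c ≠ 0 := zpow_ne_zero _ hq0
  have hc1 : c - 1 + 1 = c := by ring
  obtain rfl : k = l + m + c - j := by push_cast at h; omega
  rw [rterm_pred_i hq0 hq]
  simp only [zpow_sub₀ hq0, zpow_add₀ hq0, zpow_natCast, pow_add, zpow_one, Nat.cast_add]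
  field_simp
  ring

end RCoreShift

/-! ### One-site relations, uniformly for the 3D `R` and the 3D `L` -/

section OneSite

variable {q : ℂ}

/-- `Sg` with integer indices, extended by zero. -/
def sZ (q : ℂ) (e : Bool) (a b c i j k : ℤ) : ℂ :=
  if 0 ≤ a ∧ 0 ≤ b ∧ 0 ≤ c ∧ 0 ≤ i ∧ 0 ≤ j ∧ 0 ≤ k then
    Sg q e a.toNat b.toNat c.toNat i.toNat j.toNat k.toNat
  else 0

/-- `[m]` for an integer `m`. -/
def qZ (q : ℂ) (m : ℤ) : ℂ := (q ^ m - q ^ (-m)) / (q - q⁻¹)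

/-- The local parameter `q_i` of a site of type `e`. -/
def qs (q : ℂ) (e : Bool) : ℂ := if e then -q⁻¹ else q

/-- `x` is an admissible occupation number for a site of type `e`. -/
def In (e : Bool) (x : ℤ) : Prop := 0 ≤ x ∧ (e = true → x ≤ 1)

theorem qnum_eq_qZ (m : ℕ) : qnum q m = qZ q m := by
  simp [qnum, qZ, inv_pow, zpow_neg]

theorem qZ_zero : qZ q 0 = 0 := by simp [qZ]

theorem q_sub_inv_ne (hq0 : q ≠ 0) (hq : ∀ k : ℕ, k ≠ 0 → q ^ k ≠ 1) : q - q⁻¹ ≠ 0 := by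
  intro h
  refine hq 2 two_ne_zero ?_
  have : q * (q - q⁻¹) = 0 := by rw [h, mul_zero]
  rw [mul_sub, mul_inv_cancel₀ hq0] at this
  linear_combination this

theorem qZ_one (hq0 : q ≠ 0) (hq : ∀ k : ℕ, k ≠ 0 → q ^ k ≠ 1) : qZ q 1 = 1 := by
  simp [qZ, div_self (q_sub_inv_ne hq0 hq)]

theorem qs_ne (hq0 : q ≠ 0) (e : Bool) : qs q e ≠ 0 := by
  cases e <;> simp [qs, hq0]

/-- For a boson, `[m] = q^{-m}(q^{2m} - 1)/(q - q⁻¹)`. -/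
theorem qZ_nat (hq0 : q ≠ 0) (hq : ∀ k : ℕ, k ≠ 0 → q ^ k ≠ 1) (m : ℤ) :
    qZ q m = q / (q ^ m * (1 - q ^ 2)) * (1 - (q ^ m) ^ 2) := by
  have h : 1 - q ^ 2 ≠ 0 := one_sub_pow_ne hq 1
  have h1 := q_sub_inv_ne hq0 hq
  have hm : q ^ m ≠ 0 := zpow_ne_zero _ hq0
  rw [qZ, zpow_neg, div_eq_iff h1]
  field_simp
  ring

theorem Sg_cons {e : Bool} {a b c i j k : ℕ} (h : ¬(a + b = i + j ∧ b + c = j + k)) :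
    Sg q e a b c i j k = 0 := by
  cases e with
  | false => simp only [Sg, R3, if_neg h, zero_mul]; simp
  | true =>
    simp only [Sg, L3, if_true]
    repeat' rw [if_neg (by omega)]

/-- Both conservation laws hold on the support. -/
theorem sZ_cons {e : Bool} {a b c i j k : ℤ} (h : ¬(a + b = i + j ∧ b + c = j + k)) :
    sZ q e a b c i j k = 0 := by
  unfold sZ
  split_ifs with h'
  · exact Sg_cons (by omega)
  · rfl

theorem sZ_neg {e : Bool} {a b c i j k : ℤ}
    (h : a < 0 ∨ b < 0 ∨ c < 0 ∨ i < 0 ∨ j < 0 ∨ k < 0) : sZ q e a b c i j k = 0 := by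
  rw [sZ, if_neg (by omega)]

theorem rcore_eq_zero_a {i j b : ℕ} {c k : ℤ} (h : i + j < b) : rcore q i j b c k = 0 := by
  refine Finset.sum_eq_zero fun p hp => ?_
  have hb := Finset.HasAntidiagonal.mem_antidiagonal.1 hp
  rcases lt_or_ge i p.2 with h1 | h1
  · simp [rterm, qbinom_gt h1]
  · simp [rterm, qbinom_gt (show j < p.1 by omega)]

theorem rcore_eq_zero_c {i j b : ℕ} {c k : ℤ} (hc : c < 0) (hk : 0 ≤ k) (h : (b : ℤ) + c = j + k) :
    rcore q i j b c k = 0 := by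
  refine Finset.sum_eq_zero fun p hp => ?_
  have hb := Finset.HasAntidiagonal.mem_antidiagonal.1 hp
  rcases lt_or_ge (c + p.2) 0 with h1 | h1
  · simp [rterm, qbinom_gt (show j < p.1 by omega)]
  · simp [rterm, pr_eq_zero hc h1]

/-- The 3D `R` is `rcore`, also where an output index is negative. -/
theorem sZ_false (hq : ∀ k : ℕ, k ≠ 0 → q ^ k ≠ 1) {a : ℤ} {b i j : ℕ} {c k : ℤ}
    (h1 : a + b = i + j) (h2 : (b : ℤ) + c = j + k) (hk : 0 ≤ k) :
    sZ q false a b c i j k = rcore q i j b c k := by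
  rcases lt_or_ge a 0 with ha | ha
  · rw [sZ_neg (Or.inl ha), rcore_eq_zero_a (by omega)]
  rcases lt_or_ge c 0 with hc | hc
  · rw [sZ_neg (by omega), rcore_eq_zero_c hc hk h2]
  lift a to ℕ using ha
  lift c to ℕ using hc
  lift k to ℕ using hk
  rw [sZ, if_pos (by omega)]
  simp only [Int.toNat_natCast, Sg, R3, Bool.false_eq_true, if_false]
  rw [if_pos (by omega), one_mul, rcore, Finset.Nat.sum_antidiagonal_eq_sum_range_succ_mk]
  refine Finset.sum_congr rfl fun l hl => ?_
  have : l ≤ b := by simpa [Nat.lt_succ_iff] using hl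
  rw [rterm, ph, pr_eq_poch hq]
  push_cast [Nat.cast_sub this]
  ring

/-- The 3D `L` on the support of its second conservation law. -/
def lc (q : ℂ) (a b i j k : ℤ) : ℂ :=
  if a = 0 ∧ b = 0 ∧ i = 0 ∧ j = 0 then 1
  else if a = 1 ∧ b = 1 ∧ i = 1 ∧ j = 1 then 1
  else if a = 0 ∧ b = 1 ∧ i = 0 ∧ j = 1 then -(q ^ k * q)
  else if a = 1 ∧ b = 0 ∧ i = 1 ∧ j = 0 then q ^ k
  else if a = 0 ∧ b = 1 ∧ i = 1 ∧ j = 0 then 1 - (q ^ k) ^ 2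
  else if a = 1 ∧ b = 0 ∧ i = 0 ∧ j = 1 then 1
  else 0

theorem sZ_true {a b c i j k : ℤ} (h2 : b + c = j + k) (hk : 0 ≤ k) :
    sZ q true a b c i j k = lc q a b i j k := by
  lift k to ℕ using hk
  unfold sZ
  split_ifs with h
  · obtain ⟨ha, hb, hc, hi, hj, -⟩ := h
    lift a to ℕ using ha
    lift b to ℕ using hb
    lift c to ℕ using hc
    lift i to ℕ using hi
    lift j to ℕ using hj
    simp only [Int.toNat_natCast, Sg, L3, lc, if_true]
    norm_cast
    have e1 : ((a = 0 ∧ b = 0 ∧ i = 0 ∧ j = 0 ∧ c = k) ↔ (a = 0 ∧ b = 0 ∧ i = 0 ∧ j = 0)) := by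
      omega
    have e2 : ((a = 1 ∧ b = 1 ∧ i = 1 ∧ j = 1 ∧ c = k) ↔ (a = 1 ∧ b = 1 ∧ i = 1 ∧ j = 1)) := by
      omega
    have e3 : ((a = 0 ∧ b = 1 ∧ i = 0 ∧ j = 1 ∧ c = k) ↔ (a = 0 ∧ b = 1 ∧ i = 0 ∧ j = 1)) := by
      omega
    have e4 : ((a = 1 ∧ b = 0 ∧ i = 1 ∧ j = 0 ∧ c = k) ↔ (a = 1 ∧ b = 0 ∧ i = 1 ∧ j = 0)) := by
      omega
    have e5 : ((a = 0 ∧ b = 1 ∧ i = 1 ∧ j = 0 ∧ c + 1 = k) ↔ (a = 0 ∧ b = 1 ∧ i = 1 ∧ j = 0)) := by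
      omega
    have e6 : ((a = 1 ∧ b = 0 ∧ i = 0 ∧ j = 1 ∧ c = k + 1) ↔ (a = 1 ∧ b = 0 ∧ i = 0 ∧ j = 1)) := by
      omega
    simp only [e1, e2, e3, e4, e5, e6, pow_succ, pow_mul]
    simp only [pow_zero, one_mul, mul_pow]
  · unfold lc
    split_ifs with h1 h2 h3 h4 h5 h6
    any_goals omega
    · obtain rfl : k = 0 := by omega
      simp
    · rfl

theorem sZ_true_pred {a b c i j k : ℤ} (h2 : b + c = j + (k - 1)) (hk : 0 ≤ k) :
    (1 - (q ^ k) ^ 2) * sZ q true a b c i j (k - 1)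
      = (1 - (q ^ k) ^ 2) * lc q a b i j (k - 1) := by
  rcases hk.eq_or_lt with rfl | hk
  · simp
  · rw [sZ_true h2 (by omega)]

theorem sZ_false_pred (hq : ∀ k : ℕ, k ≠ 0 → q ^ k ≠ 1) {a : ℤ} {b i j : ℕ} {c k : ℤ}
    (h1 : a + b = i + j) (h2 : (b : ℤ) + c = j + (k - 1)) (hk : 0 ≤ k) :
    (1 - (q ^ k) ^ 2) * sZ q false a b c i j (k - 1)
      = (1 - (q ^ k) ^ 2) * rcore q i j b c (k - 1) := by
  rcases hk.eq_or_lt with rfl | hk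
  · simp
  · rw [sZ_false hq h1 h2 (by omega)]

theorem sZ_false_i (hq : ∀ k : ℕ, k ≠ 0 → q ^ k ≠ 1) {a : ℤ} {b i j : ℕ} {c k : ℤ}
    (h1 : a + b = i - 1 + j) (h2 : (b : ℤ) + c = j + k) (hk : 0 ≤ k) :
    qZ q i * sZ q false a b c (i - 1) j k = qZ q i * rcore q (i - 1) j b c k := by
  cases i with
  | zero => simp [qZ_zero]
  | succ i =>
    rw [← sZ_false (a := a) hq (by push_cast at *; omega) h2 hk]
    simp

theorem sZ_false_j (hq : ∀ k : ℕ, k ≠ 0 → q ^ k ≠ 1) {a : ℤ} {b i j : ℕ} {c k : ℤ}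
    (h1 : a + b = i + j - 1) (h2 : (b : ℤ) + c = j - 1 + k) (hk : 0 ≤ k) :
    qZ q j * sZ q false a b c i (j - 1) k = qZ q j * rcore q i (j - 1) b c k := by
  cases j with
  | zero => simp [qZ_zero]
  | succ j =>
    rw [← sZ_false (a := a) hq (by push_cast at *; omega) (by push_cast at *; omega) hk]
    simp

theorem sZ_false_ipred (hq : ∀ k : ℕ, k ≠ 0 → q ^ k ≠ 1) {a : ℤ} {b i j : ℕ} {c k : ℤ}
    (h1 : a + b = i - 1 + j) (h2 : (b : ℤ) + c = j + (k - 1)) (hk : 0 ≤ k) :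
    qZ q i * ((1 - (q ^ k) ^ 2) * sZ q false a b c (i - 1) j (k - 1))
      = qZ q i * ((1 - (q ^ k) ^ 2) * rcore q (i - 1) j b c (k - 1)) := by
  rcases hk.eq_or_lt with rfl | hk
  · simp
  · rw [mul_left_comm, sZ_false_i hq h1 h2 (by omega), mul_left_comm]

/-- For a boson the powers of `q` at the two output legs multiply to those at the input legs. -/
theorem zpow_out (hq0 : q ≠ 0) {a : ℤ} {b i j : ℕ} (h : a + b = i + j) :
    q ^ a = q ^ i * q ^ j / q ^ b := by
  rw [show a = i + j - b by omega, zpow_sub₀ hq0, zpow_add₀ hq0]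
  simp

end OneSite

/-! ### Contiguity relations for one site -/

section OneSiteRelations

variable {q : ℂ}

theorem rcore_zero (hq : ∀ k : ℕ, k ≠ 0 → q ^ k ≠ 1) (i j : ℕ) (c k : ℤ) : rcore q i j 0 c k = q ^ ((i : ℤ) * (c - j)) := by
  simp [rcore, rterm, ph, pr, qbinom_zero hq]

/-- Contiguity lowering `i` on the input side. -/
theorem sZ_UA1 (hq0 : q ≠ 0) (hq : ∀ k : ℕ, k ≠ 0 → q ^ k ≠ 1) {e : Bool} {a b c i j k : ℤ}
    (ha : In e a) (hb : In e b) (hi : In e i) (hj : In e j) :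
    qZ q i * sZ q e a b c (i - 1) j k
      = q ^ c * qs q e ^ (-b) * (qZ q (a + 1) * sZ q e (a + 1) b c i j k)
        + qZ q (b + 1) * sZ q e a (b + 1) (c - 1) i j k := by
  rcases lt_or_ge k 0 with hk | hk
  · rw [sZ_neg (by omega), sZ_neg (by omega), sZ_neg (by omega)]; ring
  by_cases h : a + 1 + b = i + j ∧ b + c = j + k
  swap
  · rw [sZ_cons (by omega), sZ_cons (by omega), sZ_cons (by omega)]; ring
  obtain ⟨h1, h2⟩ := h
  cases e with
  | false =>
    lift a to ℕ using ha.1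
    lift b to ℕ using hb.1
    lift i to ℕ using hi.1
    lift j to ℕ using hj.1
    have e3 : sZ q false a (b + 1) (c - 1) i j k = rcore q i j (b + 1) (c - 1) k := by
      exact_mod_cast sZ_false (a := a) (b := b + 1) hq (by push_cast; omega) (by push_cast; omega) hk
    rw [sZ_false_i hq (by omega) (by omega) hk, sZ_false hq (by omega) (by omega) hk, e3]
    have core := core_UA1 hq0 hq i j b c k (by omega)
    have h0 : 1 - q ^ 2 ≠ 0 := one_sub_pow_ne hq 1
    have hc : q ^ c ≠ 0 := zpow_ne_zero _ hq0
    simp only [qZ_nat hq0 hq, zpow_out hq0 h1, zpow_add_one₀ hq0, zpow_natCast, qs, zpow_neg,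
      Bool.false_eq_true, if_false]
    field_simp at core ⊢
    linear_combination core
  | true =>
    have hk' : q ^ k ≠ 0 := zpow_ne_zero _ hq0
    rw [sZ_true (by omega) hk, sZ_true (by omega) hk, sZ_true (by omega) hk]
    obtain rfl : c = j + k - b := by omega
    have ha' : a = 0 ∨ a = 1 := by have := ha.1; have := ha.2 rfl; omega
    have hb' : b = 0 ∨ b = 1 := by have := hb.1; have := hb.2 rfl; omega
    have hi' : i = 0 ∨ i = 1 := by have := hi.1; have := hi.2 rfl; omega
    have hj' : j = 0 ∨ j = 1 := by have := hj.1; have := hj.2 rfl; omega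
    clear ha hb hi hj h2
    rcases ha' with rfl | rfl <;> rcases hb' with rfl | rfl <;> rcases hi' with rfl | rfl <;>
      rcases hj' with rfl | rfl <;>
      simp [lc, qZ_zero, qZ_one hq0 hq, qs, zpow_add₀ hq0, zpow_sub₀ hq0] at h1 ⊢ <;>
      field_simp <;> ring_nf

/-- Contiguity lowering `j` on the input side. -/
theorem sZ_UA2 (hq0 : q ≠ 0) (hq : ∀ k : ℕ, k ≠ 0 → q ^ k ≠ 1) {e : Bool} {a b c i j k : ℤ}
    (ha : In e a) (hb : In e b) (hi : In e i) (hj : In e j) :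
    qZ q j * sZ q e a b c i (j - 1) k
      = qs q e ^ (i - b) * (qZ q (a + 1) * ((1 - (q ^ c * q) ^ 2) * sZ q e (a + 1) b (c + 1) i j k))
        - q * q ^ c * qs q e ^ i * (qZ q (b + 1) * sZ q e a (b + 1) c i j k) := by
  rcases lt_or_ge k 0 with hk | hk
  · rw [sZ_neg (by omega), sZ_neg (by omega), sZ_neg (by omega)]; ring
  by_cases h : a + 1 + b = i + j ∧ b + 1 + c = j + k
  swap
  · rw [sZ_cons (by omega), sZ_cons (by omega), sZ_cons (by omega)]; ring
  obtain ⟨h1, h2⟩ := h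
  cases e with
  | false =>
    lift a to ℕ using ha.1
    lift b to ℕ using hb.1
    lift i to ℕ using hi.1
    lift j to ℕ using hj.1
    have e3 : sZ q false a (b + 1) c i j k = rcore q i j (b + 1) c k := by
      exact_mod_cast sZ_false (a := a) (b := b + 1) hq (by push_cast; omega) (by push_cast; omega) hk
    rw [sZ_false_j hq (by omega) (by omega) hk, sZ_false hq (by omega) (by omega) hk, e3]
    have core := core_UA2 hq0 hq i j b c k (by omega)
    have h0 : 1 - q ^ 2 ≠ 0 := one_sub_pow_ne hq 1
    have hc : q ^ c ≠ 0 := zpow_ne_zero _ hq0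
    have hk' : q ^ k ≠ 0 := zpow_ne_zero _ hq0
    simp only [qZ_nat hq0 hq, zpow_out hq0 h1, zpow_add_one₀ hq0, zpow_sub_one₀ hq0, zpow_sub₀ hq0,
      zpow_add₀ hq0, zpow_natCast, qs, zpow_neg, pow_succ q b, Nat.cast_add, Nat.cast_one, Bool.false_eq_true, if_false]
    field_simp at core ⊢
    linear_combination core
  | true =>
    have hk' : q ^ k ≠ 0 := zpow_ne_zero _ hq0
    rw [sZ_true (by omega) hk, sZ_true (by omega) hk, sZ_true (by omega) hk]
    obtain rfl : c = j + k - b - 1 := by omega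
    have ha' : a = 0 ∨ a = 1 := by have := ha.1; have := ha.2 rfl; omega
    have hb' : b = 0 ∨ b = 1 := by have := hb.1; have := hb.2 rfl; omega
    have hi' : i = 0 ∨ i = 1 := by have := hi.1; have := hi.2 rfl; omega
    have hj' : j = 0 ∨ j = 1 := by have := hj.1; have := hj.2 rfl; omega
    clear ha hb hi hj h2
    rcases ha' with rfl | rfl <;> rcases hb' with rfl | rfl <;> rcases hi' with rfl | rfl <;>
      rcases hj' with rfl | rfl <;>
      simp [lc, qZ_zero, qZ_one hq0 hq, qs, zpow_add₀ hq0, zpow_sub₀ hq0] at h1 ⊢ <;>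
      field_simp <;> ring_nf

/-- Contiguity raising `j` on the input side. -/
theorem sZ_UB2 (hq0 : q ≠ 0) (hq : ∀ k : ℕ, k ≠ 0 → q ^ k ≠ 1) {e : Bool} {a b c i j k : ℤ}
    (ha : In e a) (hb : In e b) (hi : In e i) (hj : In e j) :
    sZ q e a b c i (j + 1) k
      = sZ q e (a - 1) b (c - 1) i j k - q * qs q e ^ a * q ^ c * sZ q e a (b - 1) c i j k := by
  rcases lt_or_ge k 0 with hk | hk
  · rw [sZ_neg (by omega), sZ_neg (by omega), sZ_neg (by omega)]; ring
  by_cases h : a + b = i + j + 1 ∧ b + c = j + 1 + k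
  swap
  · rw [sZ_cons (by omega), sZ_cons (by omega), sZ_cons (by omega)]; ring
  obtain ⟨h1, h2⟩ := h
  cases e with
  | false =>
    lift a to ℕ using ha.1
    lift b to ℕ using hb.1
    lift i to ℕ using hi.1
    lift j to ℕ using hj.1
    cases b with
    | zero =>
      rw [sZ_neg (b := ((0 : ℕ) : ℤ) - 1) (by omega)]
      have e1 : sZ q false a (0 : ℕ) c i (j + 1) k = rcore q i (j + 1) 0 c k := by
        exact_mod_cast sZ_false (a := a) (j := j + 1) hq (by push_cast at *; omega) (by push_cast at *; omega) hk
      rw [e1, sZ_false hq (by push_cast at *; omega) (by push_cast at *; omega) hk, rcore_zero hq, rcore_zero hq]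
      push_cast
      ring_nf
    | succ b =>
      have e1 : sZ q false a (b + 1 : ℕ) c i (j + 1) k = rcore q i (j + 1) (b + 1) c k := by
        exact_mod_cast sZ_false (a := a) (b := b + 1) (j := j + 1) hq (by push_cast at *; omega)
          (by push_cast at *; omega) hk
      rw [e1, sZ_false hq (by push_cast at *; omega) (by push_cast at *; omega) hk]
      push_cast at h1 h2 ⊢
      rw [add_sub_cancel_right, sZ_false hq (by omega) (by omega) hk]
      replace h1 : (a : ℤ) + b = i + j := by omega
      have core := core_UB2 hq0 hq i j b c k (by omega)
      have h0 : 1 - q ^ 2 ≠ 0 := one_sub_pow_ne hq 1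
      have hc : q ^ c ≠ 0 := zpow_ne_zero _ hq0
      have hk' : q ^ k ≠ 0 := zpow_ne_zero _ hq0
      simp only [qZ_nat hq0 hq, zpow_out hq0 h1, zpow_add_one₀ hq0, zpow_sub_one₀ hq0, zpow_sub₀ hq0,
        zpow_add₀ hq0, zpow_natCast, qs, zpow_neg, pow_succ q b, Nat.cast_add, Nat.cast_one, Bool.false_eq_true, if_false]
      field_simp at core ⊢
      linear_combination core
  | true =>
    have hk' : q ^ k ≠ 0 := zpow_ne_zero _ hq0
    rw [sZ_true (by omega) hk, sZ_true (by omega) hk, sZ_true (by omega) hk]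
    obtain rfl : c = j + 1 + k - b := by omega
    have ha' : a = 0 ∨ a = 1 := by have := ha.1; have := ha.2 rfl; omega
    have hb' : b = 0 ∨ b = 1 := by have := hb.1; have := hb.2 rfl; omega
    have hi' : i = 0 ∨ i = 1 := by have := hi.1; have := hi.2 rfl; omega
    have hj' : j = 0 ∨ j = 1 := by have := hj.1; have := hj.2 rfl; omega
    clear ha hb hi hj h2
    rcases ha' with rfl | rfl <;> rcases hb' with rfl | rfl <;> rcases hi' with rfl | rfl <;>
      rcases hj' with rfl | rfl <;>
      simp [lc, qZ_zero, qZ_one hq0 hq, qs, zpow_add₀ hq0, zpow_sub₀ hq0] at h1 ⊢ <;>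
      field_simp <;> ring_nf

/-- Contiguity raising `i` on the input side. -/
theorem sZ_UB1 (hq0 : q ≠ 0) (hq : ∀ k : ℕ, k ≠ 0 → q ^ k ≠ 1) {e : Bool} {a b c i j k : ℤ}
    (ha : In e a) (hb : In e b) (hi : In e i) (hj : In e j) :
    qs q e ^ j * sZ q e a b c (i + 1) j k
      = q ^ c * sZ q e (a - 1) b c i j k
        + qs q e ^ a * ((1 - (q ^ c * q) ^ 2) * sZ q e a (b - 1) (c + 1) i j k) := by
  rcases lt_or_ge k 0 with hk | hk
  · rw [sZ_neg (by omega), sZ_neg (by omega), sZ_neg (by omega)]; ring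
  by_cases h : a + b = i + 1 + j ∧ b + c = j + k
  swap
  · rw [sZ_cons (by omega), sZ_cons (by omega), sZ_cons (by omega)]; ring
  obtain ⟨h1, h2⟩ := h
  cases e with
  | false =>
    lift a to ℕ using ha.1
    lift b to ℕ using hb.1
    lift i to ℕ using hi.1
    lift j to ℕ using hj.1
    cases b with
    | zero =>
      rw [sZ_neg (b := ((0 : ℕ) : ℤ) - 1) (by omega)]
      have e1 : sZ q false a (0 : ℕ) c (i + 1) j k = rcore q (i + 1) j 0 c k := by
        exact_mod_cast sZ_false (a := a) (i := i + 1) hq (by push_cast at *; omega) (by push_cast at *; omega) hk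
      rw [e1, sZ_false hq (by push_cast at *; omega) (by push_cast at *; omega) hk, rcore_zero hq, rcore_zero hq]
      simp only [qs, Bool.false_eq_true, if_false, ← zpow_add₀ hq0, mul_zero, add_zero]
      push_cast
      ring_nf
    | succ b =>
      have e1 : sZ q false a (b + 1 : ℕ) c (i + 1) j k = rcore q (i + 1) j (b + 1) c k := by
        exact_mod_cast sZ_false (a := a) (b := b + 1) (i := i + 1) hq (by push_cast at *; omega)
          (by push_cast at *; omega) hk
      rw [e1, sZ_false hq (by push_cast at *; omega) (by push_cast at *; omega) hk]
      push_cast at h1 h2 ⊢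
      rw [add_sub_cancel_right, sZ_false hq (by omega) (by omega) hk]
      replace h1 : (a : ℤ) + b = i + j := by omega
      have core := core_UB1 hq0 hq i j b c k (by omega)
      have h0 : 1 - q ^ 2 ≠ 0 := one_sub_pow_ne hq 1
      have hc : q ^ c ≠ 0 := zpow_ne_zero _ hq0
      have hk' : q ^ k ≠ 0 := zpow_ne_zero _ hq0
      simp only [qZ_nat hq0 hq, zpow_out hq0 h1, zpow_add_one₀ hq0, zpow_sub_one₀ hq0, zpow_sub₀ hq0,
        zpow_add₀ hq0, zpow_natCast, qs, zpow_neg, pow_succ q b, Nat.cast_add, Nat.cast_one, Bool.false_eq_true, if_false]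
      field_simp at core ⊢
      linear_combination core
  | true =>
    have hk' : q ^ k ≠ 0 := zpow_ne_zero _ hq0
    rw [sZ_true (by omega) hk, sZ_true (by omega) hk, sZ_true (by omega) hk]
    obtain rfl : c = j + k - b := by omega
    have ha' : a = 0 ∨ a = 1 := by have := ha.1; have := ha.2 rfl; omega
    have hb' : b = 0 ∨ b = 1 := by have := hb.1; have := hb.2 rfl; omega
    have hi' : i = 0 ∨ i = 1 := by have := hi.1; have := hi.2 rfl; omega
    have hj' : j = 0 ∨ j = 1 := by have := hj.1; have := hj.2 rfl; omega
    clear ha hb hi hj h2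
    rcases ha' with rfl | rfl <;> rcases hb' with rfl | rfl <;> rcases hi' with rfl | rfl <;>
      rcases hj' with rfl | rfl <;>
      simp [lc, qZ_zero, qZ_one hq0 hq, qs, zpow_add₀ hq0, zpow_sub₀ hq0] at h1 ⊢ <;>
      field_simp <;> ring_nf

/-- Contiguity lowering `b` on the output side. -/
theorem sZ_PB2 (hq0 : q ≠ 0) (hq : ∀ k : ℕ, k ≠ 0 → q ^ k ≠ 1) {e : Bool} {a b c i j k : ℤ}
    (ha : In e a) (hb : In e b) (hi : In e i) (hj : In e j) (hk : 0 ≤ k) :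
    sZ q e a (b - 1) c i j k
      = sZ q e a b c (i + 1) j (k + 1) - q * q ^ k * qs q e ^ i * sZ q e a b c i (j + 1) k := by
  by_cases h : a + b = i + j + 1 ∧ b + c = j + 1 + k
  swap
  · rw [sZ_cons (by omega), sZ_cons (by omega), sZ_cons (by omega)]; ring
  obtain ⟨h1, h2⟩ := h
  cases e with
  | false =>
    lift a to ℕ using ha.1
    lift b to ℕ using hb.1
    lift i to ℕ using hi.1
    lift j to ℕ using hj.1
    cases b with
    | zero =>
      rw [sZ_neg (b := ((0 : ℕ) : ℤ) - 1) (by omega)]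
      have e1 : sZ q false a (0 : ℕ) c (i + 1) j (k + 1) = rcore q (i + 1) j 0 c (k + 1) := by
        exact_mod_cast sZ_false (a := a) (i := i + 1) hq (by push_cast at *; omega)
          (by push_cast at *; omega) (by omega)
      have e2 : sZ q false a (0 : ℕ) c i (j + 1) k = rcore q i (j + 1) 0 c k := by
        exact_mod_cast sZ_false (a := a) (j := j + 1) hq (by push_cast at *; omega)
          (by push_cast at *; omega) hk
      obtain rfl : c = j + 1 + k := by push_cast at h2; omega
      rw [e1, e2, rcore_zero hq, rcore_zero hq]
      simp only [qs, Bool.false_eq_true, if_false, mul_assoc, ← zpow_add₀ hq0, ← zpow_one_add₀ hq0]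
      push_cast
      ring_nf
    | succ b =>
      have e1 : sZ q false a (b + 1 : ℕ) c (i + 1) j (k + 1) = rcore q (i + 1) j (b + 1) c (k + 1) := by
        exact_mod_cast sZ_false (a := a) (b := b + 1) (i := i + 1) hq (by push_cast at *; omega)
          (by push_cast at *; omega) (by omega)
      have e2 : sZ q false a (b + 1 : ℕ) c i (j + 1) k = rcore q i (j + 1) (b + 1) c k := by
        exact_mod_cast sZ_false (a := a) (b := b + 1) (j := j + 1) hq (by push_cast at *; omega)
          (by push_cast at *; omega) hk
      rw [e1, e2]
      push_cast at h1 h2 ⊢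
      rw [add_sub_cancel_right, sZ_false hq (by omega) (by omega) hk]
      replace h1 : (a : ℤ) + b = i + j := by omega
      have core := core_PB2 hq0 hq i j b c k (by omega)
      have h0 : 1 - q ^ 2 ≠ 0 := one_sub_pow_ne hq 1
      have hc : q ^ c ≠ 0 := zpow_ne_zero _ hq0
      have hk' : q ^ k ≠ 0 := zpow_ne_zero _ hq0
      simp only [qZ_nat hq0 hq, zpow_out hq0 h1, zpow_add_one₀ hq0, zpow_sub_one₀ hq0, zpow_sub₀ hq0,
        zpow_add₀ hq0, zpow_natCast, qs, zpow_neg, pow_succ q b, Nat.cast_add, Nat.cast_one, Bool.false_eq_true, if_false]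
      field_simp at core ⊢
      linear_combination core
  | true =>
    have hk' : q ^ k ≠ 0 := zpow_ne_zero _ hq0
    rw [sZ_true (by omega) hk, sZ_true (by omega) (by omega), sZ_true (by omega) hk]
    obtain rfl : c = j + 1 + k - b := by omega
    have ha' : a = 0 ∨ a = 1 := by have := ha.1; have := ha.2 rfl; omega
    have hb' : b = 0 ∨ b = 1 := by have := hb.1; have := hb.2 rfl; omega
    have hi' : i = 0 ∨ i = 1 := by have := hi.1; have := hi.2 rfl; omega
    have hj' : j = 0 ∨ j = 1 := by have := hj.1; have := hj.2 rfl; omega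
    clear ha hb hi hj h2
    rcases ha' with rfl | rfl <;> rcases hb' with rfl | rfl <;> rcases hi' with rfl | rfl <;>
      rcases hj' with rfl | rfl <;>
      simp [lc, qZ_zero, qZ_one hq0 hq, qs, zpow_add₀ hq0, zpow_sub₀ hq0] at h1 ⊢ <;>
      field_simp <;> ring_nf

/-- Contiguity lowering `a` on the output side. -/
theorem sZ_PB1 (hq0 : q ≠ 0) (hq : ∀ k : ℕ, k ≠ 0 → q ^ k ≠ 1) {e : Bool} {a b c i j k : ℤ}
    (ha : In e a) (hb : In e b) (hi : In e i) (hj : In e j) :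
    qs q e ^ b * sZ q e (a - 1) b c i j k
      = q ^ k * sZ q e a b c (i + 1) j k
        + qs q e ^ i * ((1 - (q ^ k) ^ 2) * sZ q e a b c i (j + 1) (k - 1)) := by
  rcases lt_or_ge k 0 with hk | hk
  · rw [sZ_neg (by omega), sZ_neg (by omega), sZ_neg (by omega)]; ring
  by_cases h : a + b = i + j + 1 ∧ b + c = j + k
  swap
  · rw [sZ_cons (by omega), sZ_cons (by omega), sZ_cons (by omega)]; ring
  obtain ⟨h1, h2⟩ := h
  cases e with
  | false =>
    lift a to ℕ using ha.1
    lift b to ℕ using hb.1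
    lift i to ℕ using hi.1
    lift j to ℕ using hj.1
    have e1 : sZ q false a b c (i + 1) j k = rcore q (i + 1) j b c k := by
      exact_mod_cast sZ_false (a := a) (i := i + 1) hq (by push_cast at *; omega)
        (by push_cast at *; omega) hk
    have e2 : (1 - (q ^ k) ^ 2) * sZ q false a b c i (j + 1) (k - 1)
        = (1 - (q ^ k) ^ 2) * rcore q i (j + 1) b c (k - 1) := by
      exact_mod_cast sZ_false_pred (a := a) (j := j + 1) hq (by push_cast at *; omega)
        (by push_cast at *; omega) hk
    rw [e1, e2, sZ_false hq (by omega) (by omega) hk]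
    have core := core_PB1 hq0 hq i j b c k (by omega)
    have h0 : 1 - q ^ 2 ≠ 0 := one_sub_pow_ne hq 1
    have hc : q ^ c ≠ 0 := zpow_ne_zero _ hq0
    have hk' : q ^ k ≠ 0 := zpow_ne_zero _ hq0
    simp only [qZ_nat hq0 hq, zpow_out hq0 h1, zpow_add_one₀ hq0, zpow_sub_one₀ hq0, zpow_sub₀ hq0,
      zpow_add₀ hq0, zpow_natCast, qs, zpow_neg, pow_succ q b, Nat.cast_add, Nat.cast_one, Bool.false_eq_true, if_false]
    field_simp at core ⊢
    linear_combination core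
  | true =>
    have hk' : q ^ k ≠ 0 := zpow_ne_zero _ hq0
    rw [sZ_true (by omega) hk, sZ_true (by omega) hk, sZ_true_pred (by omega) hk]
    obtain rfl : c = j + k - b := by omega
    have ha' : a = 0 ∨ a = 1 := by have := ha.1; have := ha.2 rfl; omega
    have hb' : b = 0 ∨ b = 1 := by have := hb.1; have := hb.2 rfl; omega
    have hi' : i = 0 ∨ i = 1 := by have := hi.1; have := hi.2 rfl; omega
    have hj' : j = 0 ∨ j = 1 := by have := hj.1; have := hj.2 rfl; omega
    clear ha hb hi hj h2
    rcases ha' with rfl | rfl <;> rcases hb' with rfl | rfl <;> rcases hi' with rfl | rfl <;>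
      rcases hj' with rfl | rfl <;>
      simp [lc, qZ_zero, qZ_one hq0 hq, qs, zpow_add₀ hq0, zpow_sub₀ hq0] at h1 ⊢ <;>
      field_simp <;> ring_nf

/-- Contiguity raising `b` on the output side. -/
theorem sZ_PA2 (hq0 : q ≠ 0) (hq : ∀ k : ℕ, k ≠ 0 → q ^ k ≠ 1) {e : Bool} {a b c i j k : ℤ}
    (ha : In e a) (hb : In e b) (hi : In e i) (hj : In e j) :
    qZ q (b + 1) * (qs q e ^ b * sZ q e a (b + 1) c i j k)
      = qs q e ^ (i - 1) * (qZ q i * ((1 - (q ^ k) ^ 2) * sZ q e a b c (i - 1) j (k - 1)))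
        - q * q ^ k * qs q e ^ (i + j - 1) * (qZ q j * sZ q e a b c i (j - 1) k) := by
  rcases lt_or_ge k 0 with hk | hk
  · rw [sZ_neg (by omega), sZ_neg (by omega), sZ_neg (by omega)]; ring
  by_cases h : a + 1 + b = i + j ∧ b + 1 + c = j + k
  swap
  · rw [sZ_cons (by omega), sZ_cons (by omega), sZ_cons (by omega)]; ring
  obtain ⟨h1, h2⟩ := h
  cases e with
  | false =>
    lift a to ℕ using ha.1
    lift b to ℕ using hb.1
    lift i to ℕ using hi.1
    lift j to ℕ using hj.1
    have e3 : sZ q false a (b + 1) c i j k = rcore q i j (b + 1) c k := by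
      exact_mod_cast sZ_false (a := a) (b := b + 1) hq (by push_cast; omega) (by push_cast; omega) hk
    rw [e3, sZ_false_ipred hq (by omega) (by omega) hk, sZ_false_j hq (by omega) (by omega) hk]
    have core := core_PA2 hq0 hq i j b c k (by omega)
    have h0 : 1 - q ^ 2 ≠ 0 := one_sub_pow_ne hq 1
    have hc : q ^ c ≠ 0 := zpow_ne_zero _ hq0
    have hk' : q ^ k ≠ 0 := zpow_ne_zero _ hq0
    simp only [qZ_nat hq0 hq, zpow_out hq0 h1, zpow_add_one₀ hq0, zpow_sub_one₀ hq0, zpow_sub₀ hq0,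
      zpow_add₀ hq0, zpow_natCast, qs, zpow_neg, pow_succ q b, Nat.cast_add, Nat.cast_one, Bool.false_eq_true, if_false]
    field_simp at core ⊢
    linear_combination core
  | true =>
    have hk' : q ^ k ≠ 0 := zpow_ne_zero _ hq0
    rw [sZ_true (by omega) hk, sZ_true_pred (by omega) hk, sZ_true (by omega) hk]
    obtain rfl : c = j + k - b - 1 := by omega
    have ha' : a = 0 ∨ a = 1 := by have := ha.1; have := ha.2 rfl; omega
    have hb' : b = 0 ∨ b = 1 := by have := hb.1; have := hb.2 rfl; omega
    have hi' : i = 0 ∨ i = 1 := by have := hi.1; have := hi.2 rfl; omega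
    have hj' : j = 0 ∨ j = 1 := by have := hj.1; have := hj.2 rfl; omega
    clear ha hb hi hj h2
    rcases ha' with rfl | rfl <;> rcases hb' with rfl | rfl <;> rcases hi' with rfl | rfl <;>
      rcases hj' with rfl | rfl <;>
      simp [lc, qZ_zero, qZ_one hq0 hq, qs, zpow_add₀ hq0, zpow_sub₀ hq0] at h1 ⊢ <;>
      field_simp <;> ring_nf

/-- Contiguity raising `a` on the output side. -/
theorem sZ_PA1 (hq0 : q ≠ 0) (hq : ∀ k : ℕ, k ≠ 0 → q ^ k ≠ 1) {e : Bool} {a b c i j k : ℤ}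
    (ha : In e a) (hb : In e b) (hi : In e i) (hj : In e j) (hk : 0 ≤ k) :
    qZ q (a + 1) * sZ q e (a + 1) b c i j k
      = q ^ k * qs q e ^ (-j) * (qZ q i * sZ q e a b c (i - 1) j k)
        + qZ q j * sZ q e a b c i (j - 1) (k + 1) := by
  by_cases h : a + 1 + b = i + j ∧ b + c = j + k
  swap
  · rw [sZ_cons (by omega), sZ_cons (by omega), sZ_cons (by omega)]; ring
  obtain ⟨h1, h2⟩ := h
  cases e with
  | false =>
    lift a to ℕ using ha.1
    lift b to ℕ using hb.1
    lift i to ℕ using hi.1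
    lift j to ℕ using hj.1
    rw [sZ_false_i hq (by omega) (by omega) hk, sZ_false_j hq (by omega) (by omega) (by omega),
      sZ_false hq (by omega) (by omega) hk]
    have core := core_PA1 hq0 hq i j b c k (by omega)
    have h0 : 1 - q ^ 2 ≠ 0 := one_sub_pow_ne hq 1
    have hc : q ^ c ≠ 0 := zpow_ne_zero _ hq0
    have hk' : q ^ k ≠ 0 := zpow_ne_zero _ hq0
    simp only [qZ_nat hq0 hq, zpow_out hq0 h1, zpow_add_one₀ hq0, zpow_sub_one₀ hq0, zpow_sub₀ hq0,
      zpow_add₀ hq0, zpow_natCast, qs, zpow_neg, pow_succ q b, Nat.cast_add, Nat.cast_one, Bool.false_eq_true, if_false]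
    field_simp at core ⊢
    linear_combination core
  | true =>
    have hk' : q ^ k ≠ 0 := zpow_ne_zero _ hq0
    rw [sZ_true (by omega) hk, sZ_true (by omega) hk, sZ_true (by omega) (by omega)]
    obtain rfl : c = j + k - b := by omega
    have ha' : a = 0 ∨ a = 1 := by have := ha.1; have := ha.2 rfl; omega
    have hb' : b = 0 ∨ b = 1 := by have := hb.1; have := hb.2 rfl; omega
    have hi' : i = 0 ∨ i = 1 := by have := hi.1; have := hi.2 rfl; omega
    have hj' : j = 0 ∨ j = 1 := by have := hj.1; have := hj.2 rfl; omega
    clear ha hb hi hj h2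
    rcases ha' with rfl | rfl <;> rcases hb' with rfl | rfl <;> rcases hi' with rfl | rfl <;>
      rcases hj' with rfl | rfl <;>
      simp [lc, qZ_zero, qZ_one hq0 hq, qs, zpow_add₀ hq0, zpow_sub₀ hq0] at h1 ⊢ <;>
      field_simp <;> ring_nf

end OneSiteRelations

/-! ### Exchange relations for one or two neighbouring sites -/

section Exchange

variable {q : ℂ}

/-- The weight `(q²;q²)_m / (q;q)_m` attached to the left end, zero for `m < 0`. -/
def w0 (q : ℂ) (m : ℤ) : ℂ :=
  if 0 ≤ m then poch (q ^ 2) (q ^ 2) m.toNat / poch q q m.toNat else 0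

/-- The weight `1 / (q;q)_m` attached to the right end, zero for `m < 0`. -/
def w1 (q : ℂ) (m : ℤ) : ℂ := if 0 ≤ m then 1 / poch q q m.toNat else 0

theorem pochq_succ (x : ℂ) (m : ℕ) : poch x x (m + 1) = poch x x m * (1 - x ^ (m + 1)) := by
  rw [poch, Finset.prod_range_succ, ← poch, pow_succ' x m]

theorem w0_succ (hq : ∀ k : ℕ, k ≠ 0 → q ^ k ≠ 1) {m : ℤ} (hm : 0 ≤ m) :
    w0 q (m + 1) = w0 q m * (1 + q ^ (m + 1)) := by
  lift m to ℕ using hm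
  have h1 := poch_ne hq m
  have h3 : 1 - q ^ (m + 1) ≠ 0 := one_sub_pow_ne hq m
  rw [w0, w0, if_pos (by omega), if_pos (by omega),
    show ((m : ℤ) + 1) = ((m + 1 : ℕ) : ℤ) by push_cast; rfl, Int.toNat_natCast, Int.toNat_natCast,
    zpow_natCast, pochq_succ, pochq_succ, div_mul_eq_mul_div,
    div_eq_div_iff (mul_ne_zero h1 h3) h1, ← pow_mul]
  ring

theorem w0_succ' (hq0 : q ≠ 0) (hq : ∀ k : ℕ, k ≠ 0 → q ^ k ≠ 1) (m : ℤ) :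
    w0 q (m + 1) * (1 - q ^ (m + 1)) = w0 q m * (1 - (q ^ m * q) ^ 2) := by
  rcases lt_or_ge m 0 with hm | hm
  · rcases eq_or_ne m (-1) with rfl | h
    · simp [w0]
    · rw [w0, w0, if_neg (by omega), if_neg (by omega)]; simp
  · rw [w0_succ hq hm, zpow_add_one₀ hq0]; ring

theorem w1_succ (hq : ∀ k : ℕ, k ≠ 0 → q ^ k ≠ 1) (m : ℤ) :
    w1 q m = w1 q (m + 1) * (1 - q ^ (m + 1)) := by
  rcases lt_or_ge m 0 with hm | hm
  · rcases eq_or_ne m (-1) with rfl | h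
    · simp [w1]
    · rw [w1, w1, if_neg (by omega), if_neg (by omega)]; simp
  · lift m to ℕ using hm
    have h1 := poch_ne hq m
    have h3 : 1 - q ^ (m + 1) ≠ 0 := one_sub_pow_ne hq m
    rw [w1, w1, if_pos (by omega), if_pos (by omega),
      show ((m : ℤ) + 1) = ((m + 1 : ℕ) : ℤ) by push_cast; rfl, Int.toNat_natCast,
      Int.toNat_natCast, zpow_natCast, pochq_succ]
    field_simp

/-- The relation `sZ_PA2` in the form used below. -/
theorem sZ_PA2' (hq0 : q ≠ 0) (hq : ∀ k : ℕ, k ≠ 0 → q ^ k ≠ 1) {e : Bool} {a b c i j k : ℤ}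
    (ha : In e a) (hb : In e b) (hi : In e i) (hj : In e j) :
    qs q e ^ (-a) * (qZ q (b + 1) * sZ q e a (b + 1) c i j (k + 1))
      = qs q e ^ (-j) * ((1 - (q ^ k * q) ^ 2) * (qZ q i * sZ q e a b c (i - 1) j k))
        - q * q ^ k * q * (qZ q j * sZ q e a b c i (j - 1) (k + 1)) := by
  by_cases h : a + 1 + b = i + j ∧ b + 1 + c = j + (k + 1)
  swap
  · rw [sZ_cons (by omega), sZ_cons (by omega), sZ_cons (by omega)]; ring
  have h1 := sZ_PA2 (e := e) (c := c) (k := k + 1) hq0 hq ha hb hi hj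
  have hQ := qs_ne hq0 e
  have e1 : qs q e ^ (-a) = qs q e ^ b * qs q e ^ (1 - i - j) := by
    rw [← zpow_add₀ hQ]; congr 1; omega
  have e2 : qs q e ^ (-j) = qs q e ^ (i - 1) * qs q e ^ (1 - i - j) := by
    rw [← zpow_add₀ hQ]; congr 1; omega
  have e3 : qs q e ^ (i + j - 1) * qs q e ^ (1 - i - j) = 1 := by
    rw [← zpow_add₀ hQ, ← zpow_zero (qs q e)]; congr 1; omega
  rw [add_sub_cancel_right, zpow_add_one₀ hq0] at h1
  rw [e1, e2]
  linear_combination qs q e ^ (1 - i - j) * h1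
    - q * q ^ k * q * (qZ q j * sZ q e a b c i (j - 1) (k + 1)) * e3

/-- Exchange relation behind the intertwining property of `e_r`, `0 < r < n`. -/
theorem exch_e (hq0 : q ≠ 0) (hq : ∀ k : ℕ, k ≠ 0 → q ^ k ≠ 1) {e f : Bool}
    {a b i j a' b' i' j' c d y : ℤ}
    (ha : In e a) (hb : In e b) (hi : In e i) (hj : In e j)
    (ha' : In f a') (hb' : In f b') (hi' : In f i') (hj' : In f j') :
    qZ q j * (sZ q e a b c i (j - 1) (y + 1) * sZ q f a' b' (y + 1) i' (j' + 1) d)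
      + qZ q i * (qs q e ^ (-j) * qs q f ^ j') *
        (sZ q e a b c (i - 1) j y * sZ q f a' b' y (i' + 1) j' d)
      = qZ q (a + 1) * (sZ q e (a + 1) b c i j y * sZ q f (a' - 1) b' y i' j' d)
        + qs q e ^ (-a) * qs q f ^ a' * qZ q (b + 1) *
          (sZ q e a (b + 1) c i j (y + 1) * sZ q f a' (b' - 1) (y + 1) i' j' d) := by
  have u1 := sZ_UB2 (e := f) (c := y + 1) (k := d) hq0 hq ha' hb' hi' hj'
  have u2 := sZ_UB1 (e := f) (c := y) (k := d) hq0 hq ha' hb' hi' hj'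
  have p2 := sZ_PA2' (e := e) (c := c) (k := y) hq0 hq ha hb hi hj
  have p1 : sZ q f (a' - 1) b' y i' j' d * (qZ q (a + 1) * sZ q e (a + 1) b c i j y)
      = sZ q f (a' - 1) b' y i' j' d * (q ^ y * qs q e ^ (-j) * (qZ q i * sZ q e a b c (i - 1) j y)
        + qZ q j * sZ q e a b c i (j - 1) (y + 1)) := by
    rcases lt_or_ge y 0 with hy | hy
    · rw [sZ_neg (c := y) (by omega)]; simp
    · rw [sZ_PA1 hq0 hq ha hb hi hj hy]
  rw [add_sub_cancel_right, zpow_add_one₀ hq0] at u1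
  linear_combination (qZ q j * sZ q e a b c i (j - 1) (y + 1)) * u1
    + (qZ q i * qs q e ^ (-j) * sZ q e a b c (i - 1) j y) * u2
    - p1 - (qs q f ^ a' * sZ q f a' (b' - 1) (y + 1) i' j' d) * p2

/-- Exchange relation behind the intertwining property of `f_r`, `0 < r < n`. -/
theorem exch_f (hq0 : q ≠ 0) (hq : ∀ k : ℕ, k ≠ 0 → q ^ k ≠ 1) {e f : Bool}
    {a b i j a' b' i' j' c d y : ℤ}
    (ha : In e a) (hb : In e b) (hi : In e i) (hj : In e j)
    (ha' : In f a') (hb' : In f b') (hi' : In f i') (hj' : In f j') :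
    qZ q i' * (sZ q e a b c (i + 1) j (y + 1) * sZ q f a' b' (y + 1) (i' - 1) j' d)
      + qs q e ^ i * qs q f ^ (-i') * qZ q j' *
        (sZ q e a b c i (j + 1) y * sZ q f a' b' y i' (j' - 1) d)
      = qZ q (b' + 1) * (sZ q e a (b - 1) c i j y * sZ q f a' (b' + 1) y i' j' d)
        + qZ q (a' + 1) * (qs q e ^ b * qs q f ^ (-b')) *
          (sZ q e (a - 1) b c i j (y + 1) * sZ q f (a' + 1) b' (y + 1) i' j' d) := by
  have u1 := sZ_UA1 (e := f) (c := y + 1) (k := d) hq0 hq ha' hb' hi' hj'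
  have u2 := sZ_UA2 (e := f) (c := y) (k := d) hq0 hq ha' hb' hi' hj'
  have p1 := sZ_PB1 (e := e) (c := c) (k := y + 1) hq0 hq ha hb hi hj
  have p2 : sZ q f a' (b' + 1) y i' j' d * sZ q e a (b - 1) c i j y
      = sZ q f a' (b' + 1) y i' j' d * (sZ q e a b c (i + 1) j (y + 1)
        - q * q ^ y * qs q e ^ i * sZ q e a b c i (j + 1) y) := by
    rcases lt_or_ge y 0 with hy | hy
    · rw [sZ_neg (c := y) (by omega)]; simp
    · rw [sZ_PB2 hq0 hq ha hb hi hj hy]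
  have hQ := qs_ne hq0 f
  have e1 : qs q f ^ (-i') * qs q f ^ (i' - b') = qs q f ^ (-b') := by
    rw [← zpow_add₀ hQ]; congr 1; omega
  have e2 : qs q f ^ (-i') * qs q f ^ i' = 1 := by
    rw [← zpow_add₀ hQ, ← zpow_zero (qs q f)]; congr 1; omega
  rw [add_sub_cancel_right, zpow_add_one₀ hq0] at u1 p1
  linear_combination (sZ q e a b c (i + 1) j (y + 1)) * u1
    + (qs q e ^ i * qs q f ^ (-i') * sZ q e a b c i (j + 1) y) * u2
    - (qZ q (a' + 1) * qs q f ^ (-b') * sZ q f (a' + 1) b' (y + 1) i' j' d) * p1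
    - qZ q (b' + 1) * p2
    + qs q e ^ i * sZ q e a b c i (j + 1) y * qZ q (a' + 1) * (1 - (q ^ y * q) ^ 2)
        * sZ q f (a' + 1) b' (y + 1) i' j' d * e1
    - qs q e ^ i * sZ q e a b c i (j + 1) y * q * q ^ y * qZ q (b' + 1)
        * sZ q f a' (b' + 1) y i' j' d * e2

/-- Exchange relation at the left end for `e_0`. -/
theorem exch_e0 (hq0 : q ≠ 0) (hq : ∀ k : ℕ, k ≠ 0 → q ^ k ≠ 1) {p : ℂ} (hp : p ^ 2 * q = -1)
    {e : Bool} {a b i j m d : ℤ} (ha : In e a) (hb : In e b) (hi : In e i) (hj : In e j) :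
    p ^ 2 * (w0 q (m + 1) * sZ q e a b (m + 1) i (j + 1) d)
      + qs q e ^ j * (w0 q m * sZ q e a b m (i + 1) j d)
      = p ^ 2 * (w0 q m * sZ q e (a - 1) b m i j d)
        + qs q e ^ a * (w0 q (m + 1) * sZ q e a (b - 1) (m + 1) i j d) := by
  have u1 := sZ_UB2 (e := e) (c := m + 1) (k := d) hq0 hq ha hb hi hj
  have u2 := sZ_UB1 (e := e) (c := m) (k := d) hq0 hq ha hb hi hj
  have v1 := w0_succ' hq0 hq m
  have v2 : sZ q e (a - 1) b m i j d * w0 q (m + 1)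
      = sZ q e (a - 1) b m i j d * (w0 q m * (1 + q ^ (m + 1))) := by
    rcases lt_or_ge m 0 with hm | hm
    · rw [sZ_neg (c := m) (by omega)]; simp
    · rw [w0_succ hq hm]
  rw [add_sub_cancel_right] at u1
  rw [zpow_add_one₀ hq0] at u1 v1 v2
  linear_combination p ^ 2 * w0 q (m + 1) * u1 + w0 q m * u2 + p ^ 2 * v2
    - qs q e ^ a * sZ q e a (b - 1) (m + 1) i j d * v1
    + (w0 q m * q ^ m * sZ q e (a - 1) b m i j d
      - w0 q (m + 1) * qs q e ^ a * (q ^ m * q) * sZ q e a (b - 1) (m + 1) i j d) * hp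

/-- Exchange relation at the left end for `f_0`. -/
theorem exch_f0 (hq0 : q ≠ 0) (hq : ∀ k : ℕ, k ≠ 0 → q ^ k ≠ 1)
    {e : Bool} {a b i j m d : ℤ} (ha : In e a) (hb : In e b) (hi : In e i) (hj : In e j) :
    qZ q i * (w0 q (m + 1) * sZ q e a b (m + 1) (i - 1) j d)
      + qs q e ^ (-i) * qZ q j * (w0 q m * sZ q e a b m i (j - 1) d)
      = qZ q (b + 1) * (w0 q m * sZ q e a (b + 1) m i j d)
        + qZ q (a + 1) * qs q e ^ (-b) * (w0 q (m + 1) * sZ q e (a + 1) b (m + 1) i j d) := by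
  have u1 := sZ_UA1 (e := e) (c := m + 1) (k := d) hq0 hq ha hb hi hj
  have u2 := sZ_UA2 (e := e) (c := m) (k := d) hq0 hq ha hb hi hj
  have v1 := w0_succ' hq0 hq m
  have v2 : sZ q e a (b + 1) m i j d * w0 q (m + 1)
      = sZ q e a (b + 1) m i j d * (w0 q m * (1 + q ^ (m + 1))) := by
    rcases lt_or_ge m 0 with hm | hm
    · rw [sZ_neg (c := m) (by omega)]; simp
    · rw [w0_succ hq hm]
  have hQ := qs_ne hq0 e
  have e1 : qs q e ^ (-i) * qs q e ^ (i - b) = qs q e ^ (-b) := by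
    rw [← zpow_add₀ hQ]; congr 1; omega
  have e2 : qs q e ^ (-i) * qs q e ^ i = 1 := by
    rw [← zpow_add₀ hQ, ← zpow_zero (qs q e)]; congr 1; omega
  rw [add_sub_cancel_right] at u1
  rw [zpow_add_one₀ hq0] at u1 v1 v2
  linear_combination w0 q (m + 1) * u1 + w0 q m * qs q e ^ (-i) * u2 + qZ q (b + 1) * v2
    - qs q e ^ (-b) * qZ q (a + 1) * sZ q e (a + 1) b (m + 1) i j d * v1
    + w0 q m * qZ q (a + 1) * (1 - (q ^ m * q) ^ 2) * sZ q e (a + 1) b (m + 1) i j d * e1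
    - w0 q m * q * q ^ m * qZ q (b + 1) * sZ q e a (b + 1) m i j d * e2

/-- Exchange relation at the right end for `e_n`. -/
theorem exch_en (hq0 : q ≠ 0) (hq : ∀ k : ℕ, k ≠ 0 → q ^ k ≠ 1) {p : ℂ} (hp : p ^ 2 * q = -1)
    {e : Bool} {a b i j c y : ℤ} (ha : In e a) (hb : In e b) (hi : In e i) (hj : In e j) :
    qZ q j * (w1 q (y + 1) * sZ q e a b c i (j - 1) (y + 1))
      + p ^ 2 * qZ q i * qs q e ^ (-j) * (w1 q y * sZ q e a b c (i - 1) j y)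
      = qZ q (a + 1) * (w1 q y * sZ q e (a + 1) b c i j y)
        + p ^ 2 * qs q e ^ (-a) * qZ q (b + 1) *
          (w1 q (y + 1) * sZ q e a (b + 1) c i j (y + 1)) := by
  have p2 := sZ_PA2' (e := e) (c := c) (k := y) hq0 hq ha hb hi hj
  have p1 : w1 q y * (qZ q (a + 1) * sZ q e (a + 1) b c i j y)
      = w1 q y * (q ^ y * qs q e ^ (-j) * (qZ q i * sZ q e a b c (i - 1) j y)
        + qZ q j * sZ q e a b c i (j - 1) (y + 1)) := by
    rcases lt_or_ge y 0 with hy | hy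
    · simp [w1, not_le.2 hy]
    · rw [sZ_PA1 hq0 hq ha hb hi hj hy]
  have v := w1_succ hq y
  rw [zpow_add_one₀ hq0] at v
  linear_combination -p1 - p ^ 2 * w1 q (y + 1) * p2
    - (qZ q j * sZ q e a b c i (j - 1) (y + 1)) * v
    + (qZ q i * qs q e ^ (-j) * sZ q e a b c (i - 1) j y) * (p ^ 2 - q ^ y) * v
    + (w1 q (y + 1) * qZ q j * sZ q e a b c i (j - 1) (y + 1) * q ^ y * q
       - qZ q i * qs q e ^ (-j) * sZ q e a b c (i - 1) j y * w1 q (y + 1)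
         * (1 - q ^ y * q) * q ^ y) * hp

/-- Exchange relation at the right end for `f_n`. -/
theorem exch_fn (hq0 : q ≠ 0) (hq : ∀ k : ℕ, k ≠ 0 → q ^ k ≠ 1)
    {e : Bool} {a b i j c y : ℤ} (ha : In e a) (hb : In e b) (hi : In e i) (hj : In e j) :
    w1 q (y + 1) * sZ q e a b c (i + 1) j (y + 1)
      + qs q e ^ i * (w1 q y * sZ q e a b c i (j + 1) y)
      = w1 q y * sZ q e a (b - 1) c i j y
        + qs q e ^ b * (w1 q (y + 1) * sZ q e (a - 1) b c i j (y + 1)) := by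
  have p1 := sZ_PB1 (e := e) (c := c) (k := y + 1) hq0 hq ha hb hi hj
  have p2 : w1 q y * sZ q e a (b - 1) c i j y
      = w1 q y * (sZ q e a b c (i + 1) j (y + 1)
        - q * q ^ y * qs q e ^ i * sZ q e a b c i (j + 1) y) := by
    rcases lt_or_ge y 0 with hy | hy
    · simp [w1, not_le.2 hy]
    · rw [sZ_PB2 hq0 hq ha hb hi hj hy]
  have v := w1_succ hq y
  rw [add_sub_cancel_right, zpow_add_one₀ hq0] at p1
  rw [zpow_add_one₀ hq0] at v
  linear_combination -p2 - w1 q (y + 1) * p1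
    + (qs q e ^ i * sZ q e a b c i (j + 1) y * (1 + q ^ y * q)
      - sZ q e a b c (i + 1) j (y + 1)) * v

end Exchange

/-! ### Matrix elements of the boundary solution and their recursions -/

section Entries

variable {q p : ℂ} {n : ℕ} {ε : Fin n → Bool}

/-- The auxiliary occupation numbers `c_t` of the boundary solution: by conservation at every site
they are determined by `c_0 = m` and by `b - j`. -/
def gam (m : ℤ) (b j : Fin n → ℤ) (t : ℕ) : ℤ :=
  m + ∑ u : Fin n, if (u : ℕ) < t then b u - j u else 0

/-- The factor of site `t` in a matrix element. -/
def site (q : ℂ) (ε : Fin n → Bool) (a b i j : Fin n → ℤ) (m : ℤ) (t : Fin n) : ℂ :=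
  sZ q (ε t) (a t) (b t) (gam m b j t) (i t) (j t) (gam m b j (t + 1))

/-- The coefficient of `z^m` in the matrix element `(i, j) → (a, b)` of `S̃₀^{1,1}(z)`, for
arbitrary integer vectors; it vanishes unless these are occupation vectors. -/
def Ec (q p : ℂ) (ε : Fin n → Bool) (a b i j : Fin n → ℤ) (m : ℤ) : ℂ :=
  p ^ (∑ t, j t - ∑ t, a t) * (w0 q m * w1 q (gam m b j n) * ∏ t, site q ε a b i j m t)

theorem dlt_self (t : Fin n) : dlt (t : ℕ) t = 1 := by simp [dlt]

theorem dlt_ne {t s : Fin n} (h : t ≠ s) : dlt (s : ℕ) t = 0 := by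
  simp [dlt, Fin.val_inj, h]

theorem sum_dlt (t : Fin n) : ∑ s : Fin n, dlt (t : ℕ) s = 1 := by
  simp [dlt, Fin.val_inj]

theorem sum_dlt_lt (s : Fin n) (t : ℕ) :
    (∑ u : Fin n, if (u : ℕ) < t then dlt (s : ℕ) u else 0) = if (s : ℕ) < t then 1 else 0 := by
  rw [Finset.sum_eq_single s]
  · simp [dlt_self]
  · intro u _ hu
    simp [dlt_ne hu]
  · simp

theorem gam_zero (m : ℤ) (b j : Fin n → ℤ) : gam m b j 0 = m := by simp [gam]

theorem gam_succ (m : ℤ) (b j : Fin n → ℤ) (t : Fin n) :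
    gam m b j (t + 1) = gam m b j t + (b t - j t) := by
  have h : ∀ u : Fin n, (if (u : ℕ) < t + 1 then b u - j u else 0)
      = (if (u : ℕ) < t then b u - j u else 0) + if u = t then b u - j u else 0 := by
    intro u
    rcases lt_trichotomy (u : ℕ) t with h | h | h
    · simp [h, h.trans (Nat.lt_succ_self _), (Fin.ne_of_lt h)]
    · simp [Fin.ext h]
    · rw [if_neg (by omega), if_neg (by omega), if_neg (Fin.ne_of_gt h), add_zero]
  simp only [gam, h, Finset.sum_add_distrib]
  simp [add_assoc]

theorem gam_add_m (m d : ℤ) (b j : Fin n → ℤ) (t : ℕ) : gam (m + d) b j t = gam m b j t + d := by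
  simp only [gam]; ring

theorem gam_add_b (m : ℤ) (b j : Fin n → ℤ) (s : Fin n) (t : ℕ) :
    gam m (b + dlt (s : ℕ)) j t = gam m b j t + if (s : ℕ) < t then 1 else 0 := by
  rw [gam, gam, ← sum_dlt_lt s, add_assoc, ← Finset.sum_add_distrib]
  congr 1
  refine Finset.sum_congr rfl fun u _ => ?_
  split_ifs <;> simp; ring

theorem gam_sub_b (m : ℤ) (b j : Fin n → ℤ) (s : Fin n) (t : ℕ) :
    gam m (b - dlt (s : ℕ)) j t = gam m b j t - if (s : ℕ) < t then 1 else 0 := by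
  have := gam_add_b m (b - dlt (s : ℕ)) j s t
  rw [sub_add_cancel] at this
  omega

theorem gam_sub_j (m : ℤ) (b j : Fin n → ℤ) (s : Fin n) (t : ℕ) :
    gam m b (j - dlt (s : ℕ)) t = gam m b j t + if (s : ℕ) < t then 1 else 0 := by
  rw [← gam_add_b]
  simp only [gam]
  congr 1
  refine Finset.sum_congr rfl fun u _ => ?_
  split_ifs <;> simp; ring

theorem gam_add_j (m : ℤ) (b j : Fin n → ℤ) (s : Fin n) (t : ℕ) :
    gam m b (j + dlt (s : ℕ)) t = gam m b j t - if (s : ℕ) < t then 1 else 0 := by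
  have := gam_sub_j m b (j + dlt (s : ℕ)) s t
  rw [add_sub_cancel_right] at this
  omega

/-- Splitting off the sites in `T`. -/
theorem Ec_split (T : Finset (Fin n)) (a b i j : Fin n → ℤ) (m : ℤ) :
    Ec q p ε a b i j m = p ^ (∑ t, j t - ∑ t, a t) * (w0 q m * w1 q (gam m b j n) *
      ((∏ t ∈ T, site q ε a b i j m t) * ∏ t ∈ Tᶜ, site q ε a b i j m t)) := by
  rw [Ec, Finset.prod_mul_prod_compl]

/-- The factors outside `T` only depend on the data outside `T`. -/
theorem rest_congr (T : Finset (Fin n)) {a b i j a' b' i' j' : Fin n → ℤ} {m m' : ℤ}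
    (h : ∀ t ∉ T, a' t = a t ∧ b' t = b t ∧ i' t = i t ∧ j' t = j t ∧
      gam m' b' j' t = gam m b j t ∧ gam m' b' j' (t + 1) = gam m b j (t + 1)) :
    ∏ t ∈ Tᶜ, site q ε a' b' i' j' m' t = ∏ t ∈ Tᶜ, site q ε a b i j m t := by
  refine Finset.prod_congr rfl fun t ht => ?_
  obtain ⟨h1, h2, h3, h4, h5, h6⟩ := h t (Finset.mem_compl.1 ht)
  rw [site, site, h1, h2, h3, h4, h5, h6]

/-- Admissible occupation vectors. -/
def Vd (ε : Fin n → Bool) (a : Fin n → ℤ) : Prop := ∀ t, In (ε t) (a t)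

/-- Two sites split off, in a form adapted to shifts at `s` and `t = s + 1`. -/
theorem Ec_two {s t : Fin n} (hst : (t : ℕ) = s + 1) {a b i j a' b' i' j' : Fin n → ℤ} {m x : ℤ}
    (hp : ∑ u, j' u - ∑ u, a' u = ∑ u, j u - ∑ u, a u)
    (h : ∀ u, u ≠ s → u ≠ t → a' u = a u ∧ b' u = b u ∧ i' u = i u ∧ j' u = j u)
    (hx : gam m b' j' t = x)
    (hg : ∀ u : ℕ, u ≠ t → gam m b' j' u = gam m b j u) :
    Ec q p ε a' b' i' j' m = p ^ (∑ u, j u - ∑ u, a u) * (w0 q m * w1 q (gam m b j n) *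
      ∏ u ∈ ({s, t} : Finset (Fin n))ᶜ, site q ε a b i j m u) *
      (sZ q (ε s) (a' s) (b' s) (gam m b j s) (i' s) (j' s) x *
        sZ q (ε t) (a' t) (b' t) x (i' t) (j' t) (gam m b j (t + 1))) := by
  have hne : s ≠ t := by rintro rfl; omega
  rw [Ec_split {s, t}, Finset.prod_pair hne, hp, hg n t.2.ne', rest_congr (a := a) (b := b)
    (i := i) (j := j) (m := m)]
  · rw [site, site, hx, ← hst, hx, hg s (by omega), hg (t + 1) (by omega)]
    ring
  · intro u hu
    simp only [Finset.mem_insert, Finset.mem_singleton, not_or] at hu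
    obtain ⟨h1, h2, h3, h4⟩ := h u hu.1 hu.2
    have e1 : (u : ℕ) ≠ s := fun h => hu.1 (Fin.ext h)
    have e2 : (u : ℕ) ≠ t := fun h => hu.2 (Fin.ext h)
    exact ⟨h1, h2, h3, h4, hg u e2, hg (u + 1) (by omega)⟩

/-- Recursion for the matrix elements coming from `e_r`, `0 < r < n`, where `r` joins the sites `s` and
`t = s + 1`. Only the auxiliary occupation number between the two sites changes, so the remaining
sites contribute a common factor and `exch_e` applies. -/
theorem Ec_e (hq0 : q ≠ 0) (hq : ∀ k : ℕ, k ≠ 0 → q ^ k ≠ 1) {s t : Fin n}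
    (hst : (t : ℕ) = s + 1) {a b i j : Fin n → ℤ} (ha : Vd ε a) (hb : Vd ε b) (hi : Vd ε i)
    (hj : Vd ε j) (m : ℤ) :
    qZ q (j s) * Ec q p ε a b i (j - dlt (s : ℕ) + dlt (t : ℕ)) m
      + qZ q (i s) * (qs q (ε s) ^ (-j s) * qs q (ε t) ^ j t) *
        Ec q p ε a b (i - dlt (s : ℕ) + dlt (t : ℕ)) j m
      = qZ q (a s + 1) * Ec q p ε (a + dlt (s : ℕ) - dlt (t : ℕ)) b i j m
        + qs q (ε s) ^ (-a s) * qs q (ε t) ^ a t * qZ q (b s + 1) *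
          Ec q p ε a (b + dlt (s : ℕ) - dlt (t : ℕ)) i j m := by
  have hne : s ≠ t := by rintro rfl; omega
  have h := exch_e hq0 hq (c := gam m b j s) (d := gam m b j (t + 1)) (y := gam m b j t)
    (ha s) (hb s) (hi s) (hj s) (ha t) (hb t) (hi t) (hj t)
  have hg (u : ℕ) (hu : u ≠ t) : (if (s : ℕ) < u then (1 : ℤ) else 0)
      = if (t : ℕ) < u then 1 else 0 := by split_ifs <;> omega
  have hs : (s : ℕ) < t := by omega
  rw [Ec_two (j' := _ + _) hst (a := a) (b := b) (i := i) (j := j) (x := gam m b j t + 1),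
    Ec_two (i' := _ + _) hst (a := a) (b := b) (i := i) (j := j) (x := gam m b j t),
    Ec_two (a' := _ - _) hst (a := a) (b := b) (i := i) (j := j) (x := gam m b j t),
    Ec_two (b' := _ - _) hst (a := a) (b := b) (i := i) (j := j) (x := gam m b j t + 1)]
  · simp only [Pi.add_apply, Pi.sub_apply, dlt_self, dlt_ne hne, dlt_ne hne.symm, add_zero,
      sub_zero]
    linear_combination (p ^ (∑ u, j u - ∑ u, a u) * (w0 q m * w1 q (gam m b j n) *
      ∏ u ∈ ({s, t} : Finset (Fin n))ᶜ, site q ε a b i j m u)) * h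
  all_goals
    simp +contextual [gam_add_b, gam_sub_b, gam_add_j, gam_sub_j, hs, hg, dlt_ne,
      Finset.sum_add_distrib, Finset.sum_sub_distrib, sum_dlt]

/-- The analogue of `Ec_e` for `f_r`, `0 < r < n`. -/
theorem Ec_f (hq0 : q ≠ 0) (hq : ∀ k : ℕ, k ≠ 0 → q ^ k ≠ 1) {s t : Fin n}
    (hst : (t : ℕ) = s + 1) {a b i j : Fin n → ℤ} (ha : Vd ε a) (hb : Vd ε b) (hi : Vd ε i)
    (hj : Vd ε j) (m : ℤ) :
    qZ q (i t) * Ec q p ε a b (i + dlt (s : ℕ) - dlt (t : ℕ)) j m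
      + qs q (ε s) ^ (i s) * qs q (ε t) ^ (-i t) * qZ q (j t) *
        Ec q p ε a b i (j + dlt (s : ℕ) - dlt (t : ℕ)) m
      = qZ q (b t + 1) * Ec q p ε a (b - dlt (s : ℕ) + dlt (t : ℕ)) i j m
        + qZ q (a t + 1) * (qs q (ε s) ^ (b s) * qs q (ε t) ^ (-b t)) *
          Ec q p ε (a - dlt (s : ℕ) + dlt (t : ℕ)) b i j m := by
  have hne : s ≠ t := by rintro rfl; omega
  have h := exch_f hq0 hq (c := gam m b j s) (d := gam m b j (t + 1)) (y := gam m b j t - 1)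
    (ha s) (hb s) (hi s) (hj s) (ha t) (hb t) (hi t) (hj t)
  have hg (u : ℕ) (hu : u ≠ t) : (if (s : ℕ) < u then (1 : ℤ) else 0)
      = if (t : ℕ) < u then 1 else 0 := by split_ifs <;> omega
  have hs : (s : ℕ) < t := by omega
  rw [sub_add_cancel] at h
  rw [Ec_two (i' := _ - _) hst (a := a) (b := b) (i := i) (j := j) (x := gam m b j t),
    Ec_two (j' := _ - _) hst (a := a) (b := b) (i := i) (j := j) (x := gam m b j t - 1),
    Ec_two (b' := _ + _) hst (a := a) (b := b) (i := i) (j := j) (x := gam m b j t - 1),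
    Ec_two (a' := _ + _) hst (a := a) (b := b) (i := i) (j := j) (x := gam m b j t)]
  · simp only [Pi.add_apply, Pi.sub_apply, dlt_self, dlt_ne hne, dlt_ne hne.symm, add_zero,
      sub_zero]
    linear_combination (p ^ (∑ u, j u - ∑ u, a u) * (w0 q m * w1 q (gam m b j n) *
      ∏ u ∈ ({s, t} : Finset (Fin n))ᶜ, site q ε a b i j m u)) * h
  all_goals
    simp +contextual [gam_add_b, gam_sub_b, gam_add_j, gam_sub_j, hs, hg, dlt_ne,
      Finset.sum_add_distrib, Finset.sum_sub_distrib, sum_dlt]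

end Entries

/-! ### Recursions at the two ends -/

section Ends

variable {q p : ℂ} {n : ℕ} {ε : Fin n → Bool}

/-- The leftmost site split off. -/
theorem Ec_left {o : Fin n} (ho : (o : ℕ) = 0) {a b i j a' b' i' j' : Fin n → ℤ} {m m' x : ℤ}
    (hp : ∑ u, j' u - ∑ u, a' u = x)
    (h : ∀ u, u ≠ o → a' u = a u ∧ b' u = b u ∧ i' u = i u ∧ j' u = j u)
    (hg : ∀ u : ℕ, 0 < u → gam m' b' j' u = gam m b j u) :
    Ec q p ε a' b' i' j' m' = p ^ x * (w1 q (gam m b j n) *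
      ∏ u ∈ ({o} : Finset (Fin n))ᶜ, site q ε a b i j m u) *
      (w0 q m' * sZ q (ε o) (a' o) (b' o) m' (i' o) (j' o) (gam m b j 1)) := by
  have hn : 0 < n := o.pos
  rw [Ec_split {o}, Finset.prod_singleton, hp, hg n hn, rest_congr (a := a) (b := b)
    (i := i) (j := j) (m := m)]
  · rw [site, ho, gam_zero, hg _ (by omega)]
    ring
  · intro u hu
    simp only [Finset.mem_singleton] at hu
    obtain ⟨h1, h2, h3, h4⟩ := h u hu
    have e1 : (u : ℕ) ≠ o := fun h => hu (Fin.ext h)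
    exact ⟨h1, h2, h3, h4, hg u (by omega), hg (u + 1) (by omega)⟩

/-- The rightmost site split off. -/
theorem Ec_right {o : Fin n} (ho : (o : ℕ) + 1 = n) {a b i j a' b' i' j' : Fin n → ℤ} {m x y : ℤ}
    (hp : ∑ u, j' u - ∑ u, a' u = x)
    (h : ∀ u, u ≠ o → a' u = a u ∧ b' u = b u ∧ i' u = i u ∧ j' u = j u)
    (hy : gam m b' j' n = y)
    (hg : ∀ u : ℕ, u < n → gam m b' j' u = gam m b j u) :
    Ec q p ε a' b' i' j' m = p ^ x * (w0 q m *
      ∏ u ∈ ({o} : Finset (Fin n))ᶜ, site q ε a b i j m u) *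
      (w1 q y * sZ q (ε o) (a' o) (b' o) (gam m b j o) (i' o) (j' o) y) := by
  rw [Ec_split {o}, Finset.prod_singleton, hp, hy, rest_congr (a := a) (b := b)
    (i := i) (j := j) (m := m)]
  · rw [site, ho, hy, hg _ (by omega)]
    ring
  · intro u hu
    simp only [Finset.mem_singleton] at hu
    obtain ⟨h1, h2, h3, h4⟩ := h u hu
    have e1 : (u : ℕ) ≠ o := fun h => hu (Fin.ext h)
    exact ⟨h1, h2, h3, h4, hg u (by omega), hg (u + 1) (by omega)⟩

variable {o : Fin n} {a b i j : Fin n → ℤ}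

/-- Recursion for the matrix elements coming from `e_0`. The operator carries a factor `z`, which moves
the index `m` of the coefficient by one. -/
theorem Ec_e0 (hq0 : q ≠ 0) (hq : ∀ k : ℕ, k ≠ 0 → q ^ k ≠ 1) (hp : p ^ 2 * q = -1) (hp0 : p ≠ 0)
    (ho : (o : ℕ) = 0) (ha : Vd ε a) (hb : Vd ε b) (hi : Vd ε i) (hj : Vd ε j) (m : ℤ) :
    Ec q p ε a b i (j + dlt (o : ℕ)) (m + 1)
      + p⁻¹ * qs q (ε o) ^ (j o) * Ec q p ε a b (i + dlt (o : ℕ)) j m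
      = Ec q p ε (a - dlt (o : ℕ)) b i j m
        + p⁻¹ * qs q (ε o) ^ (a o) * Ec q p ε a (b - dlt (o : ℕ)) i j (m + 1) := by
  have h := exch_e0 hq0 hq hp (m := m) (d := gam m b j 1) (ha o) (hb o) (hi o) (hj o)
  have hlt (u : ℕ) (hu : 0 < u) : (o : ℕ) < u := by omega
  set E := ∑ u, j u - ∑ u, a u with hE
  rw [Ec_left (j' := _ + _) ho (a := a) (b := b) (i := i) (j := j) (m := m) (x := E + 1),
    Ec_left (i' := _ + _) ho (a := a) (b := b) (i := i) (j := j) (m := m) (x := E),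
    Ec_left (a' := _ - _) ho (a := a) (b := b) (i := i) (j := j) (m := m) (x := E + 1),
    Ec_left (b' := _ - _) ho (a := a) (b := b) (i := i) (j := j) (m := m) (x := E)]
  · simp only [Pi.add_apply, Pi.sub_apply, dlt_self, zpow_add_one₀ hp0]
    field_simp
    linear_combination (w1 q (gam m b j n) * (∏ u ∈ ({o} : Finset (Fin n))ᶜ, site q ε a b i j m u)) * h
  all_goals
    simp +contextual [gam_add_b, gam_sub_b, gam_add_j, gam_sub_j, gam_add_m, hlt, dlt_ne,
      Finset.sum_add_distrib, Finset.sum_sub_distrib, sum_dlt, hE]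
  all_goals ring

/-- Recursion for the matrix elements coming from `f_0`, which carries a factor `z⁻¹`. -/
theorem Ec_f0 (hq0 : q ≠ 0) (hq : ∀ k : ℕ, k ≠ 0 → q ^ k ≠ 1) (hp0 : p ≠ 0)
    (ho : (o : ℕ) = 0) (ha : Vd ε a) (hb : Vd ε b) (hi : Vd ε i) (hj : Vd ε j) (m : ℤ) :
    qZ q (i o) * Ec q p ε a b (i - dlt (o : ℕ)) j (m + 1)
      + p * qs q (ε o) ^ (-i o) * qZ q (j o) * Ec q p ε a b i (j - dlt (o : ℕ)) m
      = qZ q (b o + 1) * Ec q p ε a (b + dlt (o : ℕ)) i j m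
        + qZ q (a o + 1) * (p * qs q (ε o) ^ (-b o)) *
          Ec q p ε (a + dlt (o : ℕ)) b i j (m + 1) := by
  have h := exch_f0 hq0 hq (m := m) (d := gam m b j 1 + 1) (ha o) (hb o) (hi o) (hj o)
  have hlt (u : ℕ) (hu : 0 < u) : (o : ℕ) < u := by omega
  set E := ∑ u, j u - ∑ u, a u with hE
  rw [Ec_left (j' := _ - _) ho (a := a) (b := b) (i := i) (j := j) (m := m + 1) (x := E - 1),
    Ec_left (i' := _ - _) ho (a := a) (b := b) (i := i) (j := j) (m := m + 1) (x := E),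
    Ec_left (a' := _ + _) ho (a := a) (b := b) (i := i) (j := j) (m := m + 1) (x := E - 1),
    Ec_left (b' := _ + _) ho (a := a) (b := b) (i := i) (j := j) (m := m + 1) (x := E)]
  · simp only [Pi.add_apply, Pi.sub_apply, dlt_self, zpow_sub_one₀ hp0, gam_add_m m 1]
    field_simp
    linear_combination (w1 q (gam m b j n + 1) * (∏ u ∈ ({o} : Finset (Fin n))ᶜ, site q ε a b i j (m + 1) u)) * h
  all_goals
    simp +contextual [gam_add_b, gam_sub_b, gam_add_j, gam_sub_j, gam_add_m, hlt, dlt_ne,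
      Finset.sum_add_distrib, Finset.sum_sub_distrib, sum_dlt, hE]
  all_goals ring

/-- Recursion for the matrix elements coming from `e_n`. -/
theorem Ec_en (hq0 : q ≠ 0) (hq : ∀ k : ℕ, k ≠ 0 → q ^ k ≠ 1) (hp : p ^ 2 * q = -1) (hp0 : p ≠ 0)
    (ho : (o : ℕ) + 1 = n) (ha : Vd ε a) (hb : Vd ε b) (hi : Vd ε i) (hj : Vd ε j) (m : ℤ) :
    qZ q (j o) * Ec q p ε a b i (j - dlt (o : ℕ)) m
      + qZ q (i o) * (p * qs q (ε o) ^ (-j o)) * Ec q p ε a b (i - dlt (o : ℕ)) j m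
      = qZ q (a o + 1) * Ec q p ε (a + dlt (o : ℕ)) b i j m
        + p * qs q (ε o) ^ (-a o) * qZ q (b o + 1) * Ec q p ε a (b + dlt (o : ℕ)) i j m := by
  have h := exch_en hq0 hq hp (c := gam m b j o) (y := gam m b j n) (ha o) (hb o) (hi o) (hj o)
  set E := ∑ u, j u - ∑ u, a u with hE
  have hon : (o : ℕ) < n := o.2
  have hlt (u : ℕ) (hu : u < n) : ¬ ((o : ℕ) < u) := by omega
  rw [Ec_right (j' := _ - _) ho (a := a) (b := b) (i := i) (j := j) (x := E - 1)
      (y := gam m b j n + 1),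
    Ec_right (i' := _ - _) ho (a := a) (b := b) (i := i) (j := j) (x := E) (y := gam m b j n),
    Ec_right (a' := _ + _) ho (a := a) (b := b) (i := i) (j := j) (x := E - 1) (y := gam m b j n),
    Ec_right (b' := _ + _) ho (a := a) (b := b) (i := i) (j := j) (x := E)
      (y := gam m b j n + 1)]
  · simp only [Pi.add_apply, Pi.sub_apply, dlt_self, zpow_sub_one₀ hp0]
    field_simp
    linear_combination (w0 q m * (∏ u ∈ ({o} : Finset (Fin n))ᶜ, site q ε a b i j m u)) * h
  all_goals
    simp +contextual [gam_add_b, gam_sub_b, gam_add_j, gam_sub_j, hlt, hon, dlt_ne,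
      Finset.sum_add_distrib, Finset.sum_sub_distrib, sum_dlt, hE]
  all_goals ring

/-- Recursion for the matrix elements coming from `f_n`. -/
theorem Ec_fn (hq0 : q ≠ 0) (hq : ∀ k : ℕ, k ≠ 0 → q ^ k ≠ 1) (hp0 : p ≠ 0)
    (ho : (o : ℕ) + 1 = n) (ha : Vd ε a) (hb : Vd ε b) (hi : Vd ε i) (hj : Vd ε j) (m : ℤ) :
    Ec q p ε a b (i + dlt (o : ℕ)) j m
      + p⁻¹ * qs q (ε o) ^ (i o) * Ec q p ε a b i (j + dlt (o : ℕ)) m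
      = Ec q p ε a (b - dlt (o : ℕ)) i j m
        + p⁻¹ * qs q (ε o) ^ (b o) * Ec q p ε (a - dlt (o : ℕ)) b i j m := by
  have h := exch_fn hq0 hq (c := gam m b j o) (y := gam m b j n - 1) (ha o) (hb o) (hi o) (hj o)
  rw [sub_add_cancel] at h
  set E := ∑ u, j u - ∑ u, a u with hE
  have hon : (o : ℕ) < n := o.2
  have hlt (u : ℕ) (hu : u < n) : ¬ ((o : ℕ) < u) := by omega
  rw [Ec_right (j' := _ + _) ho (a := a) (b := b) (i := i) (j := j) (x := E + 1)
      (y := gam m b j n - 1),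
    Ec_right (i' := _ + _) ho (a := a) (b := b) (i := i) (j := j) (x := E) (y := gam m b j n),
    Ec_right (a' := _ - _) ho (a := a) (b := b) (i := i) (j := j) (x := E + 1) (y := gam m b j n),
    Ec_right (b' := _ - _) ho (a := a) (b := b) (i := i) (j := j) (x := E)
      (y := gam m b j n - 1)]
  · simp only [Pi.add_apply, Pi.sub_apply, dlt_self, zpow_add_one₀ hp0]
    field_simp
    linear_combination (w0 q m * (∏ u ∈ ({o} : Finset (Fin n))ᶜ, site q ε a b i j m u)) * h
  all_goals
    simp +contextual [gam_add_b, gam_sub_b, gam_add_j, gam_sub_j, hlt, hon, dlt_ne,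
      Finset.sum_add_distrib, Finset.sum_sub_distrib, sum_dlt, hE]
  all_goals ring

end Ends

/-! ### Shift operators and their matrix elements -/

section Shift

variable {n : ℕ} {ε : Fin n → Bool}

/-- A basis label as an integer vector. -/
def tz (x : Idx ε) : Fin n → ℤ := fun t => (x.1 t : ℤ)

theorem tz_inj {x y : Idx ε} (h : tz x = tz y) : x = y :=
  Subtype.ext (funext fun t => Nat.cast_injective (congrFun h t))

theorem tz_eq_iff {x y : Idx ε} : tz x = tz y ↔ x = y := ⟨tz_inj, fun h => h ▸ rfl⟩

theorem Vd_tz (x : Idx ε) : Vd ε (tz x) := fun t =>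
  ⟨Nat.cast_nonneg _, fun h => by have := x.2 t h; simp only [tz]; exact_mod_cast this⟩

theorem Vd_iff (m : Fin n → ℤ) :
    ((∀ t, 0 ≤ m t) ∧ Ok ε (fun t => (m t).toNat)) ↔ Vd ε m := by
  constructor
  · rintro ⟨h1, h2⟩ t
    exact ⟨h1 t, fun h => by have := h2 t h; simp only at this; omega⟩
  · intro h
    exact ⟨fun t => (h t).1, fun t ht => by have := (h t).2 ht; simp only; omega⟩

theorem Vd_exists {m : Fin n → ℤ} (h : Vd ε m) : ∃ x : Idx ε, tz x = m := by
  have h' := (Vd_iff m).2 h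
  exact ⟨⟨fun t => (m t).toNat, h'.2⟩, funext fun t => Int.toNat_of_nonneg (h'.1 t)⟩

theorem ket_tz (x : Idx ε) : ket K ε (tz x) = Finsupp.single x 1 := by
  rw [ket, dif_pos ((Vd_iff _).2 (Vd_tz x))]
  rfl

theorem ket_not {m : Fin n → ℤ} (h : ¬Vd ε m) : ket K ε m = 0 := by
  rw [ket, dif_neg fun h' => h ((Vd_iff _).1 h')]

theorem kk_tz (x y : Idx ε) : kk K ε (tz x) (tz y) = Finsupp.single (x, y) 1 := by
  rw [kk, dif_pos ⟨(Vd_iff _).2 (Vd_tz x), (Vd_iff _).2 (Vd_tz y)⟩]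
  rfl

theorem kk_not {u v : Fin n → ℤ} (h : ¬(Vd ε u ∧ Vd ε v)) : kk K ε u v = 0 := by
  rw [kk, dif_neg fun h' => h ⟨(Vd_iff _).1 h'.1, (Vd_iff _).1 h'.2⟩]

theorem mkEnd_single {α : Type} (v : α → (α →₀ K)) (x : α) :
    mkEnd K v (Finsupp.single x 1) = v x := by
  simp [mkEnd]

theorem single_eq {α : Type} (x : α) (c : K) :
    Finsupp.single x c = c • Finsupp.single x (1 : K) := by
  rw [Finsupp.smul_single, smul_eq_mul, mul_one]

theorem tens_smul_ket (c d : K) (u v : Fin n → ℤ) :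
    tens K (c • ket K ε u) (d • ket K ε v) = (c * d) • kk K ε u v := by
  by_cases hu : Vd ε u
  · by_cases hv : Vd ε v
    · obtain ⟨x, rfl⟩ := Vd_exists hu
      obtain ⟨y, rfl⟩ := Vd_exists hv
      rw [ket_tz, ket_tz, kk_tz, Finsupp.smul_single, Finsupp.smul_single, Finsupp.smul_single,
        tens, Finsupp.sum_single_index, Finsupp.sum_single_index]
      · simp
      · simp
      · simp
    · rw [ket_not hv, kk_not fun h => hv h.2, smul_zero, smul_zero]
      simp [tens]
  · rw [ket_not hu, kk_not fun h => hu h.1, smul_zero, smul_zero]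
    simp [tens]

/-- The coordinate functional of `|a⟩ ⊗ |b⟩`, zero if `(a, b)` is not a pair of labels. -/
def ev (ε : Fin n → Bool) (a b : Fin n → ℤ) : WW K ε →ₗ[K] K :=
  Finsupp.lsum K fun xy : Idx ε × Idx ε =>
    LinearMap.toSpanSingleton K K (if tz xy.1 = a ∧ tz xy.2 = b then 1 else 0)

theorem ev_single (a b : Fin n → ℤ) (x y : Idx ε) :
    ev ε a b (Finsupp.single (x, y) 1) = if tz x = a ∧ tz y = b then 1 else 0 := by
  simp [ev]

theorem ev_tz (x y : Idx ε) (v : WW K ε) : ev ε (tz x) (tz y) v = v (x, y) := by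
  induction v using Finsupp.induction_linear with
  | zero => simp
  | add f g hf hg => rw [map_add, hf, hg, Finsupp.add_apply]
  | single a c =>
    obtain ⟨a, b⟩ := a
    rw [single_eq, map_smul, ev_single, Finsupp.smul_apply]
    classical
    simp only [tz_eq_iff, Finsupp.single_apply, Prod.mk.injEq]

theorem ev_ext {v w : WW K ε} (h : ∀ a b, Vd ε a → Vd ε b → ev ε a b v = ev ε a b w) : v = w := by
  ext1 ⟨x, y⟩
  rw [← ev_tz, ← ev_tz, h _ _ (Vd_tz x) (Vd_tz y)]

theorem ev_kk (a b u v : Fin n → ℤ) (ha : Vd ε a) (hb : Vd ε b) :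
    ev ε a b (kk K ε u v) = if u = a ∧ v = b then 1 else 0 := by
  by_cases h : Vd ε u ∧ Vd ε v
  · obtain ⟨x, rfl⟩ := Vd_exists h.1
    obtain ⟨y, rfl⟩ := Vd_exists h.2
    rw [kk_tz, ev_single]
  · rw [kk_not h, map_zero, if_neg]
    rintro ⟨rfl, rfl⟩
    exact h ⟨ha, hb⟩

theorem ev_not {a b : Fin n → ℤ} (h : ¬(Vd ε a ∧ Vd ε b)) (v : WW K ε) : ev ε a b v = 0 := by
  induction v using Finsupp.induction_linear with
  | zero => simp
  | add f g hf hg => rw [map_add, hf, hg, add_zero]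
  | single a c =>
    obtain ⟨x, y⟩ := a
    rw [single_eq, map_smul, ev_single, if_neg, smul_eq_mul, mul_zero]
    rintro ⟨rfl, rfl⟩
    exact h ⟨Vd_tz x, Vd_tz y⟩

/-- `A` maps every `|m⟩` to `α(m)|m + σ⟩`. -/
def IsSh (A : W K ε →ₗ[K] W K ε) (α : (Fin n → ℤ) → K) (σ : Fin n → ℤ) : Prop :=
  ∀ x : Idx ε, A (Finsupp.single x 1) = α (tz x) • ket K ε (tz x + σ)

theorem isSh_id : IsSh (ε := ε) LinearMap.id (fun _ => 1) 0 := fun x => by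
  simp [ket_tz]

variable {A B : W K ε →ₗ[K] W K ε} {α β : (Fin n → ℤ) → K} {σ τ : Fin n → ℤ}

theorem opT_single (hA : IsSh A α σ) (hB : IsSh B β τ) (x y : Idx ε) :
    opT K A B (Finsupp.single (x, y) 1)
      = (α (tz x) * β (tz y)) • kk K ε (tz x + σ) (tz y + τ) := by
  rw [opT, mkEnd_single, hA, hB, tens_smul_ket]

/-- The transpose of a product of shift operators. -/
theorem ev_opT (hA : IsSh A α σ) (hB : IsSh B β τ) {a b : Fin n → ℤ} (ha : Vd ε a) (hb : Vd ε b)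
    (v : WW K ε) :
    ev ε a b (opT K A B v) = α (a - σ) * β (b - τ) * ev ε (a - σ) (b - τ) v := by
  induction v using Finsupp.induction_linear with
  | zero => simp
  | add f g hf hg => rw [map_add, map_add, map_add, hf, hg, mul_add]
  | single w c =>
    obtain ⟨x, y⟩ := w
    rw [single_eq, map_smul, map_smul, map_smul,
      opT_single hA hB, map_smul, ev_kk _ _ _ _ ha hb, ev_single]
    simp only [eq_sub_iff_add_eq]
    split_ifs with h
    · rw [← h.1, ← h.2, add_sub_cancel_right, add_sub_cancel_right, smul_eq_mul, smul_eq_mul]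
      ring
    · simp

end Shift

/-! ### Laurent series -/

section Laurent

theorem coeff_mkS (f : ℕ → ℂ) (m : ℕ) : (mkS f).coeff (m : ℤ) = f m := by
  rw [mkS]
  erw [HahnSeries.ofPowerSeries_apply_coeff]
  simp

theorem coeff_mkS_neg (f : ℕ → ℂ) {m : ℤ} (h : m < 0) : (mkS f).coeff m = 0 := by
  rw [mkS, HahnSeries.ofPowerSeries_apply, HahnSeries.embDomain_of_notMem_range]
  rintro ⟨k, hk⟩
  simp at hk
  omega

theorem coeff_cK_mul (c : ℂ) (f : K) (m : ℤ) : (cK c * f).coeff m = c * f.coeff m := by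
  rw [cK, HahnSeries.C_mul_eq_smul]
  rfl

theorem zK_eq : zK = HahnSeries.single (1 : ℤ) (1 : ℂ) := by
  ext m
  rcases lt_or_ge m 0 with h | h
  · rw [zK, coeff_mkS_neg _ h, HahnSeries.coeff_single_of_ne (by omega)]
  · lift m to ℕ using h
    rw [zK, coeff_mkS, HahnSeries.coeff_single]
    simp

theorem zK_inv : zK⁻¹ = HahnSeries.single (-1 : ℤ) (1 : ℂ) := by
  rw [zK_eq, inv_eq_iff_eq_inv, eq_comm, inv_eq_of_mul_eq_one_right]
  rw [HahnSeries.single_mul_single]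
  simp

theorem zK_ne : zK ≠ 0 := by
  rw [zK_eq]; simp

theorem coeff_zK_mul (f : K) (m : ℤ) : (zK * f).coeff (m + 1) = f.coeff m := by
  rw [zK_eq, HahnSeries.coeff_single_mul_add, one_mul]

theorem coeff_zKinv_mul (f : K) (m : ℤ) : (zK⁻¹ * f).coeff m = f.coeff (m + 1) := by
  have := HahnSeries.coeff_single_mul_add (r := (1 : ℂ)) (x := f) (a := m + 1) (b := -1)
  rw [add_neg_cancel_right, one_mul] at this
  rw [zK_inv, this]

end Laurent

/-! ### Matrix elements of `S̃₀^{1,1}(z)` -/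

section Matrix

variable {q p : ℂ} {n : ℕ} {ε : Fin n → Bool}

theorem sZ_out {e : Bool} {a b c i j k : ℤ} (h : ¬(In e a ∧ In e b ∧ In e i ∧ In e j)) :
    sZ q e a b c i j k = 0 := by
  cases e with
  | false =>
    refine sZ_neg ?_
    simp only [In, Bool.false_eq_true, false_imp_iff, and_true] at h
    omega
  | true =>
    rw [sZ]
    split_ifs with h'
    · simp only [In, forall_true_left] at h
      simp only [Sg, if_true, L3]
      repeat rw [if_neg (by omega)]
    · rfl

theorem Ec_out {a b i j : Fin n → ℤ} (h : ¬(Vd ε a ∧ Vd ε b ∧ Vd ε i ∧ Vd ε j)) (m : ℤ) :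
    Ec q p ε a b i j m = 0 := by
  have : ∃ t, ¬(In (ε t) (a t) ∧ In (ε t) (b t) ∧ In (ε t) (i t) ∧ In (ε t) (j t)) := by
    by_contra! h'
    exact h ⟨fun t => (h' t).1, fun t => (h' t).2.1, fun t => (h' t).2.2.1, fun t => (h' t).2.2.2⟩
  obtain ⟨t, ht⟩ := this
  rw [Ec, Finset.prod_eq_zero (Finset.mem_univ t) (sZ_out ht), mul_zero, mul_zero]

theorem Ec_not_cons {a b i j : Fin n → ℤ} (h : a + b ≠ i + j) (m : ℤ) :
    Ec q p ε a b i j m = 0 := by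
  obtain ⟨t, ht⟩ := Function.ne_iff.1 h
  rw [Ec, Finset.prod_eq_zero (Finset.mem_univ t) (sZ_cons fun h' => ht h'.1), mul_zero, mul_zero]

theorem Ec_neg {a b i j : Fin n → ℤ} {m : ℤ} (h : m < 0) : Ec q p ε a b i j m = 0 := by
  rw [Ec, w0, if_neg (by omega), zero_mul, zero_mul, mul_zero]

/-- Only the configuration `c_t = gam t` contributes to the sum over auxiliary occupation
numbers. -/
theorem bdCoef_eq (a b i j : Fin n → ℕ) (m : ℕ) :
    bdCoef q ε a b i j m = w0 q m * w1 q (gam m (fun t => b t) (fun t => j t) n) *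
      ∏ t, site q ε (fun t => a t) (fun t => b t) (fun t => i t) (fun t => j t) m t := by
  set g : ℕ → ℤ := gam m (fun t => (b t : ℤ)) (fun t => (j t : ℤ)) with hg
  -- a nonzero term forces `c = g`
  have key : ∀ c : Fin (n + 1) → ℕ, c 0 = m →
      ∏ t : Fin n, Sg q (ε t) (a t) (b t) (c t.castSucc) (i t) (j t) (c t.succ) ≠ 0 →
      ∀ t : Fin (n + 1), (c t : ℤ) = g t := by
    intro c hc hprod t
    induction t using Fin.induction with
    | zero => simp [hg, gam_zero, hc]
    | succ t ih =>
      have h := Finset.prod_ne_zero_iff.1 hprod t (Finset.mem_univ t)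
      have h' := (not_not.1 fun h' => h (Sg_cons h')).2
      have e : g (t.succ : Fin (n + 1)) = g t + ((b t : ℤ) - j t) := by
        rw [Fin.val_succ, hg, gam_succ]
      rw [Fin.val_castSucc] at ih
      rw [e, ← ih]
      omega
  rw [bdCoef]
  by_cases hpos : ∀ t : Fin (n + 1), 0 ≤ g t
  · have hc0 (t : Fin (n + 1)) : ((g t).toNat : ℤ) = g t := Int.toNat_of_nonneg (hpos t)
    rw [finsum_eq_single _ fun t : Fin (n + 1) => (g t).toNat]
    · rw [if_pos (by simp [hg, gam_zero])]
      have hn := hpos (Fin.last n)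
      rw [Fin.val_last] at hn
      simp only [Fin.val_last]
      rw [w0, if_pos (by omega), w1, if_pos hn, Int.toNat_natCast]
      have hs : ∀ t : Fin n, site q ε (fun t => a t) (fun t => b t) (fun t => i t)
          (fun t => j t) m t = Sg q (ε t) (a t) (b t) (g t.castSucc).toNat (i t) (j t)
            (g t.succ).toNat := by
        intro t
        have h1 := hpos t.castSucc
        have h2 := hpos t.succ
        rw [Fin.val_castSucc] at h1 ⊢
        rw [Fin.val_succ] at h2 ⊢
        rw [site, sZ, if_pos ⟨by omega, by omega, h1, by omega, by omega, h2⟩]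
        simp only [Int.toNat_natCast]
        rfl
      rw [Finset.prod_congr rfl fun t _ => hs t]
      simp only [Fin.val_castSucc, Fin.val_succ]
      ring
    · intro c hc
      split_ifs with h0
      · by_contra hne
        refine hc (funext fun t => ?_)
        have := key c h0 (right_ne_zero_of_mul hne) t
        omega
      · rfl
  · push Not at hpos
    obtain ⟨t, ht⟩ := hpos
    rw [finsum_eq_zero_of_forall_eq_zero]
    · symm
      rcases Fin.eq_castSucc_or_eq_last t with ⟨s, rfl⟩ | rfl
      · rw [Finset.prod_eq_zero (Finset.mem_univ s), mul_zero]
        exact sZ_neg (Or.inr (Or.inr (Or.inl ht)))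
      · rw [Fin.val_last] at ht
        rw [w1, if_neg (by omega), mul_zero, zero_mul]
    · intro c
      split_ifs with h0
      · by_contra hne
        have := key c h0 (right_ne_zero_of_mul hne) t
        omega
      · rfl

/-- The matrix element `(i, j) → (a, b)` of `S̃₀^{1,1}(z)`. -/
def ent (q p : ℂ) (ε : Fin n → Bool) (a b i j : Fin n → ℤ) : K := mkS fun m => Ec q p ε a b i j m

theorem coeff_ent (a b i j : Fin n → ℤ) (m : ℤ) :
    (ent q p ε a b i j).coeff m = Ec q p ε a b i j m := by
  rcases lt_or_ge m 0 with h | h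
  · rw [ent, coeff_mkS_neg _ h, Ec_neg h]
  · lift m to ℕ using h
    rw [ent, coeff_mkS]

theorem isSh_Kdiag (s : ℤ) :
    IsSh (Kdiag p ε s) (fun m => cK (p ^ (s * ∑ t, m t))) 0 := fun x => by
  rw [Kdiag, mkEnd_single, add_zero, ket_tz]
  rfl

theorem ev_S0bd (x y : Idx ε) {a b : Fin n → ℤ} (ha : Vd ε a) (hb : Vd ε b) :
    cK (p ^ (∑ t, tz y t - ∑ t, a t)) * ev ε a b (S0bd q ε (Finsupp.single (x, y) 1))
      = ent q p ε a b (tz x) (tz y) := by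
  obtain ⟨u, rfl⟩ := Vd_exists ha
  obtain ⟨v, rfl⟩ := Vd_exists hb
  rw [S0bd, mkEnd_single, map_sum]
  simp only [map_smul]
  by_cases h : tz u + tz v = tz x + tz y
  · have h' (t : Fin n) : u.1 t + v.1 t = x.1 t + y.1 t := by
      have := congrFun h t
      simp only [tz, Pi.add_apply] at this
      omega
    rw [Finset.sum_eq_single u.1]
    · rw [ev_kk _ _ _ _ (Vd_tz u) (Vd_tz v), if_pos]
      · rw [smul_eq_mul, mul_one]
        ext m
        rw [coeff_cK_mul, coeff_ent]
        rcases lt_or_ge m 0 with hm | hm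
        · rw [coeff_mkS_neg _ hm, Ec_neg hm, mul_zero]
        · lift m to ℕ using hm
          have hv : (fun t => x.1 t + y.1 t - u.1 t) = v.1 := funext fun t => by
            have := h' t; omega
          rw [coeff_mkS, hv, bdCoef_eq]
          rfl
      · refine ⟨rfl, funext fun t => ?_⟩
        have := h' t
        simp only [tz]
        omega
    · intro a' _ hne
      rw [ev_kk _ _ _ _ (Vd_tz u) (Vd_tz v), if_neg, smul_eq_mul, mul_zero]
      rintro ⟨h1, -⟩
      exact hne (funext fun t => by have := congrFun h1 t; simp only [tz] at this; omega)
    · intro hu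
      refine absurd (Fintype.mem_piFinset.2 fun t => Finset.mem_range.2 ?_) hu
      have := h' t
      omega
  · refine (congrArg _ (Finset.sum_eq_zero ?_)).trans ?_
    · intro a' _
      rw [ev_kk _ _ _ _ (Vd_tz u) (Vd_tz v), if_neg, smul_eq_mul, mul_zero]
      rintro ⟨h1, h2⟩
      refine h (funext fun t => ?_)
      have e1 := congrFun h1 t
      have e2 := congrFun h2 t
      simp only [Pi.add_apply]
      simp only [tz] at e1 e2 ⊢
      omega
    · rw [mul_zero]
      ext m
      rw [coeff_ent, Ec_not_cons h]
      rfl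

theorem ent_out {a b i j : Fin n → ℤ} (h : ¬(Vd ε a ∧ Vd ε b ∧ Vd ε i ∧ Vd ε j)) :
    ent q p ε a b i j = 0 := by
  ext m
  rw [coeff_ent, Ec_out h]
  rfl

/-- `ent` is the matrix of `S̃₀^{1,1}(z)`, also at labels outside the admissible range. -/
theorem ev_S (hp0 : p ≠ 0) (a b i j : Fin n → ℤ) :
    ev ε a b (S0bdT q p ε (kk K ε i j)) = ent q p ε a b i j := by
  by_cases h : Vd ε a ∧ Vd ε b
  · by_cases h' : Vd ε i ∧ Vd ε j
    · obtain ⟨x, rfl⟩ := Vd_exists h'.1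
      obtain ⟨y, rfl⟩ := Vd_exists h'.2
      rw [S0bdT, LinearMap.comp_apply, LinearMap.comp_apply, kk_tz,
        opT_single isSh_id (isSh_Kdiag 1), map_smul, map_smul, map_smul,
        ev_opT (isSh_Kdiag (-1)) isSh_id h.1 h.2, ← ev_S0bd x y h.1 h.2, add_zero, add_zero,
        sub_zero, sub_zero, kk_tz, sub_eq_add_neg, zpow_add₀ hp0, map_mul]
      simp only [one_mul, neg_mul, one_mul, mul_one, smul_eq_mul]
      ring
    · rw [kk_not h', map_zero, map_zero, ent_out fun hh => h' hh.2.2]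
  · rw [ev_not h, ent_out fun hh => h ⟨hh.1, hh.2.1⟩]

end Matrix

/-! ### The intertwining relations for `S̃₀^{1,1}(z)` -/

section Intertwine

variable {q p : ℂ} {n : ℕ} {ε : Fin n → Bool} {x : K} {r : Fin (n + 1)} {o s t : Fin n}

theorem av_fin (m : Fin n → ℕ) (u : Fin n) : av m (u : ℕ) = m u := by simp [av]

theorem qc_fin (u : Fin n) : qc q ε (u : ℕ) = qs q (ε u) := by simp [qc, qs]

theorem isSh_e0 (ho : (o : ℕ) = 0) (hr : (r : ℕ) = 0) :
    IsSh (eB q cK ε x r) (fun _ => x) (dlt (o : ℕ)) := fun m => by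
  rw [eB, mkEnd_single, if_pos hr, ho]
  rfl

theorem isSh_en (ho : (o : ℕ) + 1 = n) (hr : (r : ℕ) = n) :
    IsSh (eB q cK ε x r) (fun m => cK (qZ q (m o))) (-dlt (o : ℕ)) := fun m => by
  have ho' : n - 1 = (o : ℕ) := by omega
  rw [eB, mkEnd_single, if_neg (by omega), if_pos hr, ho', av_fin, qnum_eq_qZ, ← sub_eq_add_neg]
  rfl

theorem isSh_em (hst : (t : ℕ) = s + 1) (hr : (r : ℕ) = t) :
    IsSh (eB q cK ε x r) (fun m => cK (qZ q (m s))) (-dlt (s : ℕ) + dlt (t : ℕ)) := fun m => by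
  have hs : (r : ℕ) - 1 = s := by omega
  have := t.2
  rw [eB, mkEnd_single, if_neg (by omega), if_neg (by omega), hs, hr, av_fin, qnum_eq_qZ,
    ← add_assoc, ← sub_eq_add_neg]
  rfl

theorem isSh_f0 (ho : (o : ℕ) = 0) (hr : (r : ℕ) = 0) :
    IsSh (fB q cK ε x r) (fun m => x⁻¹ * cK (qZ q (m o))) (-dlt (o : ℕ)) := fun m => by
  rw [fB, mkEnd_single, if_pos hr, ← ho, av_fin, qnum_eq_qZ, ← sub_eq_add_neg]
  rfl

theorem isSh_fn (ho : (o : ℕ) + 1 = n) (hr : (r : ℕ) = n) :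
    IsSh (fB q cK ε x r) (fun _ => 1) (dlt (o : ℕ)) := fun m => by
  have ho' : n - 1 = (o : ℕ) := by omega
  rw [fB, mkEnd_single, if_neg (by omega), if_pos hr, ho', one_smul]
  rfl

theorem isSh_fm (hst : (t : ℕ) = s + 1) (hr : (r : ℕ) = t) :
    IsSh (fB q cK ε x r) (fun m => cK (qZ q (m t))) (dlt (s : ℕ) - dlt (t : ℕ)) := fun m => by
  have hs : (r : ℕ) - 1 = s := by omega
  have := t.2
  rw [fB, mkEnd_single, if_neg (by omega), if_neg (by omega), hs, hr, av_fin, qnum_eq_qZ,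
    ← add_sub_assoc]
  rfl

theorem isSh_k0 (ho : (o : ℕ) = 0) (hr : (r : ℕ) = 0) (e : ℤ) :
    IsSh (kB q p cK ε e r) (fun m => cK ((p⁻¹ * qs q (ε o) ^ m o) ^ e)) 0 := fun m => by
  rw [kB, mkEnd_single, if_pos hr, ← ho, av_fin, qc_fin, add_zero, ket_tz]
  rfl

theorem isSh_kn (ho : (o : ℕ) + 1 = n) (hr : (r : ℕ) = n) (e : ℤ) :
    IsSh (kB q p cK ε e r) (fun m => cK ((p * qs q (ε o) ^ (-m o)) ^ e)) 0 := fun m => by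
  have ho' : n - 1 = (o : ℕ) := by omega
  rw [kB, mkEnd_single, if_neg (by omega), if_pos hr, ho', av_fin, qc_fin, add_zero, ket_tz]
  rfl

theorem isSh_km (hst : (t : ℕ) = s + 1) (hr : (r : ℕ) = t) (e : ℤ) :
    IsSh (kB q p cK ε e r) (fun m => cK ((qs q (ε s) ^ (-m s) * qs q (ε t) ^ m t) ^ e)) 0 :=
  fun m => by
  have hs : (r : ℕ) - 1 = s := by omega
  have := t.2
  rw [kB, mkEnd_single, if_neg (by omega), if_neg (by omega), hs, hr, av_fin, av_fin, qc_fin,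
    qc_fin, add_zero, ket_tz]
  rfl

/-- Two endomorphisms with the same matrix elements are equal. -/
theorem lin_ext {A B : WW K ε →ₗ[K] WW K ε}
    (h : ∀ a b i j, Vd ε a → Vd ε b → Vd ε i → Vd ε j →
      ev ε a b (A (kk K ε i j)) = ev ε a b (B (kk K ε i j))) : A = B := by
  refine Finsupp.lhom_ext fun w c => ?_
  obtain ⟨x, y⟩ := w
  rw [single_eq, map_smul, map_smul, ← kk_tz, ev_ext fun a b ha hb =>
    h a b _ _ ha hb (Vd_tz x) (Vd_tz y)]

theorem opT_kk {A B : W K ε →ₗ[K] W K ε} {α β : (Fin n → ℤ) → K} {σ τ : Fin n → ℤ}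
    (hA : IsSh A α σ) (hB : IsSh B β τ) {i j : Fin n → ℤ} (hi : Vd ε i) (hj : Vd ε j) :
    opT K A B (kk K ε i j) = (α i * β j) • kk K ε (i + σ) (j + τ) := by
  obtain ⟨x, rfl⟩ := Vd_exists hi
  obtain ⟨y, rfl⟩ := Vd_exists hj
  rw [kk_tz, opT_single hA hB]

/-- An exchange relation in terms of matrix elements, for the coproduct of `e_r`. -/
theorem comm_e (hp0 : p ≠ 0) {X Y k : W K ε →ₗ[K] W K ε} {α β κ : (Fin n → ℤ) → K}
    {σ : Fin n → ℤ} (hX : IsSh X α σ) (hY : IsSh Y β σ) (hk : IsSh k κ 0)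
    (h : ∀ a b i j, Vd ε a → Vd ε b → Vd ε i → Vd ε j →
      α (a - σ) * ent q p ε (a - σ) b i j + κ a * β (b - σ) * ent q p ε a (b - σ) i j
        = β j * ent q p ε a b i (j + σ) + α i * κ j * ent q p ε a b (i + σ) j) :
    (opT K X LinearMap.id + opT K k Y) ∘ₗ S0bdT q p ε
      = S0bdT q p ε ∘ₗ (opT K LinearMap.id Y + opT K X k) := by
  refine lin_ext fun a b i j ha hb hi hj => ?_
  simp only [LinearMap.comp_apply, LinearMap.add_apply, map_add]
  rw [ev_opT hX isSh_id ha hb, ev_opT hk hY ha hb, opT_kk isSh_id hY hi hj, opT_kk hX hk hi hj]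
  simp only [map_smul, ev_S hp0, smul_eq_mul, sub_zero, add_zero, one_mul, mul_one]
  exact h a b i j ha hb hi hj

/-- An exchange relation in terms of matrix elements, for the coproduct of `f_r`. -/
theorem comm_f (hp0 : p ≠ 0) {X Y k : W K ε →ₗ[K] W K ε} {α β κ : (Fin n → ℤ) → K}
    {σ : Fin n → ℤ} (hX : IsSh X α σ) (hY : IsSh Y β σ) (hk : IsSh k κ 0)
    (h : ∀ a b i j, Vd ε a → Vd ε b → Vd ε i → Vd ε j →
      β (b - σ) * ent q p ε a (b - σ) i j + α (a - σ) * κ b * ent q p ε (a - σ) b i j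
        = α i * ent q p ε a b (i + σ) j + κ i * β j * ent q p ε a b i (j + σ)) :
    (opT K LinearMap.id Y + opT K X k) ∘ₗ S0bdT q p ε
      = S0bdT q p ε ∘ₗ (opT K X LinearMap.id + opT K k Y) := by
  refine lin_ext fun a b i j ha hb hi hj => ?_
  simp only [LinearMap.comp_apply, LinearMap.add_apply, map_add]
  rw [ev_opT hX hk ha hb, ev_opT isSh_id hY ha hb, opT_kk hX isSh_id hi hj, opT_kk hk hY hi hj]
  simp only [map_smul, ev_S hp0, smul_eq_mul, sub_zero, add_zero, one_mul, mul_one]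
  exact h a b i j ha hb hi hj

/-- Diagonal operators that only see the conserved total `a + b` commute with `S̃₀^{1,1}(z)`. -/
theorem comm_k (hp0 : p ≠ 0) {k : W K ε →ₗ[K] W K ε} {κ : (Fin n → ℤ) → K} (hk : IsSh k κ 0)
    (h : ∀ a b i j : Fin n → ℤ, a + b = i + j → κ a * κ b = κ i * κ j) :
    opT K k k ∘ₗ S0bdT q p ε = S0bdT q p ε ∘ₗ opT K k k := by
  refine lin_ext fun a b i j ha hb hi hj => ?_
  simp only [LinearMap.comp_apply]
  rw [ev_opT hk hk ha hb, opT_kk hk hk hi hj]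
  simp only [map_smul, ev_S hp0, smul_eq_mul, sub_zero, add_zero]
  by_cases hc : a + b = i + j
  · rw [h a b i j hc]
  · have : ent q p ε a b i j = 0 := by
      ext m
      rw [coeff_ent, Ec_not_cons hc]
      rfl
    rw [this, mul_zero, mul_zero]

/-- A node is the left end, the right end, or lies between two neighbouring sites `s` and `t`. -/
theorem node_cases [NeZero n] (r : Fin (n + 1)) :
    ((r : ℕ) = 0 ∧ ∃ o : Fin n, (o : ℕ) = 0) ∨ ((r : ℕ) = n ∧ ∃ o : Fin n, (o : ℕ) + 1 = n) ∨
      ∃ s t : Fin n, (t : ℕ) = s + 1 ∧ (r : ℕ) = t := by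
  have hn := NeZero.ne n
  have hr := r.2
  by_cases h0 : (r : ℕ) = 0
  · exact Or.inl ⟨h0, ⟨0, by omega⟩, rfl⟩
  · by_cases h1 : (r : ℕ) = n
    · exact Or.inr (Or.inl ⟨h1, ⟨n - 1, by omega⟩, by simp only; omega⟩)
    · exact Or.inr (Or.inr ⟨⟨r - 1, by omega⟩, ⟨r, by omega⟩, by simp only; omega, rfl⟩)

/-- `S̃₀^{1,1}(z)` intertwines `Δ(e_r)` and `Δ'(e_r)`. -/
theorem S_e [NeZero n] (hq0 : q ≠ 0) (hq : ∀ k : ℕ, k ≠ 0 → q ^ k ≠ 1)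
    (hp : p ^ 2 * q = -1) (hp0 : p ≠ 0) (r : Fin (n + 1)) :
    dEB' q p cK ε zK 1 r ∘ₗ S0bdT q p ε = S0bdT q p ε ∘ₗ dEB q p cK ε zK 1 r := by
  rcases node_cases r with ⟨hr, o, ho⟩ | ⟨hr, o, ho⟩ | ⟨s, t, hst, hr⟩
  · refine comm_e hp0 (isSh_e0 ho hr) (isSh_e0 ho hr) (isSh_k0 ho hr 1)
      fun a b i j ha hb hi hj => ?_
    ext m
    obtain ⟨m, rfl⟩ : ∃ k, m = k + 1 := ⟨m - 1, by omega⟩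
    have h := Ec_e0 hq0 hq hp hp0 ho ha hb hi hj m
    simp only [zpow_one, mul_one, one_mul, HahnSeries.coeff_add, mul_assoc zK, coeff_zK_mul,
      coeff_cK_mul, coeff_ent]
    linear_combination -h
  · refine comm_e hp0 (isSh_en ho hr) (isSh_en ho hr) (isSh_kn ho hr 1)
      fun a b i j ha hb hi hj => ?_
    ext m
    have h := Ec_en hq0 hq hp hp0 ho ha hb hi hj m
    simp only [zpow_one, sub_neg_eq_add, ← sub_eq_add_neg, Pi.add_apply, dlt_self, ← map_mul,
      HahnSeries.coeff_add, coeff_cK_mul, coeff_ent]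
    linear_combination -h
  · refine comm_e hp0 (isSh_em hst hr) (isSh_em hst hr) (isSh_km hst hr 1)
      fun a b i j ha hb hi hj => ?_
    ext m
    have h := Ec_e (p := p) hq0 hq hst ha hb hi hj m
    have hne : s ≠ t := by rintro rfl; omega
    have e1 (v : Fin n → ℤ) : v + (-dlt (s : ℕ) + dlt (t : ℕ)) = v - dlt (s : ℕ) + dlt (t : ℕ) := by
      abel
    have e2 (v : Fin n → ℤ) : v - (-dlt (s : ℕ) + dlt (t : ℕ)) = v + dlt (s : ℕ) - dlt (t : ℕ) := by
      abel
    have e3 (v : Fin n → ℤ) : (v + dlt (s : ℕ) - dlt (t : ℕ) : Fin n → ℤ) s = v s + 1 := by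
      simp [dlt_self, dlt_ne hne]
    simp only [zpow_one, e1, e2, e3,
      ← map_mul, HahnSeries.coeff_add, coeff_cK_mul, coeff_ent]
    linear_combination -h

/-- `S̃₀^{1,1}(z)` intertwines `Δ(f_r)` and `Δ'(f_r)`. -/
theorem S_f [NeZero n] (hq0 : q ≠ 0) (hq : ∀ k : ℕ, k ≠ 0 → q ^ k ≠ 1)
    (hp0 : p ≠ 0) (r : Fin (n + 1)) :
    dFB' q p cK ε zK 1 r ∘ₗ S0bdT q p ε = S0bdT q p ε ∘ₗ dFB q p cK ε zK 1 r := by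
  rcases node_cases r with ⟨hr, o, ho⟩ | ⟨hr, o, ho⟩ | ⟨s, t, hst, hr⟩
  · refine comm_f hp0 (isSh_f0 ho hr) (isSh_f0 ho hr) (isSh_k0 ho hr (-1))
      fun a b i j ha hb hi hj => ?_
    ext m
    have h := Ec_f0 hq0 hq hp0 ho ha hb hi hj m
    have hz := qs_ne hq0 (ε o)
    simp only [zpow_neg_one, mul_inv, inv_inv, inv_one, one_mul, sub_neg_eq_add,
      ← sub_eq_add_neg, ← zpow_neg,
      Pi.add_apply, dlt_self, ← map_mul, mul_assoc zK⁻¹, HahnSeries.coeff_add, coeff_cK_mul,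
      coeff_zKinv_mul, coeff_ent]
    linear_combination -h
  · refine comm_f hp0 (isSh_fn ho hr) (isSh_fn ho hr) (isSh_kn ho hr (-1))
      fun a b i j ha hb hi hj => ?_
    ext m
    have h := Ec_fn hq0 hq hp0 ho ha hb hi hj m
    simp only [zpow_neg_one, mul_inv, inv_inv, one_mul, mul_one, ← zpow_neg, neg_neg,
      HahnSeries.coeff_add, coeff_cK_mul, coeff_ent]
    linear_combination -h
  · refine comm_f hp0 (isSh_fm hst hr) (isSh_fm hst hr) (isSh_km hst hr (-1))
      fun a b i j ha hb hi hj => ?_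
    ext m
    have h := Ec_f (p := p) hq0 hq hst ha hb hi hj m
    have hne : t ≠ s := by rintro rfl; omega
    have e1 (v : Fin n → ℤ) : v + (dlt (s : ℕ) - dlt (t : ℕ)) = v + dlt (s : ℕ) - dlt (t : ℕ) := by
      abel
    have e2 (v : Fin n → ℤ) : v - (dlt (s : ℕ) - dlt (t : ℕ)) = v - dlt (s : ℕ) + dlt (t : ℕ) := by
      abel
    have e3 (v : Fin n → ℤ) : (v - dlt (s : ℕ) + dlt (t : ℕ) : Fin n → ℤ) t = v t + 1 := by
      simp [dlt_self, dlt_ne hne]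
    simp only [zpow_neg_one, mul_inv, ← zpow_neg, neg_neg, e1, e2, e3,
      ← map_mul, HahnSeries.coeff_add, coeff_cK_mul, coeff_ent]
    linear_combination -h

/-- `S̃₀^{1,1}(z)` commutes with `Δ(k_r^e)`. -/
theorem S_k [NeZero n] (hq0 : q ≠ 0) (hp0 : p ≠ 0) (e : ℤ) (r : Fin (n + 1)) :
    dKB q p cK ε e r ∘ₗ S0bdT q p ε = S0bdT q p ε ∘ₗ dKB q p cK ε e r := by
  have key (u : Fin n) {a b i j : Fin n → ℤ} (h : a + b = i + j) :
      qs q (ε u) ^ a u * qs q (ε u) ^ b u = qs q (ε u) ^ i u * qs q (ε u) ^ j u := by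
    rw [← zpow_add₀ (qs_ne hq0 _), ← zpow_add₀ (qs_ne hq0 _)]
    exact congrArg _ (congrFun h u)
  have key' (u : Fin n) {a b i j : Fin n → ℤ} (h : a + b = i + j) :
      qs q (ε u) ^ (-a u) * qs q (ε u) ^ (-b u) = qs q (ε u) ^ (-i u) * qs q (ε u) ^ (-j u) := by
    rw [zpow_neg, zpow_neg, zpow_neg, zpow_neg, ← mul_inv, key u h, mul_inv]
  rcases node_cases r with ⟨hr, o, ho⟩ | ⟨hr, o, ho⟩ | ⟨s, t, hst, hr⟩
  · refine comm_k hp0 (isSh_k0 ho hr e) fun a b i j h => ?_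
    rw [← map_mul, ← map_mul, ← mul_zpow, ← mul_zpow]
    congr 2
    linear_combination p⁻¹ * p⁻¹ * key o h
  · refine comm_k hp0 (isSh_kn ho hr e) fun a b i j h => ?_
    rw [← map_mul, ← map_mul, ← mul_zpow, ← mul_zpow]
    congr 2
    linear_combination p * p * key' o h
  · refine comm_k hp0 (isSh_km hst hr e) fun a b i j h => ?_
    rw [← map_mul, ← map_mul, ← mul_zpow, ← mul_zpow]
    congr 2
    linear_combination qs q (ε t) ^ a t * qs q (ε t) ^ b t * key' s h
      + qs q (ε s) ^ (-i s) * qs q (ε s) ^ (-j s) * key t h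

end Intertwine

/-! ### The image of the vacuum -/

section Vacuum

variable {q p : ℂ} {n : ℕ} {ε : Fin n → Bool}

theorem sZ_vac (hq : ∀ k : ℕ, k ≠ 0 → q ^ k ≠ 1) (e : Bool) (m : ℕ) :
    sZ q e 0 0 m 0 0 m = 1 := by
  rw [sZ, if_pos (by simp)]
  cases e
  · have h := poch_ne (q := q ^ 2) (fun k hk => by rw [← pow_mul]; exact hq _ (by omega)) m
    simp [Sg, R3, qbinom, poch] at h ⊢
    exact h
  · simp [Sg, L3]

theorem Vd_zero : Vd ε 0 := fun _ => ⟨le_refl _, fun _ => zero_le_one⟩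

/-- `S̃₀^{1,1}(z)` multiplies the vacuum by the series `φ(z)`. -/
theorem S_vac (hq : ∀ k : ℕ, k ≠ 0 → q ^ k ≠ 1) (hp0 : p ≠ 0) :
    S0bdT q p ε (kk K ε 0 0)
      = mkS (fun c => poch (q ^ 2) (q ^ 2) c / (poch q q c * poch q q c)) • kk K ε 0 0 := by
  refine ev_ext fun a b ha hb => ?_
  rw [ev_S hp0, map_smul, ev_kk _ _ _ _ ha hb, ent]
  split_ifs with h
  · obtain ⟨rfl, rfl⟩ := h
    rw [smul_eq_mul, mul_one]
    congr 1
    funext c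
    have hg (t : ℕ) : gam (c : ℤ) (0 : Fin n → ℤ) 0 t = c := by simp [gam]
    rw [Ec, hg, Finset.prod_eq_one fun t _ => ?_]
    · simp [w0, w1]
      rw [div_mul_eq_div_div, ← div_eq_mul_inv]
    · rw [site, hg, hg]
      exact sZ_vac hq _ c
  · have hne : a + b ≠ 0 + 0 := by
      intro hab
      refine h ⟨funext fun t => ?_, funext fun t => ?_⟩ <;>
      · have h0 := congrFun hab t
        have h1 := (ha t).1
        have h2 := (hb t).1
        simp only [Pi.add_apply, Pi.zero_apply] at h0 ⊢
        omega
    rw [smul_eq_mul, mul_zero]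
    simp only [Ec_not_cons hne]
    ext m
    rcases lt_or_ge m 0 with hm | hm
    · rw [coeff_mkS_neg _ hm]
      rfl
    · lift m to ℕ using hm
      rw [coeff_mkS]
      rfl

end Vacuum

/-! ### Cyclicity of the vacuum -/

section Cyclic

variable {q p : ℂ} {n : ℕ} {ε : Fin n → Bool}

local notation "A" => PowerSeries ℂ

/-- The additive group structure of `𝒲 ⊗ 𝒲` that comes from the field structure of `K`; instance
search reaches one whose agreement with the module structure is not visible to unification. -/
@[reducible]
def wwGroup (ε : Fin n → Bool) : AddCommGroup (WW K ε) :=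
  @Finsupp.instAddCommGroup _ K Ring.toAddCommGroup

attribute [local instance] wwGroup

theorem C_smul (c : ℂ) (v : WW K ε) : (PowerSeries.C c : A) • v = cK c • v := by
  rw [← algebraMap_smul K, LaurentSeries.coe_algebraMap, HahnSeries.ofPowerSeries_C]
  rfl

theorem X_smul (v : WW K ε) : (PowerSeries.X : A) • v = zK • v := by
  rw [← algebraMap_smul K, LaurentSeries.coe_algebraMap, HahnSeries.ofPowerSeries_X, zK_eq]

theorem K_mul_smul (c d : K) (v : WW K ε) : (c * d) • v = c • d • v := by
  ext1 x
  simp only [Finsupp.smul_apply, smul_eq_mul, mul_assoc]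

theorem cK_smul_mem (P : Submodule A (WW K ε)) (c : ℂ) {v : WW K ε} (h : v ∈ P) :
    cK c • v ∈ P := by
  rw [← C_smul]
  exact P.smul_mem _ h

/-- The `ℂ⟦z⟧`-lattice spanned by the kets `|a⟩ ⊗ |b⟩` of total occupation number `N`. -/
def Lam (ε : Fin n → Bool) (N : ℤ) : Submodule A (WW K ε) :=
  Submodule.span A {v | ∃ a b, (Vd ε a ∧ Vd ε b ∧ ∑ t, a t + ∑ t, b t = N) ∧ kk K ε a b = v}

theorem kk_mem_Lam {a b : Fin n → ℤ} {N : ℤ} (h : ∑ t, a t + ∑ t, b t = N) :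
    kk K ε a b ∈ Lam ε N := by
  by_cases h' : Vd ε a ∧ Vd ε b
  · exact Submodule.subset_span ⟨a, b, ⟨h'.1, h'.2, h⟩, rfl⟩
  · rw [kk_not h']
    exact zero_mem _

/-- There are only finitely many kets of a given total occupation number. -/
theorem Lam_fg (N : ℤ) : (Lam ε N).FG := by
  refine Submodule.fg_span ?_
  have hfin : (Set.Icc (0 : Fin n → ℤ) (fun _ => N) ×ˢ
      Set.Icc (0 : Fin n → ℤ) (fun _ => N)).Finite := (Set.finite_Icc _ _).prod (Set.finite_Icc _ _)
  refine (hfin.image fun ab => kk K ε ab.1 ab.2).subset ?_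
  rintro _ ⟨a, b, ⟨ha, hb, h⟩, rfl⟩
  refine ⟨(a, b), ⟨⟨fun t => (ha t).1, fun t => ?_⟩, fun t => (hb t).1, fun t => ?_⟩, rfl⟩
  · have h1 := Finset.single_le_sum (fun u _ => (ha u).1) (Finset.mem_univ t)
    have h2 := Finset.sum_nonneg fun u (_ : u ∈ Finset.univ) => (hb u).1
    simp only at *
    linarith
  · have h1 := Finset.single_le_sum (fun u _ => (hb u).1) (Finset.mem_univ t)
    have h2 := Finset.sum_nonneg fun u (_ : u ∈ Finset.univ) => (ha u).1
    simp only at *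
    linarith

/-- The variable lies in the Jacobson radical of `ℂ⟦z⟧`, as Nakayama's lemma needs. -/
theorem span_X_le : Ideal.span {(PowerSeries.X : A)} ≤ Ideal.jacobson ⊥ := by
  rw [← PowerSeries.maximalIdeal_eq_span_X]
  exact (IsLocalRing.jacobson_eq_maximalIdeal ⊥ bot_ne_top).ge

theorem mem_of_add {P : Submodule A (WW K ε)} {u v w : WW K ε} (h : u = v + w) (hu : u ∈ P)
    (hw : w ∈ P) : v ∈ P := by
  rw [h] at hu
  exact (P.add_mem_iff_left hw).1 hu

/-- A vector of the lattice multiplied by `z`. -/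
theorem zK_smul_mem (N : ℤ) {v : WW K ε} (h : v ∈ Lam ε N) :
    zK • v ∈ Ideal.span {(PowerSeries.X : A)} • Lam ε N := by
  rw [← X_smul]
  exact Submodule.smul_mem_smul (Ideal.mem_span_singleton_self _) h

variable {r : Fin (n + 1)} {o s t : Fin n} {i j : Fin n → ℤ}

/-- `Δ(e_0)` on a ket: the particle created in the first factor comes with a factor `z`. -/
theorem act_e0 (ho : (o : ℕ) = 0) (hr : (r : ℕ) = 0) (hi : Vd ε i) (hj : Vd ε j) :
    ∃ c, dEB q p cK ε zK 1 r (kk K ε i j)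
      = kk K ε i (j + dlt (o : ℕ)) + zK • cK c • kk K ε (i + dlt (o : ℕ)) j := by
  refine ⟨?_, ?_⟩
  rotate_left
  rw [dEB, LinearMap.add_apply, opT_kk isSh_id (isSh_e0 ho hr) hi hj,
    opT_kk (isSh_e0 ho hr) (isSh_k0 ho hr 1) hi hj, mul_one, one_smul, add_zero, add_zero, K_mul_smul]

theorem act_em (hst : (t : ℕ) = s + 1) (hr : (r : ℕ) = t) (hi : Vd ε i) (hj : Vd ε j) :
    ∃ c, dEB q p cK ε zK 1 r (kk K ε i j)
      = cK (qZ q (j s)) • kk K ε i (j + (-dlt (s : ℕ) + dlt (t : ℕ)))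
        + cK c • kk K ε (i + (-dlt (s : ℕ) + dlt (t : ℕ))) j := by
  refine ⟨?_, ?_⟩
  rotate_left
  rw [dEB, LinearMap.add_apply, opT_kk isSh_id (isSh_em hst hr) hi hj,
    opT_kk (isSh_em hst hr) (isSh_km hst hr 1) hi hj, one_mul, add_zero, add_zero, ← map_mul]

theorem act_fn (ho : (o : ℕ) + 1 = n) (hr : (r : ℕ) = n) (hi : Vd ε i) (hj : Vd ε j) :
    ∃ c, dFB q p cK ε zK 1 r (kk K ε i j)
      = kk K ε (i + dlt (o : ℕ)) j + cK c • kk K ε i (j + dlt (o : ℕ)) := by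
  refine ⟨?_, ?_⟩
  rotate_left
  rw [dFB, LinearMap.add_apply, opT_kk (isSh_fn ho hr) isSh_id hi hj,
    opT_kk (isSh_kn ho hr (-1)) (isSh_fn ho hr) hi hj, mul_one, one_smul, add_zero, add_zero,
    mul_one]

theorem act_fm (hst : (t : ℕ) = s + 1) (hr : (r : ℕ) = t) (hi : Vd ε i) (hj : Vd ε j) :
    ∃ c, dFB q p cK ε zK 1 r (kk K ε i j)
      = cK (qZ q (i t)) • kk K ε (i + (dlt (s : ℕ) - dlt (t : ℕ))) j
        + cK (c * qZ q (j t)) • kk K ε i (j + (dlt (s : ℕ) - dlt (t : ℕ))) := by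
  refine ⟨?_, ?_⟩
  rotate_left
  rw [dFB, LinearMap.add_apply, opT_kk (isSh_fm hst hr) isSh_id hi hj,
    opT_kk (isSh_km hst hr (-1)) (isSh_fm hst hr) hi hj, mul_one, add_zero, add_zero, ← map_mul]

/-- The lattice is stable under an operator that maps its generators into it. -/
theorem Lam_stable {f : WW K ε →ₗ[K] WW K ε} {N : ℤ}
    (h : ∀ a b, Vd ε a → Vd ε b → ∑ t, a t + ∑ t, b t = N → f (kk K ε a b) ∈ Lam ε N) :
    (Lam ε N).map (f.restrictScalars A) ≤ Lam ε N := by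
  rw [Lam, Submodule.map_span_le]
  rintro _ ⟨a, b, ⟨ha, hb, hN⟩, rfl⟩
  exact h a b ha hb hN

theorem Lam_e (hst : (t : ℕ) = s + 1) (hr : (r : ℕ) = t) (N : ℤ) :
    (Lam ε N).map ((dEB q p cK ε zK 1 r).restrictScalars A) ≤ Lam ε N := by
  refine Lam_stable fun a b ha hb hN => ?_
  obtain ⟨c, hc⟩ := act_em (q := q) (p := p) hst hr ha hb
  rw [hc]
  refine add_mem (cK_smul_mem _ _ (kk_mem_Lam ?_)) (cK_smul_mem _ _ (kk_mem_Lam ?_)) <;>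
  · simp [Finset.sum_add_distrib, sum_dlt, hN]

theorem Lam_f (hst : (t : ℕ) = s + 1) (hr : (r : ℕ) = t) (N : ℤ) :
    (Lam ε N).map ((dFB q p cK ε zK 1 r).restrictScalars A) ≤ Lam ε N := by
  refine Lam_stable fun a b ha hb hN => ?_
  obtain ⟨c, hc⟩ := act_fm (q := q) (p := p) hst hr ha hb
  rw [hc]
  refine add_mem (cK_smul_mem _ _ (kk_mem_Lam ?_)) (cK_smul_mem _ _ (kk_mem_Lam ?_)) <;>
  · simp [Finset.sum_add_distrib, Finset.sum_sub_distrib, sum_dlt, hN]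

/-- The vectors of `M` together with the multiples of `z` in the lattice. -/
def Pm (M : Submodule K (WW K ε)) (N : ℤ) : Submodule A (WW K ε) :=
  M.restrictScalars A ⊔ Ideal.span {(PowerSeries.X : A)} • Lam ε N

variable {M : Submodule K (WW K ε)} {N : ℤ}

theorem mem_Pm_of_mem {v : WW K ε} (h : v ∈ M) : v ∈ Pm M N := Submodule.mem_sup_left h

theorem zK_mem_Pm {v : WW K ε} (h : v ∈ Lam ε N) : zK • v ∈ Pm M N :=
  Submodule.mem_sup_right (zK_smul_mem N h)

theorem Pm_stable {f : WW K ε →ₗ[K] WW K ε} (h1 : ∀ v ∈ M, f v ∈ M)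
    (h2 : (Lam ε N).map (f.restrictScalars A) ≤ Lam ε N) {v : WW K ε} (hv : v ∈ Pm M N) :
    f v ∈ Pm M N := by
  have h : (Pm M N).map (f.restrictScalars A) ≤ Pm M N := by
    rw [Pm, Submodule.map_sup, Submodule.map_smul'']
    refine sup_le_sup ?_ (smul_mono_right _ h2)
    rintro _ ⟨w, hw, rfl⟩
    exact h1 w hw
  exact h ⟨v, hv, rfl⟩

/-- Kets whose second factor is occupied at some site: `Δ(e_0)` fills the first site of the second
factor modulo `z`, and `Δ(e_1), …, Δ(e_{n-1})` move the particle to the right. -/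
theorem step_b (hq0 : q ≠ 0) (hq : ∀ k : ℕ, k ≠ 0 → q ^ k ≠ 1)
    (hM : ∀ a b, Vd ε a → Vd ε b → ∑ t, a t + ∑ t, b t = N → kk K ε a b ∈ M)
    (hE : ∀ r, ∀ v ∈ M, dEB q p cK ε zK 1 r v ∈ M) (k : ℕ) :
    ∀ t : Fin n, (t : ℕ) = k → ∀ a b, Vd ε a → Vd ε b → ∑ t, a t + ∑ t, b t = N + 1 →
      1 ≤ b t → kk K ε a b ∈ Pm M (N + 1) := by
  induction k with
  | zero =>
    intro o ho a b ha hb hN h1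
    have hb' : Vd ε (b - dlt (o : ℕ)) := by
      intro u
      have := hb u
      by_cases hu : u = o
      · subst hu
        simp only [Pi.sub_apply, dlt_self]
        exact ⟨by omega, fun h => by have := this.2 h; omega⟩
      · simpa [dlt_ne hu] using this
    obtain ⟨c, hc⟩ := act_e0 (q := q) (p := p) (r := 0) ho rfl ha hb'
    rw [sub_add_cancel] at hc
    refine mem_of_add hc (mem_Pm_of_mem (hE _ _ (hM _ _ ha hb' ?_)))
      (zK_mem_Pm (cK_smul_mem _ _ (kk_mem_Lam ?_)))
    · simp only [Pi.sub_apply, Finset.sum_sub_distrib, sum_dlt]; omega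
    · simp only [Pi.add_apply, Pi.sub_apply, Finset.sum_sub_distrib, Finset.sum_add_distrib,
        sum_dlt]; omega
  | succ k ih =>
    intro t ht a b ha hb hN h1
    have hs := t.2
    obtain ⟨s, hs⟩ : ∃ s : Fin n, (s : ℕ) = k := ⟨⟨k, by omega⟩, rfl⟩
    have hne : s ≠ t := by rintro rfl; omega
    -- an occupied left neighbour is covered by induction, so it may be taken empty; then moving a
    -- single particle from there to `t` has coefficient `[1] = 1`
    rcases (hb s).1.lt_or_eq with h0 | h0
    · exact ih s hs a b ha hb hN h0
    have hb' : Vd ε (b - dlt (t : ℕ) + dlt (s : ℕ)) := by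
      intro u
      have := hb u
      by_cases hu : u = t
      · subst hu
        simp only [Pi.add_apply, Pi.sub_apply, dlt_self, dlt_ne hne.symm]
        exact ⟨by omega, fun h => by have := this.2 h; omega⟩
      · by_cases hu' : u = s
        · subst hu'
          simp only [Pi.add_apply, Pi.sub_apply, dlt_self, dlt_ne hne, ← h0]
          exact ⟨by omega, fun h => by omega⟩
        · simpa [dlt_ne hu, dlt_ne hu'] using this
    have hs1 : (b - dlt (t : ℕ) + dlt (s : ℕ) : Fin n → ℤ) s = 1 := by
      simp [dlt_self, dlt_ne hne, ← h0]
    have hsum : ∑ u, (b - dlt (t : ℕ) + dlt (s : ℕ) : Fin n → ℤ) u = ∑ u, b u := by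
      simp [Finset.sum_sub_distrib, Finset.sum_add_distrib, sum_dlt]
    have hr : ((⟨t, by omega⟩ : Fin (n + 1)) : ℕ) = t := rfl
    obtain ⟨c, hc⟩ := act_em (q := q) (p := p) (s := s) (hs ▸ ht) hr ha hb'
    rw [hs1, qZ_one hq0 hq, map_one, one_smul,
      show b - dlt (t : ℕ) + dlt (s : ℕ) + (-dlt (s : ℕ) + dlt (t : ℕ)) = b by abel] at hc
    refine mem_of_add hc (Pm_stable (hE _) (Lam_e (hs ▸ ht) hr _)
      (ih s hs a _ ha hb' (by rw [hsum]; exact hN) hs1.ge)) (cK_smul_mem _ _ ?_)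
    by_cases ha' : Vd ε (a + (-dlt (s : ℕ) + dlt (t : ℕ)))
    · refine ih s hs _ _ ha' hb' ?_ hs1.ge
      rw [hsum]
      simpa [Finset.sum_add_distrib, sum_dlt] using hN
    · rw [kk_not fun h => ha' h.1]
      exact zero_mem _

/-- Kets with empty second factor and occupied first factor: `Δ(f_n)` fills the last site, and
`Δ(f_{n-1}), …, Δ(f_1)` move the particle to the left. -/
theorem step_a (hq0 : q ≠ 0) (hq : ∀ k : ℕ, k ≠ 0 → q ^ k ≠ 1)
    (hM : ∀ a b, Vd ε a → Vd ε b → ∑ t, a t + ∑ t, b t = N → kk K ε a b ∈ M)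
    (hE : ∀ r, ∀ v ∈ M, dEB q p cK ε zK 1 r v ∈ M)
    (hF : ∀ r, ∀ v ∈ M, dFB q p cK ε zK 1 r v ∈ M) (k : ℕ) :
    ∀ s : Fin n, (s : ℕ) + 1 + k = n → ∀ a, Vd ε a → ∑ t, a t = N + 1 →
      1 ≤ a s → kk K ε a 0 ∈ Pm M (N + 1) := by
  induction k with
  | zero =>
    intro o ho a ha hN h1
    have ha' : Vd ε (a - dlt (o : ℕ)) := by
      intro u
      have := ha u
      by_cases hu : u = o
      · subst hu
        simp only [Pi.sub_apply, dlt_self]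
        exact ⟨by omega, fun h => by have := this.2 h; omega⟩
      · simpa [dlt_ne hu] using this
    have hd : Vd ε (dlt (o : ℕ)) := by
      intro u
      by_cases hu : u = o
      · subst hu
        rw [dlt_self]
        exact ⟨by omega, fun _ => by omega⟩
      · rw [dlt_ne hu]
        exact ⟨by omega, fun _ => by omega⟩
    obtain ⟨c, hc⟩ := act_fn (q := q) (p := p) (r := Fin.last n) ho rfl ha' Vd_zero
    rw [sub_add_cancel, zero_add] at hc
    refine mem_of_add hc (mem_Pm_of_mem (hF _ _ (hM _ _ ha' Vd_zero ?_)))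
      (cK_smul_mem _ _ (step_b hq0 hq hM hE o o rfl _ _ ha' hd ?_ (dlt_self o).ge))
    · simp only [Pi.sub_apply, Pi.zero_apply, Finset.sum_sub_distrib, sum_dlt,
        Finset.sum_const_zero]; omega
    · simp only [Pi.sub_apply, Finset.sum_sub_distrib, sum_dlt]; omega
  | succ k ih =>
    intro s hs a ha hN h1
    obtain ⟨t, ht⟩ : ∃ t : Fin n, (t : ℕ) = s + 1 := ⟨⟨s + 1, by omega⟩, rfl⟩
    have hne : s ≠ t := by rintro rfl; omega
    rcases (ha t).1.lt_or_eq with h0 | h0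
    · exact ih t (by omega) a ha hN h0
    have ha' : Vd ε (a - dlt (s : ℕ) + dlt (t : ℕ)) := by
      intro u
      have := ha u
      by_cases hu : u = s
      · subst hu
        simp only [Pi.add_apply, Pi.sub_apply, dlt_self, dlt_ne hne]
        exact ⟨by omega, fun h => by have := this.2 h; omega⟩
      · by_cases hu' : u = t
        · subst hu'
          simp only [Pi.add_apply, Pi.sub_apply, dlt_self, dlt_ne hne.symm, ← h0]
          exact ⟨by omega, fun h => by omega⟩
        · simpa [dlt_ne hu, dlt_ne hu'] using this
    have ht1 : (a - dlt (s : ℕ) + dlt (t : ℕ) : Fin n → ℤ) t = 1 := by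
      simp [dlt_self, dlt_ne hne.symm, ← h0]
    have hr : ((⟨t, by omega⟩ : Fin (n + 1)) : ℕ) = t := rfl
    obtain ⟨c, hc⟩ := act_fm (q := q) (p := p) (s := s) ht hr ha' Vd_zero
    rw [ht1, qZ_one hq0 hq, map_one, one_smul, Pi.zero_apply, qZ_zero, mul_zero, map_zero,
      Module.zero_smul, add_zero,
      show a - dlt (s : ℕ) + dlt (t : ℕ) + (dlt (s : ℕ) - dlt (t : ℕ)) = a by abel] at hc
    rw [← hc]
    refine Pm_stable (hF _) (Lam_f ht hr _) (ih t (by omega) _ ha' ?_ ht1.ge)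
    simpa [Finset.sum_sub_distrib, Finset.sum_add_distrib, sum_dlt] using hN

/-- A subspace containing the vacuum and stable under all `Δ(e_r)` and `Δ(f_r)` is everything. -/
theorem cyclic [NeZero n] (hq0 : q ≠ 0) (hq : ∀ k : ℕ, k ≠ 0 → q ^ k ≠ 1)
    (h0 : kk K ε 0 0 ∈ M) (hE : ∀ r, ∀ v ∈ M, dEB q p cK ε zK 1 r v ∈ M)
    (hF : ∀ r, ∀ v ∈ M, dFB q p cK ε zK 1 r v ∈ M) : M = ⊤ := by
  have key (N : ℕ) : ∀ a b, Vd ε a → Vd ε b → ∑ t, a t + ∑ t, b t = (N : ℤ) → kk K ε a b ∈ M := by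
    induction N with
    | zero =>
      intro a b ha hb hN
      have hsa := Finset.sum_nonneg fun u (_ : u ∈ Finset.univ) => (ha u).1
      have hsb := Finset.sum_nonneg fun u (_ : u ∈ Finset.univ) => (hb u).1
      have h1 := (Finset.sum_eq_zero_iff_of_nonneg fun u (_ : u ∈ Finset.univ) => (ha u).1).1
        (by push_cast at hN; linarith)
      have h2 := (Finset.sum_eq_zero_iff_of_nonneg fun u (_ : u ∈ Finset.univ) => (hb u).1).1
        (by push_cast at hN; linarith)
      have ea : a = 0 := funext fun t => h1 t (Finset.mem_univ t)
      have eb : b = 0 := funext fun t => h2 t (Finset.mem_univ t)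
      rw [ea, eb]
      exact h0
    | succ N ih =>
      have hle : Lam ε (N + 1) ≤ M.restrictScalars A := by
        -- Nakayama: it suffices to generate the lattice from `M` modulo `z`
        refine Submodule.le_of_le_smul_of_le_jacobson_bot (Lam_fg _) span_X_le ?_
        refine Submodule.span_le.2 ?_
        rintro _ ⟨a, b, ⟨ha, hb, hN⟩, rfl⟩
        by_cases hbz : ∃ t, b t ≠ 0
        · obtain ⟨t, ht⟩ := hbz
          have := (hb t).1
          exact step_b hq0 hq ih hE t t rfl a b ha hb hN (by omega)
        · push Not at hbz
          obtain rfl : b = 0 := funext hbz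
          simp only [Pi.zero_apply, Finset.sum_const_zero, add_zero] at hN
          obtain ⟨t, -, ht⟩ := Finset.exists_ne_zero_of_sum_ne_zero (s := Finset.univ) (f := a)
            (by rw [hN]; omega)
          have := (ha t).1
          have := t.2
          exact step_a hq0 hq ih hE hF (n - (t + 1)) t (by omega) a ha hN (by omega)
      intro a b ha hb hN
      exact hle (kk_mem_Lam (by push_cast at hN; exact hN))
  refine Submodule.eq_top_iff'.2 fun v => ?_
  induction v using Finsupp.induction_linear with
  | zero => exact zero_mem _
  | add f g hf hg => exact add_mem hf hg
  | single w c =>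
    obtain ⟨x, y⟩ := w
    rw [single_eq, ← kk_tz]
    refine M.smul_mem _ (key (∑ t, x.1 t + ∑ t, y.1 t) _ _ (Vd_tz x) (Vd_tz y) ?_)
    push_cast
    rfl

end Cyclic

/-! ### Uniqueness and existence -/

section Conclusion

variable {q p : ℂ} {n : ℕ} {ε : Fin n → Bool}

/-- Intertwiners of the two coproduct actions that agree on the vacuum are equal. -/
theorem intertwiner_ext [NeZero n] (hq0 : q ≠ 0) (hq : ∀ k : ℕ, k ≠ 0 → q ^ k ≠ 1)
    {T U : WW K ε →ₗ[K] WW K ε}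
    (hTe : ∀ r, dEB' q p cK ε zK 1 r ∘ₗ T = T ∘ₗ dEB q p cK ε zK 1 r)
    (hTf : ∀ r, dFB' q p cK ε zK 1 r ∘ₗ T = T ∘ₗ dFB q p cK ε zK 1 r)
    (hUe : ∀ r, dEB' q p cK ε zK 1 r ∘ₗ U = U ∘ₗ dEB q p cK ε zK 1 r)
    (hUf : ∀ r, dFB' q p cK ε zK 1 r ∘ₗ U = U ∘ₗ dFB q p cK ε zK 1 r)
    (h0 : T (kk K ε 0 0) = U (kk K ε 0 0)) : T = U := by
  have h : LinearMap.eqLocus T U = ⊤ := by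
    refine cyclic (q := q) (p := p) hq0 hq h0 (fun r v hv => ?_) fun r v hv => ?_
    · have h1 := LinearMap.congr_fun (hTe r) v
      have h2 := LinearMap.congr_fun (hUe r) v
      simp only [LinearMap.comp_apply] at h1 h2
      rw [LinearMap.mem_eqLocus] at hv ⊢
      rw [← h1, ← h2, hv]
    · have h1 := LinearMap.congr_fun (hTf r) v
      have h2 := LinearMap.congr_fun (hUf r) v
      simp only [LinearMap.comp_apply] at h1 h2
      rw [LinearMap.mem_eqLocus] at hv ⊢
      rw [← h1, ← h2, hv]
  exact LinearMap.eqLocus_eq_top.1 h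

theorem K_one_smul (v : WW K ε) : (1 : K) • v = v := by
  ext1 x
  simp only [Finsupp.smul_apply, smul_eq_mul, one_mul]

theorem smul_intertwine {B C T : WW K ε →ₗ[K] WW K ε} (c : K) (h : B ∘ₗ T = T ∘ₗ C) :
    B ∘ₗ (c • T) = (c • T) ∘ₗ C := by
  refine LinearMap.ext fun v => ?_
  have hv := LinearMap.congr_fun h v
  simp only [LinearMap.comp_apply, LinearMap.smul_apply, map_smul] at hv ⊢
  rw [hv]

/-- `φ(z)` has constant term `1`. -/
theorem phi_ne : mkS (fun c => poch (q ^ 2) (q ^ 2) c / (poch q q c * poch q q c)) ≠ 0 := by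
  intro h
  have := congrArg (fun f : K => f.coeff ((0 : ℕ) : ℤ)) h
  simp only [coeff_mkS] at this
  simp [poch] at this

end Conclusion

/-- the boundary solution as quantum R matrix of type B. -/
theorem statement_3 (q qh : ℂ) (hq0 : q ≠ 0) (hqh : qh ^ 2 = q)
    (hq : ∀ k : ℕ, k ≠ 0 → q ^ k ≠ 1)
    (n κ : ℕ) [NeZero n] (hκ : κ ≤ n)
    (ε : Fin n → Bool) (hε : ε = fun t : Fin n => decide ((t : ℕ) < κ)) :
    (∀ T : WW K ε →ₗ[K] WW K ε, CondB q (Complex.I * qh⁻¹) ε T →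
      mkS (fun c => poch (q ^ 2) (q ^ 2) c / (poch q q c * poch q q c)) • T
        = S0bdT q (Complex.I * qh⁻¹) ε) ∧
    ∃ T : WW K ε →ₗ[K] WW K ε, CondB q (Complex.I * qh⁻¹) ε T := by
  have hqh0 : qh ≠ 0 := by
    rintro rfl
    exact hq0 (by rw [← hqh]; ring)
  have hp0 : Complex.I * qh⁻¹ ≠ 0 := mul_ne_zero Complex.I_ne_zero (inv_ne_zero hqh0)
  have hp : (Complex.I * qh⁻¹) ^ 2 * q = -1 := by
    rw [← hqh, mul_pow, Complex.I_sq]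
    field_simp
  generalize Complex.I * qh⁻¹ = p at hp0 hp
  have hSe := S_e (ε := ε) hq0 hq hp hp0
  have hSf := S_f (ε := ε) hq0 hq hp0
  have hvac : (fun _ => 0 : Fin n → ℤ) = 0 := rfl
  constructor
  · intro T hT
    refine intertwiner_ext (p := p) hq0 hq (fun r => ?_) (fun r => ?_) hSe hSf ?_
    · exact smul_intertwine _ (hT.1 r).1
    · exact smul_intertwine _ (hT.1 r).2.1
    · rw [S_vac hq hp0, LinearMap.smul_apply, ← hvac, hT.2]
  · refine ⟨(mkS fun c => poch (q ^ 2) (q ^ 2) c / (poch q q c * poch q q c))⁻¹ • S0bdT q p ε,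
      fun r => ⟨?_, ?_, fun s _ => ?_⟩, ?_⟩
    · exact smul_intertwine _ (hSe _)
    · exact smul_intertwine _ (hSf _)
    · exact smul_intertwine _ (S_k hq0 hp0 s r)
    · rw [hvac, LinearMap.smul_apply, S_vac hq hp0, ← K_mul_smul, inv_mul_cancel₀ phi_ne]
      exact K_one_smul _

end TetraGQ
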